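/- arXiv:2410.21976 — 2 statements merged into one kernel-verified Lean document; each statement's English description precedes it below -/
import Mathlib

section
/- Let (α,z,λ) ∈ 𝒟 and let ρ_AB be a density matrix on H_A ⊗ H_B. Let {M_k}_k be a finite family of matrices from H_A to H_{A′} with Σ_k M_k† M_k = I_A and Σ_k M_k M_k† ≤ I_{A′} (a sub-unital quantum channel in Kraus form acting on the first system), and set σ_{A′B} := Σ_k (M_k ⊗ I_B) ρ_AB (M_k ⊗ I_B)†. Then H^λ_{α,z}(A|B)_ρ ≤ H^λ_{α,z}(A′|B)_σ. -/
open scoped Kronecker ComplexOrder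
open Matrix


/-- Real power of a (Hermitian, in practice positive semidefinite) matrix, defined spectrally:
positive eigenvalues are raised to the power `t`, zero (and negative) eigenvalues are sent to `0`. -/
noncomputable def matPow {n : Type*} [Fintype n] [DecidableEq n]
    (M : Matrix n n ℂ) (t : ℝ) : Matrix n n ℂ :=
  if hM : M.IsHermitian then
    (hM.eigenvectorUnitary : Matrix n n ℂ) *
      Matrix.diagonal (fun i =>
        ((if 0 < hM.eigenvalues i then (hM.eigenvalues i) ^ t else 0 : ℝ) : ℂ)) *
      (star (hM.eigenvectorUnitary : Matrix n n ℂ))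
  else 0

/-- Partial trace over the first tensor factor. -/
noncomputable def ptraceFst {m n : Type*} [Fintype m] [Fintype n]
    (M : Matrix (m × n) (m × n) ℂ) : Matrix n n ℂ :=
  Matrix.of fun j j' => ∑ i, M (i, j) (i, j')

/-- Partial trace over the second tensor factor. -/
noncomputable def ptraceSnd {m n : Type*} [Fintype m] [Fintype n]
    (M : Matrix (m × n) (m × n) ℂ) : Matrix m m ℂ :=
  Matrix.of fun i i' => ∑ j, M (i, j) (i', j)

/-- A density matrix: positive semidefinite with unit trace. -/
def IsDensity {n : Type*} [Fintype n] [DecidableEq n] (ρ : Matrix n n ℂ) : Prop :=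
  ρ.PosSemidef ∧ ρ.trace = 1

/-- The trace functional `Q^λ_{α,z}(ρ_AB | σ_B)`. -/
noncomputable def Qfun {mA mB : Type*} [Fintype mA] [DecidableEq mA]
    [Fintype mB] [DecidableEq mB] (α z lam : ℝ)
    (ρ : Matrix (mA × mB) (mA × mB) ℂ) (σ : Matrix mB mB ℂ) : ℝ :=
  (Matrix.trace (matPow
    (matPow ρ (α / (2 * z)) *
      ((1 : Matrix mA mA ℂ) ⊗ₖ
        (matPow (ptraceFst ρ) ((1 - lam) * (1 - α) / (2 * z)) *
          matPow σ (lam * (1 - α) / z) *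
          matPow (ptraceFst ρ) ((1 - lam) * (1 - α) / (2 * z)))) *
      matPow ρ (α / (2 * z))) z)).re

/-- The optimized trace functional `Q^λ_{α,z}(A|B)_ρ`. -/
noncomputable def Qopt {mA mB : Type*} [Fintype mA] [DecidableEq mA]
    [Fintype mB] [DecidableEq mB] (α z lam : ℝ)
    (ρ : Matrix (mA × mB) (mA × mB) ℂ) : ℝ :=
  if 0 ≤ lam * (1 - α) then
    sSup {x | ∃ σ : Matrix mB mB ℂ, IsDensity σ ∧ x = Qfun α z lam ρ σ}
  else
    sInf {x | ∃ σ : Matrix mB mB ℂ, IsDensity σ ∧ x = Qfun α z lam ρ σ}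

/-- The conditional entropy `H^λ_{α,z}(A|B)_ρ`. -/
noncomputable def Hcond {mA mB : Type*} [Fintype mA] [DecidableEq mA]
    [Fintype mB] [DecidableEq mB] (α z lam : ℝ)
    (ρ : Matrix (mA × mB) (mA × mB) ℂ) : ℝ :=
  (1 / (1 - α)) * Real.log (Qopt α z lam ρ)

/-- The DPI region `𝒟`. -/
def memD (α z lam : ℝ) : Prop :=
  (0 < α ∧ α < 1 ∧ 1 - z ≤ α ∧ α ≤ z ∧ 1 - z / (1 - α) ≤ lam ∧ lam ≤ 1) ∨
  (1 < α ∧ α - 1 ≤ z ∧ z ≤ α ∧ α ≤ 2 * z ∧ 1 + z / (1 - α) ≤ lam ∧ lam ≤ 1)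


lemma sl_step {I I' : Type*} [Fintype I] [Fintype I']
    (a b : I → ℝ) (c : I → ℂ) (a' b' : I' → ℝ) (c' : I' → ℂ)
    (ha : ∀ i, 0 ≤ a i) (hb : ∀ i, 0 ≤ b i) (ha' : ∀ i, 0 ≤ a' i) (hb' : ∀ i, 0 ≤ b' i)
    (H : ∀ x' : I' → ℂ, ∃ x : I → ℂ,
      ∑ i, a i * ‖x i‖ ^ 2 ≤ ∑ i, a' i * ‖x' i‖ ^ 2 ∧
      ∑ i, b i * ‖c i - x i‖ ^ 2 ≤ ∑ i, b' i * ‖c' i - x' i‖ ^ 2)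
    (s : ℝ) (hs : 0 < s) :
    ∑ i, ‖c i‖ ^ 2 * (a i * b i / (a i + s * b i)) ≤
      ∑ i, ‖c' i‖ ^ 2 * (a' i * b' i / (a' i + s * b' i)) := by
  obtain ⟨x, h1, h2⟩ := H (fun i => ((s * b' i / (a' i + s * b' i) : ℝ) : ℂ) * c' i)
  have key : ∀ (a b : ℝ) (c x : ℂ), 0 ≤ a → 0 ≤ b →
      s * (‖c‖ ^ 2 * (a * b / (a + s * b))) ≤ a * ‖x‖ ^ 2 + s * (b * ‖c - x‖ ^ 2) := by
    intro a b c x ha hb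
    have hc : ‖c‖ ≤ ‖x‖ + ‖c - x‖ := by
      calc ‖c‖ = ‖x + (c - x)‖ := by congr 1; ring
        _ ≤ _ := norm_add_le _ _
    rcases (add_nonneg ha (mul_nonneg hs.le hb)).eq_or_lt with h0 | h0
    · rw [← h0]; simp; positivity
    · have hsq : ‖c‖ ^ 2 ≤ (‖x‖ + ‖c - x‖) ^ 2 := by gcongr
      calc s * (‖c‖ ^ 2 * (a * b / (a + s * b)))
          ≤ s * ((‖x‖ + ‖c - x‖) ^ 2 * (a * b / (a + s * b))) := by gcongr
        _ ≤ _ := by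
          rw [← mul_div_assoc, ← mul_div_assoc, div_le_iff₀ h0]
          nlinarith [sq_nonneg (a * ‖x‖ - s * b * ‖c - x‖)]
  have key2 : ∀ (a b : ℝ) (c : ℂ), 0 ≤ a → 0 ≤ b →
      a * ‖((s * b / (a + s * b) : ℝ) : ℂ) * c‖ ^ 2
        + s * (b * ‖c - ((s * b / (a + s * b) : ℝ) : ℂ) * c‖ ^ 2)
        = s * (‖c‖ ^ 2 * (a * b / (a + s * b))) := by
    intro a b c ha hb
    have e : c - ((s * b / (a + s * b) : ℝ) : ℂ) * c = ((1 - s * b / (a + s * b) : ℝ) : ℂ) * c := by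
      push_cast; ring
    rw [e, norm_mul, norm_mul, Complex.norm_real, Complex.norm_real, mul_pow, mul_pow]
    simp only [Real.norm_eq_abs, sq_abs]
    rcases (add_nonneg ha (mul_nonneg hs.le hb)).eq_or_lt with h0 | h0
    · have hb0 : b = 0 := by nlinarith
      subst hb0; simp
    · have := h0.ne'
      field_simp
      ring
  have hL : s * ∑ i, ‖c i‖ ^ 2 * (a i * b i / (a i + s * b i)) ≤
      ∑ i, a i * ‖x i‖ ^ 2 + s * ∑ i, b i * ‖c i - x i‖ ^ 2 := by
    rw [Finset.mul_sum, Finset.mul_sum, ← Finset.sum_add_distrib]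
    exact Finset.sum_le_sum fun i _ => key _ _ _ _ (ha i) (hb i)
  have hR := Finset.sum_congr rfl (fun i (_ : i ∈ (Finset.univ : Finset I')) =>
    key2 (a' i) (b' i) (c' i) (ha' i) (hb' i))
  rw [Finset.sum_add_distrib, ← Finset.mul_sum, ← Finset.mul_sum] at hR
  have := mul_le_mul_of_nonneg_left h2 hs.le
  exact le_of_mul_le_mul_left (by linarith) hs

lemma sl_rep1 {J : Type*} [Fintype J] (a b w : J → ℝ) (ha : ∀ i, 0 ≤ a i) (hb : ∀ i, 0 ≤ b i)
    (μ : MeasureTheory.Measure ℝ) (p : ℝ) (hp0 : 0 < p) (hp1 : p < 1)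
    (hμ : ∀ x ∈ Set.Ici (0:ℝ), (MeasureTheory.IntegrableOn (fun t => Real.rpowIntegrand₀₁ p t x) (Set.Ioi 0) μ)
      ∧ x ^ p = ∫ t in Set.Ioi 0, Real.rpowIntegrand₀₁ p t x ∂μ) :
    (MeasureTheory.IntegrableOn
        (fun t => ∑ i, w i * (b i * Real.rpowIntegrand₀₁ p t (a i / b i))) (Set.Ioi 0) μ) ∧
      ∑ i, w i * (a i ^ p * b i ^ (1 - p)) =
       ∫ t in Set.Ioi 0, ∑ i, w i * (b i * Real.rpowIntegrand₀₁ p t (a i / b i)) ∂μ := by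
    have hi : ∀ i, MeasureTheory.IntegrableOn
        (fun t => w i * (b i * Real.rpowIntegrand₀₁ p t (a i / b i))) (Set.Ioi 0) μ := by
      intro i
      exact ((hμ _ (Set.mem_Ici.2 (div_nonneg (ha i) (hb i)))).1.const_mul _).const_mul _
    refine ⟨MeasureTheory.integrable_finsetSum _ fun i _ => hi i, ?_⟩
    rw [MeasureTheory.integral_finsetSum _ (fun i _ => hi i)]
    refine Finset.sum_congr rfl fun i _ => ?_
    rw [MeasureTheory.integral_const_mul, MeasureTheory.integral_const_mul,
      ← (hμ _ (Set.mem_Ici.2 (div_nonneg (ha i) (hb i)))).2]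
    congr 1
    rcases (hb i).eq_or_lt with h | h
    · rw [← h, Real.zero_rpow (by linarith)]; simp
    · rw [Real.div_rpow (ha i) h.le, Real.rpow_sub h, Real.rpow_one]; ring

lemma sl_rep2 {J : Type*} [Fintype J] (a b w : J → ℝ) (ha : ∀ i, 0 ≤ a i) (hb : ∀ i, 0 ≤ b i)
    (μ : MeasureTheory.Measure ℝ) (p : ℝ) (hp0 : 1 < p) (hp1 : p < 2)
    (hμ : ∀ x ∈ Set.Ici (0:ℝ), (MeasureTheory.IntegrableOn (fun t => Real.rpowIntegrand₀₁ (p-1) t x) (Set.Ioi 0) μ)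
      ∧ x ^ (p-1) = ∫ t in Set.Ioi 0, Real.rpowIntegrand₀₁ (p-1) t x ∂μ) :
    (MeasureTheory.IntegrableOn
          (fun t => ∑ i, w i * (a i * Real.rpowIntegrand₀₁ (p-1) t (a i / b i))) (Set.Ioi 0) μ) ∧
        ∑ i, w i * (a i ^ p * b i ^ (1 - p)) =
         ∫ t in Set.Ioi 0, ∑ i, w i * (a i * Real.rpowIntegrand₀₁ (p-1) t (a i / b i)) ∂μ := by
      have hi : ∀ i, MeasureTheory.IntegrableOn
          (fun t => w i * (a i * Real.rpowIntegrand₀₁ (p-1) t (a i / b i))) (Set.Ioi 0) μ := by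
        intro i
        exact ((hμ _ (Set.mem_Ici.2 (div_nonneg (ha i) (hb i)))).1.const_mul _).const_mul _
      refine ⟨MeasureTheory.integrable_finsetSum _ fun i _ => hi i, ?_⟩
      rw [MeasureTheory.integral_finsetSum _ (fun i _ => hi i)]
      refine Finset.sum_congr rfl fun i _ => ?_
      rw [MeasureTheory.integral_const_mul, MeasureTheory.integral_const_mul,
        ← (hμ _ (Set.mem_Ici.2 (div_nonneg (ha i) (hb i)))).2]
      congr 1
      rcases (hb i).eq_or_lt with h | h
      · rw [← h, Real.zero_rpow (by linarith), div_zero, Real.zero_rpow (by linarith)]; simp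
      · rcases (ha i).eq_or_lt with h' | h'
        · rw [← h', Real.zero_rpow (by linarith)]; simp
        · rw [Real.div_rpow (ha i) h.le, Real.rpow_sub h', Real.rpow_one, Real.rpow_sub h,
            Real.rpow_sub h, Real.rpow_one]
          have := Real.rpow_pos_of_pos h p
          field_simp

lemma sl_ct {J : Type*} [Fintype J] (a b w : J → ℝ) :
    Filter.Tendsto (fun p : ℝ => ∑ i, w i * (a i ^ p * b i ^ (1 - p)))
          (nhdsWithin 2 (Set.Iio 2)) (nhds (∑ i, w i * (a i ^ (2:ℝ) * b i ^ (1 - (2:ℝ))))) := by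
      refine tendsto_finsetSum _ fun i _ => ?_
      refine Filter.Tendsto.const_mul _ (Filter.Tendsto.mul ?_ ?_)
      · exact (Real.continuousAt_const_rpow' (by norm_num)).tendsto.mono_left nhdsWithin_le_nhds
      · have h : ContinuousAt (fun p : ℝ => b i ^ (1 - p)) 2 :=
          ContinuousAt.comp (f := fun p : ℝ => 1 - p) (g := fun y => b i ^ y)
            (Real.continuousAt_const_rpow' (by norm_num)) (by fun_prop)
        exact h.tendsto.mono_left nhdsWithin_le_nhds

lemma sl_lt {I I' : Type*} [Fintype I] [Fintype I']
    (a b w : I → ℝ) (a' b' w' : I' → ℝ)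
    (ha : ∀ i, 0 ≤ a i) (hb : ∀ i, 0 ≤ b i) (ha' : ∀ i, 0 ≤ a' i) (hb' : ∀ i, 0 ≤ b' i)
    (H : ∀ s : ℝ, 0 < s → ∑ i, w i * (a i * b i / (a i + s * b i)) ≤
      ∑ i, w' i * (a' i * b' i / (a' i + s * b' i)))
    (p : ℝ) (hp : p ∈ Set.Ioo (0:ℝ) 1) :
    ∑ i, w i * (a i ^ p * b i ^ (1 - p)) ≤ ∑ i, w' i * (a' i ^ p * b' i ^ (1 - p)) := by
  obtain ⟨μ, hμ⟩ := Real.exists_measure_rpow_eq_integral_rpowIntegrand₀₁ hp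
  have hp0 := hp.1
  have hp1 := hp.2
  obtain ⟨i1, e1⟩ := sl_rep1 a b w ha hb μ p hp0 hp1 hμ
  obtain ⟨i2, e2⟩ := sl_rep1 a' b' w' ha' hb' μ p hp0 hp1 hμ
  rw [e1, e2]
  refine MeasureTheory.setIntegral_mono_on i1 i2 measurableSet_Ioi ?_
  intro t ht
  have ht : 0 < t := ht
  have e : ∀ (a b w : ℝ), 0 ≤ a → 0 ≤ b → w * (b * Real.rpowIntegrand₀₁ p t (a / b)) =
      t ^ (p - 1) * (w * (a * b / (a + t * b))) := by
    intro a b w ha hb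
    rw [Real.rpowIntegrand₀₁_eq_pow_div hp ht.le (div_nonneg ha hb)]
    rcases hb.eq_or_lt with h | h
    · rw [← h]; simp
    · have : 0 < t * b := by positivity
      have : 0 < a + t * b := by positivity
      have h3 : t + a / b = (a + t * b) / b := by field_simp; ring
      rw [h3]
      field_simp
  rw [Finset.sum_congr rfl (fun i _ => e _ _ _ (ha i) (hb i)),
    Finset.sum_congr rfl (fun i _ => e _ _ _ (ha' i) (hb' i)), ← Finset.mul_sum, ← Finset.mul_sum]
  exact mul_le_mul_of_nonneg_left (H t ht) (by positivity)

lemma sl_gt {I I' : Type*} [Fintype I] [Fintype I']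
    (a b w : I → ℝ) (a' b' w' : I' → ℝ)
    (ha : ∀ i, 0 ≤ a i) (hb : ∀ i, 0 ≤ b i) (ha' : ∀ i, 0 ≤ a' i) (hb' : ∀ i, 0 ≤ b' i)
    (hw' : ∀ i, 0 ≤ w' i)
    (H : ∀ s : ℝ, 0 < s → ∑ i, w i * (a i * b i / (a i + s * b i)) ≤
      ∑ i, w' i * (a' i * b' i / (a' i + s * b' i)))
    (hlin : ∑ i, w' i * a' i ≤ ∑ i, w i * a i)
    (hsup : ∀ i, b i = 0 → w i * a i = 0)
    (p : ℝ) (hp : p ∈ Set.Ioc (1:ℝ) 2) :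
    ∑ i, w' i * (a' i ^ p * b' i ^ (1 - p)) ≤ ∑ i, w i * (a i ^ p * b i ^ (1 - p)) := by
  have main : ∀ p ∈ Set.Ioo (1:ℝ) 2,
      ∑ i, w' i * (a' i ^ p * b' i ^ (1 - p)) ≤ ∑ i, w i * (a i ^ p * b i ^ (1 - p)) := by
    intro p hp
    have hp0 := hp.1
    have hp1 := hp.2
    have hq : p - 1 ∈ Set.Ioo (0:ℝ) 1 := ⟨by linarith, by linarith⟩
    obtain ⟨μ, hμ⟩ := Real.exists_measure_rpow_eq_integral_rpowIntegrand₀₁ hq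
    obtain ⟨i1, e1⟩ := sl_rep2 a b w ha hb μ p hp0 hp1 hμ
    obtain ⟨i2, e2⟩ := sl_rep2 a' b' w' ha' hb' μ p hp0 hp1 hμ
    rw [e1, e2]
    refine MeasureTheory.setIntegral_mono_on i2 i1 measurableSet_Ioi ?_
    intro t ht
    have ht : 0 < t := ht
    have e : ∀ (a b w : ℝ), 0 ≤ a → 0 < b →
        w * (a * Real.rpowIntegrand₀₁ (p-1) t (a / b)) =
        t ^ (p - 1 - 1) * (w * a - t * (w * (a * b / (a + t * b)))) := by
      intro a b w ha h
      rw [Real.rpowIntegrand₀₁_eq_pow_div hq ht.le (div_nonneg ha h.le)]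
      have : 0 < t * b := by positivity
      have : 0 < a + t * b := by positivity
      have h3 : t + a / b = (a + t * b) / b := by field_simp; ring
      rw [h3]
      field_simp
      ring
    have l1 : ∀ i, w' i * (a' i * Real.rpowIntegrand₀₁ (p-1) t (a' i / b' i)) ≤
        t ^ (p - 1 - 1) * (w' i * a' i - t * (w' i * (a' i * b' i / (a' i + t * b' i)))) := by
      intro i
      rcases (hb' i).eq_or_lt with h | h
      · rw [← h]; simp
        have := hw' i
        have := ha' i
        positivity
      · exact (e _ _ _ (ha' i) h).le
    have l2 : ∀ i, w i * (a i * Real.rpowIntegrand₀₁ (p-1) t (a i / b i)) =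
        t ^ (p - 1 - 1) * (w i * a i - t * (w i * (a i * b i / (a i + t * b i)))) := by
      intro i
      rcases (hb i).eq_or_lt with h | h
      · rw [hsup i h.symm, ← h]; simp
      · exact (e _ _ _ (ha i) h)
    refine (Finset.sum_le_sum fun i _ => l1 i).trans ?_
    rw [Finset.sum_congr rfl (fun i _ => l2 i), ← Finset.mul_sum, ← Finset.mul_sum,
      Finset.sum_sub_distrib, Finset.sum_sub_distrib, ← Finset.mul_sum, ← Finset.mul_sum]
    have := mul_le_mul_of_nonneg_left (H t ht) ht.le
    exact mul_le_mul_of_nonneg_left (by linarith) (by positivity)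
  rcases hp.2.eq_or_lt with h2 | h2
  · subst h2
    refine le_of_tendsto_of_tendsto (sl_ct a' b' w') (sl_ct a b w) ?_
    have : Set.Ioo (1:ℝ) 2 ∈ nhdsWithin (2:ℝ) (Set.Iio 2) := Ioo_mem_nhdsLT (by norm_num)
    filter_upwards [this] with q hq
    exact main q hq
  · exact main p ⟨hp.1, h2⟩

structure Dg {n : Type*} [Fintype n] [DecidableEq n] (M U : Matrix n n ℂ) (d : n → ℝ) : Prop where
  u1 : Uᴴ * U = 1
  u2 : U * Uᴴ = 1
  eq : M = U * diagonal (fun i => (d i : ℂ)) * Uᴴ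

section
variable {n n' m κ : Type*} [Fintype n] [DecidableEq n] [Fintype n'] [DecidableEq n']
  [Fintype m] [DecidableEq m] [Fintype κ]

lemma dg_one {U : Matrix n n ℂ} (h1 : Uᴴ * U = 1) (h2 : U * Uᴴ = 1) : Dg 1 U (fun _ => 1) :=
  ⟨h1, h2, by simp [h2]⟩

lemma dg_mk {U : Matrix n n ℂ} (h1 : Uᴴ * U = 1) (h2 : U * Uᴴ = 1) (d : n → ℝ) :
    Dg (U * diagonal (fun i => (d i : ℂ)) * Uᴴ) U d := ⟨h1, h2, rfl⟩

lemma dg_entry {l : Type*} {A U : Matrix n n ℂ} {a : n → ℝ} (h : Dg A U a) (S : Matrix n l ℂ) (j : l) :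
    (Sᴴ * A * S) j j = ((∑ i, ‖(Uᴴ * S) i j‖ ^ 2 * a i : ℝ) : ℂ) := by
  have e : Sᴴ * A * S = (Uᴴ * S)ᴴ * (diagonal (fun i => (a i : ℂ)) * (Uᴴ * S)) := by
    rw [h.eq, conjTranspose_mul, conjTranspose_conjTranspose]
    simp only [Matrix.mul_assoc]
  rw [e, Matrix.mul_apply, Complex.ofReal_sum]
  refine Finset.sum_congr rfl fun i _ => ?_
  rw [diagonal_mul, conjTranspose_apply]
  have := Complex.conj_mul' ((Uᴴ * S) i j)
  rw [Complex.star_def]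
  push_cast
  rw [← this]; ring

lemma dg_diag {A U : Matrix n n ℂ} {a : n → ℝ} (h : Dg A U a) (j : n) :
    (Uᴴ * A * U) j j = (a j : ℂ) := by
  have e : Uᴴ * A * U = diagonal (fun i => (a i : ℂ)) := by
    rw [h.eq]
    calc _ = (Uᴴ * U) * diagonal (fun i => (a i : ℂ)) * (Uᴴ * U) := by simp only [Matrix.mul_assoc]
      _ = _ := by rw [h.u1]; simp
  rw [e]; simp

lemma dg_trace {A U : Matrix n n ℂ} {a : n → ℝ} (h : Dg A U a) (S : Matrix n m ℂ)
    (W : Matrix m m ℂ) (hW : W * Wᴴ = 1) :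
    (Sᴴ * A * S).trace = ((∑ i, ∑ j, ‖(Uᴴ * S * W) i j‖ ^ 2 * a i : ℝ) : ℂ) := by
  have e : (Sᴴ * A * S).trace = ((S * W)ᴴ * A * (S * W)).trace := by
    rw [conjTranspose_mul]
    calc _ = (Sᴴ * A * S * (W * Wᴴ)).trace := by rw [hW, Matrix.mul_one]
      _ = (Sᴴ * A * S * W * Wᴴ).trace := by simp only [Matrix.mul_assoc]
      _ = _ := by rw [Matrix.trace_mul_comm]; simp only [Matrix.mul_assoc]
  rw [e, Finset.sum_comm, Matrix.trace, Complex.ofReal_sum]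
  refine Finset.sum_congr rfl fun j _ => ?_
  rw [Matrix.diag_apply, dg_entry h, Matrix.mul_assoc]

lemma dg_psd {A U : Matrix n n ℂ} {a : n → ℝ} (h : Dg A U a) (ha : ∀ i, 0 ≤ a i) :
    A.PosSemidef := by
  rw [h.eq]
  have := (PosSemidef.diagonal (d := fun i => (a i : ℂ)) (fun i => by simpa using ha i)).mul_mul_conjTranspose_same U
  exact this

lemma dg_nonneg {A U : Matrix n n ℂ} {a : n → ℝ} (h : Dg A U a) (hA : A.PosSemidef) (i : n) :
    0 ≤ a i := by
  have h1 := (hA.conjTranspose_mul_mul_same U).diag_nonneg (i := i)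
  rw [dg_diag h] at h1
  exact_mod_cast h1

lemma exists_dg {A : Matrix n n ℂ} (hA : A.IsHermitian) : ∃ U a, Dg A U a := by
  refine ⟨hA.eigenvectorUnitary, hA.eigenvalues, ?_, ?_, ?_⟩
  · have := (Unitary.mem_iff.1 hA.eigenvectorUnitary.2).1
    exact this
  · have := (Unitary.mem_iff.1 hA.eigenvectorUnitary.2).2
    exact this
  · have := hA.spectral_theorem
    rw [Unitary.conjStarAlgAut_apply] at this
    exact this

/-- Kraus map -/
def Ek (N : κ → Matrix n' n ℂ) (B : Matrix n n ℂ) : Matrix n' n' ℂ := ∑ k, N k * B * (N k)ᴴ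

lemma Ek_psd (N : κ → Matrix n' n ℂ) {B : Matrix n n ℂ} (hB : B.PosSemidef) :
    (Ek N B).PosSemidef :=
  posSemidef_sum _ fun k _ => hB.mul_mul_conjTranspose_same (N k)

lemma ks_ineq (N : κ → Matrix n' n ℂ) (hN1 : ∑ k, (N k)ᴴ * N k = 1)
    {A : Matrix n n ℂ} (hA : A.PosSemidef) (S : Matrix n' n' ℂ) :
    ((∑ k, (N k)ᴴ * S * N k)ᴴ * A * (∑ k, (N k)ᴴ * S * N k)).trace.re ≤
      (Sᴴ * Ek N A * S).trace.re := by
  set T := ∑ k, (N k)ᴴ * S * N k with hT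
  have h0 : 0 ≤ (∑ k, (((N k)ᴴ * S - T * (N k)ᴴ)ᴴ * A * ((N k)ᴴ * S - T * (N k)ᴴ)).trace).re := by
    rw [Complex.re_sum]
    refine Finset.sum_nonneg fun k _ => ?_
    exact (Complex.le_def.1 (hA.conjTranspose_mul_mul_same _).trace_nonneg).1
  have hTh : Tᴴ = ∑ k, (N k)ᴴ * Sᴴ * N k := by
    rw [hT, conjTranspose_sum]
    refine Finset.sum_congr rfl fun k _ => ?_
    simp [Matrix.mul_assoc]
  have e : ∑ k, (((N k)ᴴ * S - T * (N k)ᴴ)ᴴ * A * ((N k)ᴴ * S - T * (N k)ᴴ)).trace =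
      (Sᴴ * Ek N A * S).trace - (Tᴴ * A * T).trace := by
    have e1 : ∀ k, (((N k)ᴴ * S - T * (N k)ᴴ)ᴴ * A * ((N k)ᴴ * S - T * (N k)ᴴ)).trace =
       (Sᴴ * (N k * A * (N k)ᴴ) * S).trace - ((N k)ᴴ * Sᴴ * N k * (A * T)).trace
        - (Tᴴ * A * ((N k)ᴴ * S * N k)).trace + (Tᴴ * A * T * ((N k)ᴴ * N k)).trace := by
      intro k
      have a1 : ((N k)ᴴ * Sᴴ * N k * (A * T)).trace = (Sᴴ * N k * A * T * (N k)ᴴ).trace := by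
        rw [show (N k)ᴴ * Sᴴ * N k * (A * T) = (N k)ᴴ * (Sᴴ * N k * A * T) by
          simp only [Matrix.mul_assoc], Matrix.trace_mul_comm]
      have a2 : (Tᴴ * A * ((N k)ᴴ * S * N k)).trace = (N k * Tᴴ * A * (N k)ᴴ * S).trace := by
        rw [show Tᴴ * A * ((N k)ᴴ * S * N k) = (Tᴴ * A * (N k)ᴴ * S) * N k by
          simp only [Matrix.mul_assoc], Matrix.trace_mul_comm]
        simp only [Matrix.mul_assoc]
      have a3 : (Tᴴ * A * T * ((N k)ᴴ * N k)).trace = (N k * Tᴴ * A * T * (N k)ᴴ).trace := by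
        rw [show Tᴴ * A * T * ((N k)ᴴ * N k) = (Tᴴ * A * T * (N k)ᴴ) * N k by
          simp only [Matrix.mul_assoc], Matrix.trace_mul_comm]
        simp only [Matrix.mul_assoc]
      rw [a1, a2, a3, ← trace_sub, ← trace_sub, ← trace_add]
      congr 1
      simp only [conjTranspose_sub, conjTranspose_mul, conjTranspose_conjTranspose,
        Matrix.sub_mul, Matrix.mul_sub, Matrix.mul_assoc]
      abel
    simp only [e1, Finset.sum_add_distrib, Finset.sum_sub_distrib, ← trace_sum]
    rw [← Matrix.mul_sum, ← Matrix.mul_sum, ← Matrix.sum_mul, ← Matrix.sum_mul, ← Matrix.mul_sum,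
      hN1, ← hT, ← hTh, Ek, Matrix.mul_one]
    simp only [Matrix.mul_assoc]
    ring
  rw [e, Complex.sub_re] at h0
  linarith

/-- overlap weights -/
noncomputable def wt (N : κ → Matrix n' n ℂ) (V : Matrix n n ℂ) (V' : Matrix n' n' ℂ) (i : n) (j : n') : ℝ :=
  ∑ k, ‖(Vᴴ * ((N k)ᴴ * V')) i j‖ ^ 2

lemma wt_nonneg (N : κ → Matrix n' n ℂ) (V : Matrix n n ℂ) (V' : Matrix n' n' ℂ) (i : n) (j : n') :
    0 ≤ wt N V V' i j := Finset.sum_nonneg fun _ _ => by positivity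

lemma wt_entry (N : κ → Matrix n' n ℂ) {B V : Matrix n n ℂ} {b : n → ℝ} (h : Dg B V b)
    (V' : Matrix n' n' ℂ) (j : n') :
    (V'ᴴ * Ek N B * V') j j = ((∑ i, wt N V V' i j * b i : ℝ) : ℂ) := by
  have e : V'ᴴ * Ek N B * V' = ∑ k, ((N k)ᴴ * V')ᴴ * B * ((N k)ᴴ * V') := by
    rw [Ek, Matrix.mul_sum, Matrix.sum_mul]
    refine Finset.sum_congr rfl fun k _ => ?_
    simp [Matrix.mul_assoc]
  rw [e, Matrix.sum_apply, Finset.sum_congr rfl (fun k _ => dg_entry h _ j), ← Complex.ofReal_sum,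
    Finset.sum_comm]
  simp only [wt, Finset.sum_mul]

lemma wt_col (N : κ → Matrix n' n ℂ) (hN2 : (1 - ∑ k, N k * (N k)ᴴ).PosSemidef)
    {V : Matrix n n ℂ} (h1 : Vᴴ * V = 1) (h2 : V * Vᴴ = 1)
    {V' : Matrix n' n' ℂ} (h1' : V'ᴴ * V' = 1) (j : n') :
    ∑ i, wt N V V' i j ≤ 1 := by
  have h := wt_entry N (dg_one h1 h2) V' j
  have h0 := (hN2.conjTranspose_mul_mul_same V').diag_nonneg (i := j)
  have e : V'ᴴ * (1 - ∑ k, N k * (N k)ᴴ) * V' = 1 - V'ᴴ * Ek N 1 * V' := by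
    rw [Matrix.mul_sub, Matrix.sub_mul, Matrix.mul_one, h1', Ek]
    simp
  rw [e, Matrix.sub_apply, h, Matrix.one_apply_eq] at h0
  simp only [mul_one] at h0
  have : (0:ℝ) ≤ 1 - ∑ i, wt N V V' i j := by exact_mod_cast h0
  linarith

lemma wt_row (N : κ → Matrix n' n ℂ) (hN1 : ∑ k, (N k)ᴴ * N k = 1)
    {V : Matrix n n ℂ} (h1 : Vᴴ * V = 1)
    {V' : Matrix n' n' ℂ} (h1' : V'ᴴ * V' = 1) (h2' : V' * V'ᴴ = 1) (i : n) :
    ∑ j, wt N V V' i j = 1 := by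
  have h := wt_entry (fun k => (N k)ᴴ) (dg_one h1' h2') V i
  have e : Vᴴ * Ek (fun k => (N k)ᴴ) 1 * V = 1 := by
    simp [Ek, hN1, h1]
  rw [e, Matrix.one_apply_eq] at h
  have h : (1:ℝ) = ∑ j, wt (fun k => (N k)ᴴ) V' V j i * 1 := by exact_mod_cast h
  rw [h]
  refine Finset.sum_congr rfl fun j _ => ?_
  rw [mul_one]
  refine Finset.sum_congr rfl fun k _ => ?_
  have : V'ᴴ * (((N k)ᴴ)ᴴ * V) = (Vᴴ * ((N k)ᴴ * V'))ᴴ := by simp [Matrix.mul_assoc]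
  rw [this, conjTranspose_apply, norm_star]

end

lemma subJensen_ge {I : Type*} [Fintype I] (w x : I → ℝ) (hw : ∀ i, 0 ≤ w i) (hw1 : ∑ i, w i ≤ 1)
    (hx : ∀ i, 0 ≤ x i) (z : ℝ) (hz : 1 ≤ z) : (∑ i, w i * x i) ^ z ≤ ∑ i, w i * x i ^ z := by
  have h := (convexOn_rpow hz).map_sum_le (t := Finset.univ)
    (w := fun o : Option I => o.elim (1 - ∑ i, w i) w) (p := fun o : Option I => o.elim 0 x)
    (by rintro (_ | i) _ <;> simp [hw, hw1]) (by simp [Fintype.sum_option])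
    (by rintro (_ | i) _ <;> simp [hx])
  simpa [Fintype.sum_option, Real.zero_rpow (by linarith : z ≠ 0)] using h

lemma subJensen_le {I : Type*} [Fintype I] (w x : I → ℝ) (hw : ∀ i, 0 ≤ w i) (hw1 : ∑ i, w i ≤ 1)
    (hx : ∀ i, 0 ≤ x i) (z : ℝ) (hz0 : 0 < z) (hz : z ≤ 1) :
    ∑ i, w i * x i ^ z ≤ (∑ i, w i * x i) ^ z := by
  have h := (Real.concaveOn_rpow hz0.le hz).le_map_sum (t := Finset.univ)
    (w := fun o : Option I => o.elim (1 - ∑ i, w i) w) (p := fun o : Option I => o.elim 0 x)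
    (by rintro (_ | i) _ <;> simp [hw, hw1]) (by simp [Fintype.sum_option])
    (by rintro (_ | i) _ <;> simp [hx])
  simpa [Fintype.sum_option, Real.zero_rpow hz0.ne'] using h

lemma sumJensen_ge {I J : Type*} [Fintype I] [Fintype J] (w : I → J → ℝ) (x : I → ℝ) (y : J → ℝ)
    (hw : ∀ i j, 0 ≤ w i j) (hw1 : ∀ j, ∑ i, w i j ≤ 1) (hw2 : ∀ i, ∑ j, w i j = 1)
    (hx : ∀ i, 0 ≤ x i) (hy : ∀ j, 0 ≤ y j) (z : ℝ) (hz : 1 ≤ z)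
    (h : ∀ j, y j ≤ ∑ i, w i j * x i) : ∑ j, y j ^ z ≤ ∑ i, x i ^ z := by
  calc ∑ j, y j ^ z ≤ ∑ j, ∑ i, w i j * x i ^ z := Finset.sum_le_sum fun j _ =>
        (Real.rpow_le_rpow (hy j) (h j) (by linarith)).trans
          (subJensen_ge _ _ (fun i => hw i j) (hw1 j) hx z hz)
    _ = ∑ i, x i ^ z := by
        rw [Finset.sum_comm]
        simp only [← Finset.sum_mul, hw2, one_mul]

lemma sumJensen_le {I J : Type*} [Fintype I] [Fintype J] (w : I → J → ℝ) (x : I → ℝ) (y : J → ℝ)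
    (hw : ∀ i j, 0 ≤ w i j) (hw1 : ∀ j, ∑ i, w i j ≤ 1) (hw2 : ∀ i, ∑ j, w i j = 1)
    (hx : ∀ i, 0 ≤ x i) (z : ℝ) (hz0 : 0 < z) (hz : z ≤ 1)
    (h : ∀ j, ∑ i, w i j * x i ≤ y j) : ∑ i, x i ^ z ≤ ∑ j, y j ^ z := by
  calc ∑ i, x i ^ z = ∑ j, ∑ i, w i j * x i ^ z := by
        rw [Finset.sum_comm]
        simp only [← Finset.sum_mul, hw2, one_mul]
    _ ≤ ∑ j, y j ^ z := Finset.sum_le_sum fun j _ =>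
        (subJensen_le _ _ (fun i => hw i j) (hw1 j) hx z hz0 hz).trans
        (Real.rpow_le_rpow (Finset.sum_nonneg fun i _ => mul_nonneg (hw i j) (hx i)) (h j) hz0.le)

section
variable {n n' m κ : Type*} [Fintype n] [DecidableEq n] [Fintype n'] [DecidableEq n']
  [Fintype m] [DecidableEq m] [Fintype κ]

/-- functional calculus power in a given diagonalization -/
noncomputable def dpow (U : Matrix n n ℂ) (a : n → ℝ) (p : ℝ) : Matrix n n ℂ :=
  U * diagonal (fun i => ((a i ^ p : ℝ) : ℂ)) * Uᴴ

lemma Ek_entry (N : κ → Matrix n' n ℂ) {B V : Matrix n n ℂ} {b : n → ℝ} (h : Dg B V b)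
    (S : Matrix n' m ℂ) (j : m) :
    (Sᴴ * Ek N B * S) j j = ((∑ q : κ × n, ‖(Vᴴ * ((N q.1)ᴴ * S)) q.2 j‖ ^ 2 * b q.2 : ℝ) : ℂ) := by
  have e : Sᴴ * Ek N B * S = ∑ k, ((N k)ᴴ * S)ᴴ * B * ((N k)ᴴ * S) := by
    rw [Ek, Matrix.mul_sum, Matrix.sum_mul]
    refine Finset.sum_congr rfl fun k _ => ?_
    simp [Matrix.mul_assoc]
  rw [e, Matrix.sum_apply, Finset.sum_congr rfl (fun k _ => dg_entry h _ j), ← Complex.ofReal_sum,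
    Fintype.sum_prod_type]

lemma J_step (N : κ → Matrix n' n ℂ) (hN2 : (1 - ∑ k, N k * (N k)ᴴ).PosSemidef)
    {A U : Matrix n n ℂ} {a : n → ℝ} (h : Dg A U a) (ha : ∀ i, 0 ≤ a i)
    {U' : Matrix n' n' ℂ} {a' : n' → ℝ} (h' : Dg (Ek N A) U' a') (ha' : ∀ i, 0 ≤ a' i)
    (S : Matrix n' m ℂ) (j : m) (s : ℝ) (hs : 0 < s) :
    ∑ q : κ × n, ‖(Uᴴ * ((N q.1)ᴴ * S)) q.2 j‖ ^ 2 * (a q.2 * 1 / (a q.2 + s * 1)) ≤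
      ∑ i, ‖(U'ᴴ * S) i j‖ ^ 2 * (a' i * 1 / (a' i + s * 1)) := by
  refine sl_step (fun q : κ × n => a q.2) (fun _ => 1)
    (fun q : κ × n => (Uᴴ * ((N q.1)ᴴ * S)) q.2 j)
    a' (fun _ => 1) (fun i => (U'ᴴ * S) i j) (fun _ => ha _) (fun _ => zero_le_one) ha'
    (fun _ => zero_le_one) ?_ s hs
  intro x'
  set X : Matrix n' m ℂ := Matrix.of fun i _ => x' i with hX
  have hUX : U'ᴴ * (U' * X) = X := by rw [← Matrix.mul_assoc, h'.u1, Matrix.one_mul]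
  refine ⟨fun q => (Uᴴ * ((N q.1)ᴴ * (U' * X))) q.2 j, ?_, ?_⟩
  · have e1 := Ek_entry N h (U' * X) j
    have e2 := dg_entry h' (U' * X) j
    rw [e1, hUX] at e2
    have e2 := Complex.ofReal_injective e2
    simp only [mul_comm (_ ^ 2) _] at e2
    rw [e2]
    simp [hX]
  · have e1 := Ek_entry N (dg_one h.u1 h.u2) (S - U' * X) j
    have e2 := dg_entry (dg_one h'.u1 h'.u2) (S - U' * X) j
    have h0 := (hN2.conjTranspose_mul_mul_same (S - U' * X)).diag_nonneg (i := j)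
    have e : (S - U' * X)ᴴ * (1 - ∑ k, N k * (N k)ᴴ) * (S - U' * X) =
        (S - U' * X)ᴴ * (1 : Matrix n' n' ℂ) * (S - U' * X) - (S - U' * X)ᴴ * Ek N 1 * (S - U' * X) := by
      rw [Matrix.mul_sub (S - U' * X)ᴴ, Matrix.sub_mul _ _ (S - U' * X), Ek]
      simp
    rw [e, Matrix.sub_apply, e1, e2, sub_nonneg] at h0
    have h0 := Complex.real_le_real.1 h0
    simp only [mul_one, one_mul] at h0 ⊢
    rw [Matrix.mul_sub U'ᴴ, hUX] at h0
    simp only [Matrix.mul_sub, Matrix.sub_apply] at h0 ⊢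
    simpa [hX] using h0

lemma dpow_one {A U : Matrix n n ℂ} {a : n → ℝ} (h : Dg A U a) : dpow U a 1 = A := by
  rw [dpow, h.eq]; simp

lemma dpow_dg {A U : Matrix n n ℂ} {a : n → ℝ} (h : Dg A U a) (p : ℝ) :
    Dg (dpow U a p) U (fun i => a i ^ p) := dg_mk h.u1 h.u2 _

lemma J_lt (N : κ → Matrix n' n ℂ) (hN2 : (1 - ∑ k, N k * (N k)ᴴ).PosSemidef)
    {A U : Matrix n n ℂ} {a : n → ℝ} (h : Dg A U a) (ha : ∀ i, 0 ≤ a i)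
    {U' : Matrix n' n' ℂ} {a' : n' → ℝ} (h' : Dg (Ek N A) U' a') (ha' : ∀ i, 0 ≤ a' i)
    (S : Matrix n' m ℂ) (j : m) (p : ℝ) (hp : 0 < p) (hp1 : p ≤ 1) :
    ((Sᴴ * Ek N (dpow U a p) * S) j j).re ≤ ((Sᴴ * dpow U' a' p * S) j j).re := by
  rcases hp1.eq_or_lt with rfl | hp1
  · rw [dpow_one h, dpow_one h']
  · rw [Ek_entry N (dpow_dg h p), dg_entry (dpow_dg h' p), Complex.ofReal_re, Complex.ofReal_re]
    have := sl_lt (fun q : κ × n => a q.2) (fun _ => 1)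
      (fun q : κ × n => ‖(Uᴴ * ((N q.1)ᴴ * S)) q.2 j‖ ^ 2)
      a' (fun _ => 1) (fun i => ‖(U'ᴴ * S) i j‖ ^ 2) (fun _ => ha _) (fun _ => zero_le_one) ha'
      (fun _ => zero_le_one) (fun s hs => J_step N hN2 h ha h' ha' S j s hs) p ⟨hp, hp1⟩
    simpa using this

lemma J_gt (N : κ → Matrix n' n ℂ) (hN2 : (1 - ∑ k, N k * (N k)ᴴ).PosSemidef)
    {A U : Matrix n n ℂ} {a : n → ℝ} (h : Dg A U a) (ha : ∀ i, 0 ≤ a i)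
    {U' : Matrix n' n' ℂ} {a' : n' → ℝ} (h' : Dg (Ek N A) U' a') (ha' : ∀ i, 0 ≤ a' i)
    (S : Matrix n' m ℂ) (j : m) (p : ℝ) (hp : 1 ≤ p) (hp1 : p ≤ 2) :
    ((Sᴴ * dpow U' a' p * S) j j).re ≤ ((Sᴴ * Ek N (dpow U a p) * S) j j).re := by
  rcases hp.eq_or_lt with rfl | hp
  · rw [dpow_one h, dpow_one h']
  · rw [Ek_entry N (dpow_dg h p), dg_entry (dpow_dg h' p), Complex.ofReal_re, Complex.ofReal_re]
    have e1 := Ek_entry N h S j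
    rw [dg_entry h'] at e1
    have := sl_gt (fun q : κ × n => a q.2) (fun _ => 1)
      (fun q : κ × n => ‖(Uᴴ * ((N q.1)ᴴ * S)) q.2 j‖ ^ 2)
      a' (fun _ => 1) (fun i => ‖(U'ᴴ * S) i j‖ ^ 2) (fun _ => ha _) (fun _ => zero_le_one) ha'
      (fun _ => zero_le_one) (fun _ => by positivity)
      (fun s hs => J_step N hN2 h ha h' ha' S j s hs)
      (Complex.ofReal_injective e1).le (fun i hi => absurd hi one_ne_zero) p ⟨hp, hp1⟩
    simpa using this

lemma L_step (N : κ → Matrix n' n ℂ) (hN1 : ∑ k, (N k)ᴴ * N k = 1)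
    {K : Matrix n n ℂ} {K' : Matrix n' n' ℂ} (hK : ∀ k, N k * K = K' * N k)
    {A U B V : Matrix n n ℂ} {a b : n → ℝ} (h : Dg A U a) (ha : ∀ i, 0 ≤ a i)
    (hB : Dg B V b) (hb : ∀ i, 0 ≤ b i)
    {U' V' : Matrix n' n' ℂ} {a' b' : n' → ℝ} (h' : Dg (Ek N A) U' a') (ha' : ∀ i, 0 ≤ a' i)
    (hB' : Dg (Ek N B) V' b') (hb' : ∀ i, 0 ≤ b' i) (s : ℝ) (hs : 0 < s) :
    ∑ q : n × n, ‖(Uᴴ * K * V) q.1 q.2‖ ^ 2 * (a q.1 * b q.2 / (a q.1 + s * b q.2)) ≤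
      ∑ q : n' × n', ‖(U'ᴴ * K' * V') q.1 q.2‖ ^ 2 * (a' q.1 * b' q.2 / (a' q.1 + s * b' q.2)) := by
  refine sl_step (fun q : n × n => a q.1) (fun q => b q.2) (fun q => (Uᴴ * K * V) q.1 q.2)
    (fun q : n' × n' => a' q.1) (fun q => b' q.2) (fun q => (U'ᴴ * K' * V') q.1 q.2)
    (fun _ => ha _) (fun _ => hb _) (fun _ => ha' _) (fun _ => hb' _) ?_ s hs
  intro x'
  set X : Matrix n' n' ℂ := Matrix.of fun i j => x' (i, j) with hX
  set S := U' * X * V'ᴴ with hS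
  have hSX : U'ᴴ * S * V' = X := by
    calc _ = (U'ᴴ * U') * X * (V'ᴴ * V') := by rw [hS]; simp only [Matrix.mul_assoc]
      _ = X := by rw [h'.u1, hB'.u1]; simp
  have hKT : ∑ k, (N k)ᴴ * K' * N k = K := by
    calc _ = ∑ k, (N k)ᴴ * N k * K := by
          refine Finset.sum_congr rfl fun k _ => ?_
          rw [Matrix.mul_assoc, ← hK, Matrix.mul_assoc]
      _ = K := by rw [← Matrix.sum_mul, hN1, Matrix.one_mul]
  refine ⟨fun q => (Uᴴ * (∑ k, (N k)ᴴ * S * N k) * V) q.1 q.2, ?_, ?_⟩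
  · have e := ks_ineq N hN1 (dg_psd h ha) S
    rw [dg_trace h _ V hB.u2, dg_trace h' _ V' hB'.u2, hSX, Complex.ofReal_re,
      Complex.ofReal_re] at e
    rw [Fintype.sum_prod_type, Fintype.sum_prod_type]
    simp only [mul_comm (a _), mul_comm (a' _)]
    simpa [hX] using e
  · have e := ks_ineq N hN1 (dg_psd hB hb) (K' - S)ᴴ
    rw [dg_trace hB _ U h.u2, dg_trace hB' _ U' h'.u2, Complex.ofReal_re, Complex.ofReal_re] at e
    have e1 : Vᴴ * (∑ k, (N k)ᴴ * (K' - S)ᴴ * N k) * U =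
        (Uᴴ * K * V - Uᴴ * (∑ k, (N k)ᴴ * S * N k) * V)ᴴ := by
      have : ∑ k, (N k)ᴴ * (K' - S)ᴴ * N k = (K - ∑ k, (N k)ᴴ * S * N k)ᴴ := by
        conv_rhs => rw [← hKT]
        rw [← Finset.sum_sub_distrib, conjTranspose_sum]
        refine Finset.sum_congr rfl fun k _ => ?_
        simp only [conjTranspose_sub, conjTranspose_mul, conjTranspose_conjTranspose,
          Matrix.sub_mul, Matrix.mul_sub, Matrix.mul_assoc]
      rw [this]
      simp only [conjTranspose_sub, conjTranspose_mul, conjTranspose_conjTranspose,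
          Matrix.sub_mul, Matrix.mul_sub, Matrix.mul_assoc]
    have e2 : V'ᴴ * (K' - S)ᴴ * U' = (U'ᴴ * K' * V' - X)ᴴ := by
      rw [← hSX]
      simp only [conjTranspose_sub, conjTranspose_mul, conjTranspose_conjTranspose,
          Matrix.sub_mul, Matrix.mul_sub, Matrix.mul_assoc]
    rw [e1, e2, Finset.sum_comm, Finset.sum_comm (γ := n')] at e
    simp only [conjTranspose_apply, norm_star] at e
    rw [Fintype.sum_prod_type, Fintype.sum_prod_type]
    simp only [mul_comm (b _), mul_comm (b' _)]
    simpa only [Matrix.sub_apply, hX, Matrix.of_apply] using e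

lemma L_lin (N : κ → Matrix n' n ℂ) (hN1 : ∑ k, (N k)ᴴ * N k = 1)
    {K : Matrix n n ℂ} {K' : Matrix n' n' ℂ} (hK : ∀ k, N k * Kᴴ = K'ᴴ * N k)
    {A U V : Matrix n n ℂ} {a : n → ℝ} (h : Dg A U a) (hV : V * Vᴴ = 1)
    {U' V' : Matrix n' n' ℂ} {a' : n' → ℝ} (h' : Dg (Ek N A) U' a') (hV' : V' * V'ᴴ = 1) :
    ∑ q : n' × n', ‖(U'ᴴ * K' * V') q.1 q.2‖ ^ 2 * a' q.1 =
    ∑ q : n × n, ‖(Uᴴ * K * V) q.1 q.2‖ ^ 2 * a q.1 := by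
  have e1 := dg_trace h K V hV
  have e2 := dg_trace h' K' V' hV'
  have hK2 : ∀ k, (N k)ᴴ * K' = K * (N k)ᴴ := by
    intro k
    have := congrArg conjTranspose (hK k)
    simpa using this.symm
  have e : (K'ᴴ * Ek N A * K').trace = (Kᴴ * A * K).trace := by
    have : K'ᴴ * Ek N A * K' = ∑ k, N k * (Kᴴ * A * K * (N k)ᴴ) := by
      rw [Ek, Matrix.mul_sum, Matrix.sum_mul]
      refine Finset.sum_congr rfl fun k _ => ?_
      calc K'ᴴ * (N k * A * (N k)ᴴ) * K' = (K'ᴴ * N k) * A * ((N k)ᴴ * K') := by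
            simp only [Matrix.mul_assoc]
        _ = _ := by rw [hK2, ← hK]; simp only [Matrix.mul_assoc]
    rw [this, trace_sum]
    calc ∑ k, (N k * (Kᴴ * A * K * (N k)ᴴ)).trace = ∑ k, (Kᴴ * A * K * ((N k)ᴴ * N k)).trace := by
          refine Finset.sum_congr rfl fun k _ => ?_
          rw [Matrix.trace_mul_comm]; simp only [Matrix.mul_assoc]
      _ = _ := by rw [← trace_sum, ← Matrix.mul_sum, hN1, Matrix.mul_one]
  rw [Fintype.sum_prod_type, Fintype.sum_prod_type]
  rw [e1, e2] at e
  exact Complex.ofReal_injective e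

end

lemma rev_young (x w z : ℝ) (hx : 0 ≤ x) (hw : 0 < w) (hz0 : 0 < z) (hz1 : z < 1) :
    x ^ z / z + (1 - 1 / z) * w ^ (z / (z - 1)) ≤ x * w := by
  have hz : z - 1 ≠ 0 := by linarith
  have h := Real.geom_mean_le_arith_mean2_weighted (w₁ := z) (w₂ := 1 - z) (p₁ := x * w)
    (p₂ := w ^ (z / (z - 1))) hz0.le (by linarith) (by positivity) (by positivity) (by ring)
  have e : (x * w) ^ z * (w ^ (z / (z - 1))) ^ (1 - z) = x ^ z := by
    rw [Real.mul_rpow hx hw.le, ← Real.rpow_mul hw.le, mul_assoc, ← Real.rpow_add hw]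
    have : z + z / (z - 1) * (1 - z) = 0 := by field_simp; ring
    rw [this]; simp
  rw [e] at h
  have : x ^ z / z ≤ (z * (x * w) + (1 - z) * w ^ (z / (z - 1))) / z := by gcongr
  have e2 : (z * (x * w) + (1 - z) * w ^ (z / (z - 1))) / z
      = x * w - (1 - 1 / z) * w ^ (z / (z - 1)) := by
    field_simp; ring
  linarith

section
variable {n n' m κ : Type*} [Fintype n] [DecidableEq n] [Fintype n'] [DecidableEq n']
  [Fintype m] [DecidableEq m] [Fintype κ]

lemma Ek_conj (N : κ → Matrix n' n ℂ)
    {K : Matrix n n ℂ} {K' : Matrix n' n' ℂ} (hK : ∀ k, N k * K = K' * N k)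
    (B : Matrix n n ℂ) : Ek N (K * B * Kᴴ) = K' * Ek N B * K'ᴴ := by
  rw [Ek, Ek, Matrix.mul_sum, Matrix.sum_mul]
  refine Finset.sum_congr rfl fun k _ => ?_
  have h2 : Kᴴ * (N k)ᴴ = (N k)ᴴ * K'ᴴ := by
    have := congrArg conjTranspose (hK k)
    simpa using this
  calc N k * (K * B * Kᴴ) * (N k)ᴴ = (N k * K) * B * (Kᴴ * (N k)ᴴ) := by
        simp only [Matrix.mul_assoc]
    _ = _ := by rw [hK, h2]; simp only [Matrix.mul_assoc]

lemma ds_col {V Y : Matrix n n ℂ} (h1 : Vᴴ * V = 1) (h2 : V * Vᴴ = 1) (hY : Yᴴ * Y = 1) (j : n) :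
    ∑ l, ‖(Vᴴ * Y) l j‖ ^ 2 = 1 := by
  have := dg_entry (dg_one h1 h2) Y j
  rw [Matrix.mul_one, hY, Matrix.one_apply_eq] at this
  simp only [mul_one] at this
  exact_mod_cast this.symm

lemma ds_row {V Y : Matrix n n ℂ} (hV : Vᴴ * V = 1) (h1 : Yᴴ * Y = 1) (h2 : Y * Yᴴ = 1) (l : n) :
    ∑ j, ‖(Vᴴ * Y) l j‖ ^ 2 = 1 := by
  rw [← ds_col h1 h2 hV l]
  refine Finset.sum_congr rfl fun j _ => ?_
  have : Vᴴ * Y = (Yᴴ * V)ᴴ := by simp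
  rw [this, conjTranspose_apply, norm_star]

lemma conj_shift (K : Matrix n n ℂ) (B : Matrix n n ℂ) (V : Matrix n m ℂ) :
    (Kᴴ * V)ᴴ * B * (Kᴴ * V) = Vᴴ * (K * B * Kᴴ) * V := by
  simp [Matrix.mul_assoc]

lemma core_J_lt (N : κ → Matrix n' n ℂ) (hN2 : (1 - ∑ k, N k * (N k)ᴴ).PosSemidef)
    {K : Matrix n n ℂ} {K' : Matrix n' n' ℂ} (hK : ∀ k, N k * K = K' * N k)
    {A U : Matrix n n ℂ} {a : n → ℝ} (h : Dg A U a) (ha : ∀ i, 0 ≤ a i)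
    {U' : Matrix n' n' ℂ} {a' : n' → ℝ} (h' : Dg (Ek N A) U' a') (ha' : ∀ i, 0 ≤ a' i)
    (p : ℝ) {V : Matrix n n ℂ} {x : n → ℝ} (hX : Dg (K * dpow U a p * Kᴴ) V x)
    (Y : Matrix n' n' ℂ) (j : n') (hp : 0 < p) (hp1 : p ≤ 1) :
    ∑ i, wt N V Y i j * x i ≤ ((Yᴴ * (K' * dpow U' a' p * K'ᴴ) * Y) j j).re := by
  have := J_lt N hN2 h ha h' ha' (K'ᴴ * Y) j p hp hp1
  rw [conj_shift, conj_shift, ← Ek_conj N hK, wt_entry N hX Y j, Complex.ofReal_re] at this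
  exact this

lemma core_J_gt (N : κ → Matrix n' n ℂ) (hN2 : (1 - ∑ k, N k * (N k)ᴴ).PosSemidef)
    {K : Matrix n n ℂ} {K' : Matrix n' n' ℂ} (hK : ∀ k, N k * K = K' * N k)
    {A U : Matrix n n ℂ} {a : n → ℝ} (h : Dg A U a) (ha : ∀ i, 0 ≤ a i)
    {U' : Matrix n' n' ℂ} {a' : n' → ℝ} (h' : Dg (Ek N A) U' a') (ha' : ∀ i, 0 ≤ a' i)
    (p : ℝ) {V : Matrix n n ℂ} {x : n → ℝ} (hX : Dg (K * dpow U a p * Kᴴ) V x)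
    (Y : Matrix n' n' ℂ) (j : n') (hp : 1 ≤ p) (hp1 : p ≤ 2) :
    ((Yᴴ * (K' * dpow U' a' p * K'ᴴ) * Y) j j).re ≤ ∑ i, wt N V Y i j * x i := by
  have := J_gt N hN2 h ha h' ha' (K'ᴴ * Y) j p hp hp1
  rw [conj_shift, conj_shift, ← Ek_conj N hK, wt_entry N hX Y j, Complex.ofReal_re] at this
  exact this

lemma trace_jensen (N : κ → Matrix n' n ℂ) (hN1 : ∑ k, (N k)ᴴ * N k = 1)
    (hN2 : (1 - ∑ k, N k * (N k)ᴴ).PosSemidef)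
    {B V : Matrix n n ℂ} {b : n → ℝ} (hB : Dg B V b) (hb : ∀ i, 0 ≤ b i)
    {V' : Matrix n' n' ℂ} {b' : n' → ℝ} (hB' : Dg (Ek N B) V' b') (hb' : ∀ i, 0 ≤ b' i)
    (r : ℝ) (hr : 1 ≤ r) : ∑ j, b' j ^ r ≤ ∑ i, b i ^ r := by
  refine sumJensen_ge (wt N V V') b b' (wt_nonneg N V V') (wt_col N hN2 hB.u1 hB.u2 hB'.u1)
    (wt_row N hN1 hB.u1 hB'.u1 hB'.u2) hb hb' r hr ?_
  intro j
  have := wt_entry N hB V' j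
  rw [dg_diag hB'] at this
  exact (Complex.ofReal_injective this).le

lemma prod_sum_rw {U K V : Matrix n n ℂ} (a b : n → ℝ) {p q : ℝ} {A : Matrix n n ℂ} (h : Dg A U a) :
    ∑ q' : n × n, ‖(Uᴴ * Kᴴ * V) q'.1 q'.2‖ ^ 2 * (a q'.1 ^ p * b q'.2 ^ q) =
      ∑ j, ((Vᴴ * (K * dpow U a p * Kᴴ) * V) j j).re * b j ^ q := by
  rw [Fintype.sum_prod_type, Finset.sum_comm]
  refine Finset.sum_congr rfl fun j _ => ?_
  rw [← conj_shift, dg_entry (dpow_dg h p), Complex.ofReal_re, Finset.sum_mul]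
  refine Finset.sum_congr rfl fun i _ => ?_
  rw [← Matrix.mul_assoc]
  ring

theorem core_lt (N : κ → Matrix n' n ℂ) (hN1 : ∑ k, (N k)ᴴ * N k = 1)
    (hN2 : (1 - ∑ k, N k * (N k)ᴴ).PosSemidef)
    {K : Matrix n n ℂ} {K' : Matrix n' n' ℂ} (hK : ∀ k, N k * K = K' * N k)
    (hKh : ∀ k, N k * Kᴴ = K'ᴴ * N k)
    {A U : Matrix n n ℂ} {a : n → ℝ} (h : Dg A U a) (ha : ∀ i, 0 ≤ a i)
    {U' : Matrix n' n' ℂ} {a' : n' → ℝ} (h' : Dg (Ek N A) U' a') (ha' : ∀ i, 0 ≤ a' i)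
    (p z : ℝ) (hp : 0 < p) (hp1 : p ≤ 1) (hz : 0 < z) (hpz : p * z ≤ 1)
    {V : Matrix n n ℂ} {x : n → ℝ} (hX : Dg (K * dpow U a p * Kᴴ) V x) (hx : ∀ i, 0 ≤ x i)
    {V' : Matrix n' n' ℂ} {x' : n' → ℝ} (hX' : Dg (K' * dpow U' a' p * K'ᴴ) V' x')
    (hx' : ∀ i, 0 ≤ x' i) :
    ∑ i, x i ^ z ≤ ∑ j, x' j ^ z := by
  rcases le_or_gt z 1 with hz1 | hz1
  · refine sumJensen_le (wt N V V') x x' (wt_nonneg N V V') (wt_col N hN2 hX.u1 hX.u2 hX'.u1)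
      (wt_row N hN1 hX.u1 hX'.u1 hX'.u2) hx z hz hz1 ?_
    intro j
    have := core_J_lt N hN2 hK h ha h' ha' p hX V' j hp hp1
    rwa [dg_diag hX', Complex.ofReal_re] at this
  · have hp1 : p < 1 := by nlinarith
    set t := (z - 1) / (1 - p) with ht
    set b : n → ℝ := fun i => x i ^ t with hb
    have hb0 : ∀ i, 0 ≤ b i := fun i => Real.rpow_nonneg (hx i) _
    have hB := dpow_dg hX t
    change Dg _ _ b at hB
    obtain ⟨Y, b', hB'⟩ := exists_dg (Ek_psd N (dg_psd hB hb0)).isHermitian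
    have hb' := dg_nonneg hB' (Ek_psd N (dg_psd hB hb0))
    have hL := sl_lt (fun q : n × n => a q.1) (fun q => b q.2)
      (fun q => ‖(Uᴴ * Kᴴ * V) q.1 q.2‖ ^ 2) (fun q : n' × n' => a' q.1) (fun q => b' q.2)
      (fun q => ‖(U'ᴴ * K'ᴴ * Y) q.1 q.2‖ ^ 2) (fun _ => ha _) (fun _ => hb0 _) (fun _ => ha' _)
      (fun _ => hb' _) (fun s hs => L_step N hN1 hKh h ha hB hb0 h' ha' hB' hb' s hs) p ⟨hp, hp1⟩
    rw [prod_sum_rw a b h, prod_sum_rw a' b' h'] at hL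
    have e1 : ∀ j, ((Vᴴ * (K * dpow U a p * Kᴴ) * V) j j).re * b j ^ (1 - p) = x j ^ z := by
      intro j
      rw [dg_diag hX, Complex.ofReal_re, hb]
      simp only
      have : t * (1 - p) = z - 1 := by rw [ht]; field_simp [(by linarith : (1 - p) ≠ 0)]
      rw [← Real.rpow_mul (hx j), this]
      rcases (hx j).eq_or_lt with h0 | h0
      · rw [← h0, Real.zero_rpow hz.ne', zero_mul]
      · rw [Real.rpow_sub h0, Real.rpow_one]; field_simp
    rw [Finset.sum_congr rfl (fun j _ => e1 j)] at hL
    set r := (1 - p) * (z / (z - 1)) with hr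
    have hz1' : 0 < z - 1 := by linarith
    have hr1 : 1 ≤ r := by
      rw [hr, ← mul_div_assoc, le_div_iff₀ hz1']; nlinarith
    have hTJ := trace_jensen N hN1 hN2 hB hb0 hB' hb' r hr1
    have e2 : ∀ i, b i ^ r = x i ^ z := by
      intro i
      simp only [hb]
      rw [← Real.rpow_mul (hx i)]
      congr 1
      rw [ht, hr]
      have : 1 - p ≠ 0 := by linarith
      field_simp
    rw [Finset.sum_congr rfl (fun j _ => e2 j)] at hTJ
    have hY : ∑ j, ((Yᴴ * (K' * dpow U' a' p * K'ᴴ) * Y) j j).re * b' j ^ (1 - p) ≤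
        (∑ l, x' l ^ z) / z + (1 - 1 / z) * ∑ j, b' j ^ r := by
      calc _ ≤ ∑ j, ∑ l, ‖(V'ᴴ * Y) l j‖ ^ 2 * (x' l ^ z / z + (1 - 1 / z) * b' j ^ r) := by
            refine Finset.sum_le_sum fun j _ => ?_
            rw [dg_entry hX', Complex.ofReal_re, Finset.sum_mul]
            refine Finset.sum_le_sum fun l _ => ?_
            rw [mul_assoc]
            refine mul_le_mul_of_nonneg_left ?_ (by positivity)
            have := Real.young_inequality_of_nonneg (hx' l) (Real.rpow_nonneg (hb' j) (1 - p))
              (Real.HolderConjugate.conjExponent hz1)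
            rw [Real.conjExponent, ← Real.rpow_mul (hb' j), ← hr] at this
            have e3 : b' j ^ r / (z / (z - 1)) = (1 - 1 / z) * b' j ^ r := by
              field_simp
            linarith
        _ = _ := by
            simp only [mul_add, Finset.sum_add_distrib]
            congr 1
            · rw [Finset.sum_comm]
              simp only [← Finset.sum_mul, ds_row hX'.u1 hB'.u1 hB'.u2, one_mul, Finset.sum_div]
            · simp only [← Finset.sum_mul, ds_col hX'.u1 hX'.u2 hB'.u1, one_mul, Finset.mul_sum]
    have hzz : 0 < 1 - 1 / z := by
      rw [sub_pos, div_lt_one hz]; exact hz1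
    have h3 := mul_le_mul_of_nonneg_left hTJ hzz.le
    have h4 : (∑ i, x i ^ z) / z ≤ (∑ l, x' l ^ z) / z := by
      have : (∑ i, x i ^ z) / z = (∑ i, x i ^ z) - (1 - 1 / z) * (∑ i, x i ^ z) := by ring
      linarith
    exact (div_le_div_iff_of_pos_right hz).1 h4

theorem core_gt (N : κ → Matrix n' n ℂ) (hN1 : ∑ k, (N k)ᴴ * N k = 1)
    (hN2 : (1 - ∑ k, N k * (N k)ᴴ).PosSemidef)
    {K : Matrix n n ℂ} {K' : Matrix n' n' ℂ} (hK : ∀ k, N k * K = K' * N k)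
    (hKh : ∀ k, N k * Kᴴ = K'ᴴ * N k)
    {A U : Matrix n n ℂ} {a : n → ℝ} (h : Dg A U a) (ha : ∀ i, 0 ≤ a i)
    {U' : Matrix n' n' ℂ} {a' : n' → ℝ} (h' : Dg (Ek N A) U' a') (ha' : ∀ i, 0 ≤ a' i)
    (p z : ℝ) (hp : 1 ≤ p) (hp2 : p ≤ 2) (hz : 0 < z) (hpz : 1 ≤ p * z)
    {V : Matrix n n ℂ} {x : n → ℝ} (hX : Dg (K * dpow U a p * Kᴴ) V x) (hx : ∀ i, 0 ≤ x i)
    {V' : Matrix n' n' ℂ} {x' : n' → ℝ} (hX' : Dg (K' * dpow U' a' p * K'ᴴ) V' x')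
    (hx' : ∀ i, 0 ≤ x' i) :
    ∑ j, x' j ^ z ≤ ∑ i, x i ^ z := by
  rcases le_or_gt 1 z with hz1 | hz1
  · refine sumJensen_ge (wt N V V') x x' (wt_nonneg N V V') (wt_col N hN2 hX.u1 hX.u2 hX'.u1)
      (wt_row N hN1 hX.u1 hX'.u1 hX'.u2) hx hx' z hz1 ?_
    intro j
    have := core_J_gt N hN2 hK h ha h' ha' p hX V' j hp hp2
    rwa [dg_diag hX', Complex.ofReal_re] at this
  · have hp1 : 1 < p := by nlinarith
    have hp1' : 1 - p ≠ 0 := by linarith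
    have hz1' : z - 1 ≠ 0 := by linarith
    set t := (z - 1) / (1 - p) with ht
    have ht0 : 0 < t := by rw [ht]; exact div_pos_of_neg_of_neg (by linarith) (by linarith)
    set b : n → ℝ := fun i => x i ^ t with hb
    have hb0 : ∀ i, 0 ≤ b i := fun i => Real.rpow_nonneg (hx i) _
    have hbx : ∀ i, b i = 0 → x i = 0 := fun i hi => (Real.rpow_eq_zero (hx i) ht0.ne').1 hi
    have hB := dpow_dg hX t
    change Dg _ _ b at hB
    obtain ⟨Y, b', hB'⟩ := exists_dg (Ek_psd N (dg_psd hB hb0)).isHermitian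
    have hb' := dg_nonneg hB' (Ek_psd N (dg_psd hB hb0))
    have hL := sl_gt (fun q : n × n => a q.1) (fun q => b q.2)
      (fun q => ‖(Uᴴ * Kᴴ * V) q.1 q.2‖ ^ 2) (fun q : n' × n' => a' q.1) (fun q => b' q.2)
      (fun q => ‖(U'ᴴ * K'ᴴ * Y) q.1 q.2‖ ^ 2) (fun _ => ha _) (fun _ => hb0 _) (fun _ => ha' _)
      (fun _ => hb' _) (fun _ => by positivity)
      (fun s hs => L_step N hN1 hKh h ha hB hb0 h' ha' hB' hb' s hs)
      (L_lin N hN1 (K := Kᴴ) (K' := K'ᴴ) (by simpa using hK) h hX.u2 h' hB'.u2).le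
      (by
        rintro ⟨i, j⟩ hbj
        have hxj := hbx j hbj
        have e := dg_diag hX j
        rw [← conj_shift, dg_entry (dpow_dg h p), hxj] at e
        have e := Complex.ofReal_injective e
        rw [Finset.sum_eq_zero_iff_of_nonneg
          (fun i _ => mul_nonneg (by positivity) (Real.rpow_nonneg (ha i) _))] at e
        have e := e i (Finset.mem_univ i)
        simp only
        rw [Matrix.mul_assoc]
        rcases mul_eq_zero.1 e with e | e
        · rw [e, zero_mul]
        · rw [(Real.rpow_eq_zero (ha i) (by linarith)).1 e, mul_zero]) p ⟨hp1, hp2⟩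
    rw [prod_sum_rw a b h, prod_sum_rw a' b' h'] at hL
    have e1 : ∀ j, ((Vᴴ * (K * dpow U a p * Kᴴ) * V) j j).re * b j ^ (1 - p) = x j ^ z := by
      intro j
      rw [dg_diag hX, Complex.ofReal_re, hb]
      simp only
      have : t * (1 - p) = z - 1 := by rw [ht]; field_simp
      rw [← Real.rpow_mul (hx j), this]
      rcases (hx j).eq_or_lt with h0 | h0
      · rw [← h0, Real.zero_rpow hz.ne', zero_mul]
      · rw [Real.rpow_sub h0, Real.rpow_one]; field_simp
    rw [Finset.sum_congr rfl (fun j _ => e1 j)] at hL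
    set r := (1 - p) * (z / (z - 1)) with hr
    have hr1 : 1 ≤ r := by
      have : r = ((p - 1) * z) / (1 - z) := by
        rw [hr]
        have : 1 - z ≠ 0 := by linarith
        field_simp
        ring
      rw [this, le_div_iff₀ (by linarith)]; nlinarith
    have hTJ := trace_jensen N hN1 hN2 hB hb0 hB' hb' r hr1
    have e2 : ∀ i, b i ^ r = x i ^ z := by
      intro i
      simp only [hb]
      rw [← Real.rpow_mul (hx i)]
      congr 1
      rw [ht, hr]
      field_simp
    rw [Finset.sum_congr rfl (fun j _ => e2 j)] at hTJ
    have hY : (∑ l, x' l ^ z) / z + (1 - 1 / z) * ∑ j, b' j ^ r ≤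
        ∑ j, ((Yᴴ * (K' * dpow U' a' p * K'ᴴ) * Y) j j).re * b' j ^ (1 - p) := by
      calc _ = ∑ j, ∑ l, ‖(V'ᴴ * Y) l j‖ ^ 2 * (x' l ^ z / z + (1 - 1 / z) * b' j ^ r) := by
            simp only [mul_add, Finset.sum_add_distrib]
            congr 1
            · rw [Finset.sum_comm]
              simp only [← Finset.sum_mul, ds_row hX'.u1 hB'.u1 hB'.u2, one_mul, Finset.sum_div]
            · simp only [← Finset.sum_mul, ds_col hX'.u1 hX'.u2 hB'.u1, one_mul, Finset.mul_sum]
        _ ≤ _ := by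
            refine Finset.sum_le_sum fun j _ => ?_
            rw [dg_entry hX', Complex.ofReal_re, Finset.sum_mul]
            refine Finset.sum_le_sum fun l _ => ?_
            rw [mul_assoc]
            rcases (hb' j).eq_or_lt with h0 | h0
            · have hj := core_J_gt N hN2 hK h ha h' ha' p hX Y j hp hp2
              have hw := wt_entry N hB Y j
              rw [dg_diag hB', ← h0] at hw
              have hw := (Complex.ofReal_injective hw).symm
              rw [Finset.sum_eq_zero_iff_of_nonneg
                (fun i _ => mul_nonneg (wt_nonneg _ _ _ _ _) (hb0 i))] at hw
              have hs0 : ∑ i, wt N V Y i j * x i = 0 := by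
                refine Finset.sum_eq_zero fun i hi => ?_
                rcases mul_eq_zero.1 (hw i hi) with e | e
                · rw [e, zero_mul]
                · rw [hbx i e, mul_zero]
              rw [hs0, dg_entry hX', Complex.ofReal_re] at hj
              have hnn : ∀ l ∈ Finset.univ, 0 ≤ ‖(V'ᴴ * Y) l j‖ ^ 2 * x' l :=
                fun l _ => mul_nonneg (by positivity) (hx' l)
              have hj0 := (Finset.sum_eq_zero_iff_of_nonneg hnn).1
                (le_antisymm hj (Finset.sum_nonneg hnn)) l (Finset.mem_univ l)
              rw [← h0, Real.zero_rpow hp1', Real.zero_rpow (by linarith : r ≠ 0)]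
              rcases mul_eq_zero.1 hj0 with e | e
              · rw [e]; simp
              · rw [e, Real.zero_rpow hz.ne']; simp
            · refine mul_le_mul_of_nonneg_left ?_ (by positivity)
              have := rev_young (x' l) (b' j ^ (1 - p)) z (hx' l) (Real.rpow_pos_of_pos h0 _) hz hz1
              rwa [← Real.rpow_mul (hb' j), ← hr] at this
    have hzz : 1 - 1 / z < 0 := by
      rw [sub_neg, lt_div_iff₀ hz]; linarith
    have h3 := mul_le_mul_of_nonpos_left hTJ hzz.le
    have h4 : (∑ l, x' l ^ z) / z ≤ (∑ i, x i ^ z) / z := by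
      have : (∑ i, x i ^ z) / z = (∑ i, x i ^ z) - (1 - 1 / z) * (∑ i, x i ^ z) := by ring
      linarith
    exact (div_le_div_iff_of_pos_right hz).1 h4

end
section
variable {n m : Type*} [Fintype n] [DecidableEq n] [Fintype m] [DecidableEq m]

noncomputable def pw (x t : ℝ) : ℝ := if 0 < x then x ^ t else 0

lemma pw_nonneg (x t : ℝ) : 0 ≤ pw x t := by
  unfold pw; split_ifs with h
  · exact Real.rpow_nonneg h.le _
  · exact le_rfl

lemma pw_eq {x t : ℝ} (hx : 0 ≤ x) (ht : t ≠ 0) : pw x t = x ^ t := by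
  unfold pw; split_ifs with h
  · rfl
  · have : x = 0 := le_antisymm (not_lt.1 h) hx
    rw [this, Real.zero_rpow ht]

lemma matPow_dg {M : Matrix n n ℂ} (hM : M.IsHermitian) :
    ∃ U a, Dg M U a ∧ a = hM.eigenvalues ∧ ∀ t, Dg (matPow M t) U (fun i => pw (a i) t) := by
  have h : Dg M hM.eigenvectorUnitary hM.eigenvalues := by
    refine ⟨?_, ?_, ?_⟩
    · exact (Unitary.mem_iff.1 hM.eigenvectorUnitary.2).1
    · exact (Unitary.mem_iff.1 hM.eigenvectorUnitary.2).2
    · have := hM.spectral_theorem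
      rw [Unitary.conjStarAlgAut_apply] at this
      exact this
  refine ⟨_, _, h, rfl, fun t => ⟨h.u1, h.u2, ?_⟩⟩
  rw [matPow, dif_pos hM]
  rfl

lemma matPow_psd (M : Matrix n n ℂ) (t : ℝ) : (matPow M t).PosSemidef := by
  by_cases hM : M.IsHermitian
  · obtain ⟨U, a, _, _, h⟩ := matPow_dg hM
    exact dg_psd (h t) fun i => pw_nonneg _ _
  · rw [matPow, dif_neg hM]; exact PosSemidef.zero

lemma dg_tr {A U : Matrix n n ℂ} {a : n → ℝ} (h : Dg A U a) : A.trace = ((∑ i, a i : ℝ) : ℂ) := by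
  rw [h.eq, Matrix.trace_mul_comm, ← Matrix.mul_assoc, h.u1, Matrix.one_mul, Matrix.trace_diagonal]
  push_cast; rfl

lemma dg_mul {A B U : Matrix n n ℂ} {a b : n → ℝ} (h : Dg A U a) (h' : Dg B U b) :
    Dg (A * B) U (fun i => a i * b i) := by
  refine ⟨h.u1, h.u2, ?_⟩
  rw [h.eq, h'.eq]
  calc _ = U * diagonal (fun i => (a i : ℂ)) * (Uᴴ * U) * diagonal (fun i => (b i : ℂ)) * Uᴴ := by
        simp only [Matrix.mul_assoc]
    _ = _ := by
      rw [h.u1, Matrix.mul_one, Matrix.mul_assoc U, diagonal_mul_diagonal]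
      push_cast; rfl

lemma exists_fac {Y : Matrix n n ℂ} (hY : Y.PosSemidef) : ∃ y : Matrix n n ℂ, Y = yᴴ * y := by
  obtain ⟨U, a, h⟩ := exists_dg hY.isHermitian
  have ha := dg_nonneg h hY
  refine ⟨dpow U a (1/2), ?_⟩
  have h1 := dpow_dg h (1/2)
  have h2 := (dg_psd h1 fun i => Real.rpow_nonneg (ha i) _).isHermitian
  rw [h2.eq, (dg_mul h1 h1).eq, h.eq]
  have : ∀ i, a i ^ (1/2:ℝ) * a i ^ (1/2:ℝ) = a i := by
    intro i; rw [← Real.sqrt_eq_rpow, Real.mul_self_sqrt (ha i)]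
  simp only [this]

lemma tr_matPow_comm (W : Matrix n n ℂ) {t : ℝ} (ht : t ≠ 0) :
    ∃ V x, Dg (W * Wᴴ) V x ∧ (∀ i, 0 ≤ x i) ∧
      (matPow (Wᴴ * W) t).trace.re = ∑ i, x i ^ t := by
  have p1 := posSemidef_self_mul_conjTranspose W
  have p2 := posSemidef_conjTranspose_mul_self W
  obtain ⟨V, x, h, hx, _⟩ := matPow_dg p1.isHermitian
  obtain ⟨V', x', h', hx', hp⟩ := matPow_dg p2.isHermitian
  have n1 := dg_nonneg h p1
  have n2 := dg_nonneg h' p2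
  refine ⟨V, x, h, n1, ?_⟩
  rw [dg_tr (hp t), Complex.ofReal_re]
  have e1 := p1.isHermitian.roots_charpoly_eq_eigenvalues
  have e2 := p2.isHermitian.roots_charpoly_eq_eigenvalues
  rw [Matrix.charpoly_mul_comm, e2] at e1
  rw [← hx, ← hx'] at e1
  have e3 := congrArg (fun s => (Multiset.map (fun c : ℂ => c.re ^ t) s).sum) e1
  simp only [Multiset.map_map] at e3
  have e4 : ∑ i, x' i ^ t = ∑ i, x i ^ t := by
    exact e3
  rw [← e4]
  exact Finset.sum_congr rfl fun i _ => pw_eq (n2 i) ht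

end

section
variable {mA mB : Type*} [Fintype mA] [DecidableEq mA] [Fintype mB] [DecidableEq mB]

/-- middle operator -/
noncomputable def Ymid (α z lam : ℝ) (ρB τ : Matrix mB mB ℂ) : Matrix mB mB ℂ :=
  matPow ρB ((1 - lam) * (1 - α) / (2 * z)) * matPow τ (lam * (1 - α) / z) *
    matPow ρB ((1 - lam) * (1 - α) / (2 * z))

lemma Ymid_psd (α z lam : ℝ) (ρB τ : Matrix mB mB ℂ) : (Ymid α z lam ρB τ).PosSemidef := by
  have h := (matPow_psd τ (lam * (1 - α) / z)).mul_mul_conjTranspose_same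
    (matPow ρB ((1 - lam) * (1 - α) / (2 * z)))
  rwa [(matPow_psd ρB _).isHermitian.eq] at h

lemma Q_rep {α z : ℝ} (lam : ℝ) (hα : 0 < α) (hz : 0 < z) {ρ : Matrix (mA × mB) (mA × mB) ℂ}
    (hρ : ρ.PosSemidef) : ∃ U a, Dg ρ U a ∧ (∀ i, 0 ≤ a i) ∧ ∀ τ y : Matrix mB mB ℂ,
      Ymid α z lam (ptraceFst ρ) τ = yᴴ * y → ∃ V x,
        Dg (((1 : Matrix mA mA ℂ) ⊗ₖ y) * dpow U a (α / z) * ((1 : Matrix mA mA ℂ) ⊗ₖ y)ᴴ) V x ∧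
        (∀ i, 0 ≤ x i) ∧ Qfun α z lam ρ τ = ∑ i, x i ^ z := by
  obtain ⟨U, a, h, _, hp⟩ := matPow_dg hρ.isHermitian
  have ha := dg_nonneg h hρ
  refine ⟨U, a, h, ha, fun τ y hy => ?_⟩
  set R := matPow ρ (α / (2 * z)) with hR
  have hRh : Rᴴ = R := (matPow_psd ρ _).isHermitian.eq
  obtain ⟨V, x, hV, hx, hs⟩ := tr_matPow_comm (((1 : Matrix mA mA ℂ) ⊗ₖ y) * R) hz.ne'
  refine ⟨V, x, ?_, hx, ?_⟩
  · have e : dpow U a (α / z) = R * R := by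
      rw [(dg_mul (hp (α / (2 * z))) (hp (α / (2 * z)))).eq, dpow]
      have : ∀ i, pw (a i) (α / (2 * z)) * pw (a i) (α / (2 * z)) = a i ^ (α / z) := by
        intro i
        rw [← pw_eq (ha i) (by positivity)]
        unfold pw
        split_ifs with h0
        · rw [← Real.rpow_add h0]; congr 1; field_simp; ring
        · simp
      simp only [this]
    convert hV using 1
    rw [e, conjTranspose_mul, hRh]
    simp only [Matrix.mul_assoc]
  · rw [← hs, Qfun]
    congr 3
    rw [conjTranspose_mul, hRh, conjTranspose_kronecker, conjTranspose_one]
    change R * ((1 : Matrix mA mA ℂ) ⊗ₖ Ymid α z lam (ptraceFst ρ) τ) * R = _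
    rw [hy]
    have : (1 : Matrix mA mA ℂ) ⊗ₖ (yᴴ * y) = ((1 : Matrix mA mA ℂ) ⊗ₖ yᴴ) * ((1 : Matrix mA mA ℂ) ⊗ₖ y) := by
      rw [← mul_kronecker_mul, Matrix.one_mul]
    rw [this]
    simp only [Matrix.mul_assoc]

lemma ptr_psd {ρ : Matrix (mA × mB) (mA × mB) ℂ} (hρ : ρ.PosSemidef) : (ptraceFst ρ).PosSemidef := by
  have : ptraceFst ρ = ∑ i, ρ.submatrix (fun j => (i, j)) (fun j => (i, j)) := by
    ext j j'
    simp [ptraceFst, Matrix.sum_apply]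
  rw [this]
  exact posSemidef_sum _ fun i _ => hρ.submatrix _

lemma ptr_trace (ρ : Matrix (mA × mB) (mA × mB) ℂ) (Y : Matrix mB mB ℂ) :
    (ρ * ((1 : Matrix mA mA ℂ) ⊗ₖ Y)).trace = (ptraceFst ρ * Y).trace := by
  simp only [Matrix.trace, Matrix.diag, Matrix.mul_apply, ptraceFst, Matrix.of_apply,
    Fintype.sum_prod_type, kroneckerMap_apply, Matrix.one_apply, ite_mul, one_mul, zero_mul,
    mul_ite, mul_zero, Finset.sum_mul]
  rw [Finset.sum_comm]
  refine Finset.sum_congr rfl fun j _ => ?_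
  rw [Finset.sum_comm (s := Finset.univ) (t := Finset.univ) (γ := mB)]
  refine Finset.sum_congr rfl fun i _ => ?_
  rw [Finset.sum_comm]
  refine Finset.sum_congr rfl fun j' _ => ?_
  simp

lemma ptr_density {ρ : Matrix (mA × mB) (mA × mB) ℂ} (hρ : IsDensity ρ) : IsDensity (ptraceFst ρ) := by
  refine ⟨ptr_psd hρ.1, ?_⟩
  have := ptr_trace ρ 1
  rw [one_kronecker_one, Matrix.mul_one, Matrix.mul_one, hρ.2] at this
  exact this.symm

end

lemma fin_low {ι : Type*} [Fintype ι] (f : ι → ℝ) (hf : ∀ i, 0 < f i) : ∃ c > 0, ∀ i, c ≤ f i := by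
  have h0 : 0 ≤ ∑ i, (f i)⁻¹ := Finset.sum_nonneg fun i _ => (inv_pos.2 (hf i)).le
  refine ⟨(1 + ∑ i, (f i)⁻¹)⁻¹, by positivity, fun i => ?_⟩
  have h1 : (f i)⁻¹ ≤ ∑ i, (f i)⁻¹ :=
    Finset.single_le_sum (f := fun i => (f i)⁻¹) (fun i _ => (inv_pos.2 (hf i)).le) (Finset.mem_univ i)
  rw [inv_le_comm₀ (by positivity) (hf i)]
  linarith

lemma fin_high {ι : Type*} [Fintype ι] (f : ι → ℝ) (hf : ∀ i, 0 < f i) : ∃ c > 0, ∀ i, f i ≤ c := by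
  have h0 : 0 ≤ ∑ i, f i := Finset.sum_nonneg fun i _ => (hf i).le
  refine ⟨1 + ∑ i, f i, by positivity, fun i => ?_⟩
  have h1 : f i ≤ ∑ i, f i :=
    Finset.single_le_sum (fun i _ => (hf i).le) (Finset.mem_univ i)
  linarith

lemma sum_rpow_up {ι : Type*} [Fintype ι] (x : ι → ℝ) (hx : ∀ i, 0 ≤ x i) {z : ℝ} (hz : 0 < z) :
    ∑ i, x i ^ z ≤ Fintype.card ι * (∑ i, x i) ^ z := by
  have : ∀ i ∈ Finset.univ, x i ^ z ≤ (∑ i, x i) ^ z := fun i _ =>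
    Real.rpow_le_rpow (hx i) (Finset.single_le_sum (fun i _ => hx i) (Finset.mem_univ i)) hz.le
  simpa using Finset.sum_le_card_nsmul _ _ _ this

lemma sum_rpow_low {ι : Type*} [Fintype ι] [Nonempty ι] (x : ι → ℝ) (hx : ∀ i, 0 ≤ x i) {z : ℝ}
    (hz : 0 < z) : ((∑ i, x i) / Fintype.card ι) ^ z ≤ ∑ i, x i ^ z := by
  have hc : (0:ℝ) < Fintype.card ι := by exact_mod_cast Fintype.card_pos
  obtain ⟨i, -, hi⟩ := Finset.exists_le_of_sum_le (s := Finset.univ)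
    (f := fun _ : ι => (∑ i, x i) / Fintype.card ι) (g := x) Finset.univ_nonempty (by
      simp; field_simp; exact le_rfl)
  calc _ ≤ x i ^ z := Real.rpow_le_rpow (div_nonneg (Finset.sum_nonneg fun i _ => hx i) hc.le) hi hz.le
    _ ≤ _ := Finset.single_le_sum (f := fun i => x i ^ z) (fun i _ => Real.rpow_nonneg (hx i) _)
        (Finset.mem_univ i)

section
variable {mA mB : Type*} [Fintype mA] [DecidableEq mA] [Fintype mB] [DecidableEq mB]

lemma Q_nonneg {α z : ℝ} (lam : ℝ) (hα : 0 < α) (hz : 0 < z) {ρ : Matrix (mA × mB) (mA × mB) ℂ}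
    (hρ : ρ.PosSemidef) (τ : Matrix mB mB ℂ) : 0 ≤ Qfun α z lam ρ τ := by
  obtain ⟨U, a, h, ha, hr⟩ := Q_rep lam hα hz hρ
  obtain ⟨y, hy⟩ := exists_fac (Ymid_psd α z lam (ptraceFst ρ) τ)
  obtain ⟨V, x, hV, hx, hQ⟩ := hr τ y hy
  rw [hQ]
  exact Finset.sum_nonneg fun i _ => Real.rpow_nonneg (hx i) _

lemma Q_bounds {α z : ℝ} (lam : ℝ) (hα : 0 < α) (hz : 0 < z) {ρ : Matrix (mA × mB) (mA × mB) ℂ}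
    (hρ : IsDensity ρ) : ∃ c > 0, ∃ C > 0, ∀ τ : Matrix mB mB ℂ,
      0 ≤ (ptraceFst ρ * Ymid α z lam (ptraceFst ρ) τ).trace.re ∧
      c * (ptraceFst ρ * Ymid α z lam (ptraceFst ρ) τ).trace.re ^ z ≤ Qfun α z lam ρ τ ∧
      Qfun α z lam ρ τ ≤ C * (ptraceFst ρ * Ymid α z lam (ptraceFst ρ) τ).trace.re ^ z := by
  obtain ⟨U, a, h, ha, hr⟩ := Q_rep lam hα hz hρ.1
  have hne : Nonempty (mA × mB) := by
    by_contra hn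
    rw [not_nonempty_iff] at hn
    have := hρ.2
    simp [Matrix.trace] at this
  have hN : (0:ℝ) < Fintype.card (mA × mB) := by exact_mod_cast Fintype.card_pos
  set f : mA × mB → ℝ := fun i => if 0 < a i then a i ^ (α / z - 1) else 1 with hf
  have hf0 : ∀ i, 0 < f i := by
    intro i; rw [hf]; dsimp only; split_ifs with h0
    · exact Real.rpow_pos_of_pos h0 _
    · exact one_pos
  have hfa : ∀ i, a i ^ (α / z) = f i * a i := by
    intro i; rw [hf]; dsimp only; split_ifs with h0
    · rw [Real.rpow_sub_one h0.ne']; field_simp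
    · have : a i = 0 := le_antisymm (not_lt.1 h0) (ha i)
      rw [this, Real.zero_rpow (by positivity)]; simp
  obtain ⟨c, hc, hcf⟩ := fin_low f hf0
  obtain ⟨C, hC, hCf⟩ := fin_high f hf0
  refine ⟨(c / Fintype.card (mA × mB)) ^ z, by positivity, Fintype.card (mA × mB) * C ^ z,
    by positivity, fun τ => ?_⟩
  obtain ⟨y, hy⟩ := exists_fac (Ymid_psd α z lam (ptraceFst ρ) τ)
  obtain ⟨V, x, hV, hx, hQ⟩ := hr τ y hy
  rw [hQ]
  set q := (ptraceFst ρ * Ymid α z lam (ptraceFst ρ) τ).trace.re with hq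
  set K := (1 : Matrix mA mA ℂ) ⊗ₖ y with hK
  have hKK : Kᴴ * K = (1 : Matrix mA mA ℂ) ⊗ₖ (Ymid α z lam (ptraceFst ρ) τ) := by
    rw [hy, hK, conjTranspose_kronecker, conjTranspose_one, ← mul_kronecker_mul, Matrix.one_mul]
  have t1 := dg_trace h Kᴴ (1 : Matrix (mA × mB) (mA × mB) ℂ) (by simp)
  have t2 := dg_trace (dpow_dg h (α / z)) Kᴴ (1 : Matrix (mA × mB) (mA × mB) ℂ) (by simp)
  have t3 : (Kᴴᴴ * ρ * Kᴴ).trace = (ptraceFst ρ * Ymid α z lam (ptraceFst ρ) τ).trace := by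
    rw [← ptr_trace, ← hKK, conjTranspose_conjTranspose, Matrix.trace_mul_cycle, Matrix.trace_mul_comm]
  rw [conjTranspose_conjTranspose, dg_tr hV] at t2
  rw [t3] at t1
  have t1' := congrArg Complex.re t1
  rw [Complex.ofReal_re, ← hq] at t1'
  have t2' := Complex.ofReal_injective t2
  have hq0 : 0 ≤ q := by
    rw [t1']
    exact Finset.sum_nonneg fun i _ => Finset.sum_nonneg fun j _ => mul_nonneg (by positivity) (ha i)
  have l1 : c * q ≤ ∑ i, x i := by
    rw [t1', t2', Finset.mul_sum]
    refine Finset.sum_le_sum fun i _ => ?_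
    rw [Finset.mul_sum]
    refine Finset.sum_le_sum fun j _ => ?_
    rw [hfa, mul_left_comm]
    exact mul_le_mul_of_nonneg_left (mul_le_mul_of_nonneg_right (hcf i) (ha i)) (by positivity)
  have l2 : ∑ i, x i ≤ C * q := by
    rw [t1', t2', Finset.mul_sum]
    refine Finset.sum_le_sum fun i _ => ?_
    rw [Finset.mul_sum]
    refine Finset.sum_le_sum fun j _ => ?_
    rw [hfa, mul_left_comm C]
    exact mul_le_mul_of_nonneg_left (mul_le_mul_of_nonneg_right (hCf i) (ha i)) (by positivity)
  have hsx : 0 ≤ ∑ i, x i := Finset.sum_nonneg fun i _ => hx i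
  refine ⟨hq0, ?_, ?_⟩
  · rw [← Real.mul_rpow (by positivity) hq0]
    refine le_trans (Real.rpow_le_rpow (by positivity) ?_ hz.le) (sum_rpow_low x hx hz)
    rw [div_mul_eq_mul_div]
    gcongr
  · rw [mul_assoc, ← Real.mul_rpow hC.le hq0]
    refine (sum_rpow_up x hx hz).trans ?_
    gcongr

lemma dens_eig {τ U : Matrix mB mB ℂ} {t : mB → ℝ} (h : Dg τ U t) (hτ : IsDensity τ) :
    (∀ i, 0 ≤ t i) ∧ (∀ i, t i ≤ 1) ∧ ∃ i, 0 < t i := by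
  have h0 := dg_nonneg h hτ.1
  have hs : ∑ i, t i = 1 := by
    have := dg_tr h
    rw [hτ.2] at this
    exact_mod_cast this.symm
  refine ⟨h0, fun i => ?_, ?_⟩
  · rw [← hs]; exact Finset.single_le_sum (fun i _ => h0 i) (Finset.mem_univ i)
  · by_contra hn
    push Not at hn
    have := Finset.sum_nonpos (s := Finset.univ) fun i _ => hn i
    linarith

/-- upper bound for nonnegative exponent -/
lemma q_up {α z lam : ℝ} (hz : 0 < z) (hs : 0 ≤ lam * (1 - α)) {r : Matrix mB mB ℂ} (hr : r.PosSemidef) :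
    ∃ C, ∀ τ, IsDensity τ → (r * Ymid α z lam r τ).trace.re ≤ C := by
  obtain ⟨w, hw⟩ := exists_fac hr
  set P := matPow r ((1 - lam) * (1 - α) / (2 * z)) with hP
  have hPh : Pᴴ = P := (matPow_psd _ _).isHermitian.eq
  refine ⟨((P * wᴴ)ᴴ * 1 * (P * wᴴ)).trace.re, fun τ hτ => ?_⟩
  obtain ⟨U, t, h, -, hp⟩ := matPow_dg hτ.1.isHermitian
  obtain ⟨t0, t1, -⟩ := dens_eig h hτ
  have e : (r * Ymid α z lam r τ).trace
      = ((P * wᴴ)ᴴ * matPow τ (lam * (1 - α) / z) * (P * wᴴ)).trace := by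
    rw [Ymid, ← hP, conjTranspose_mul, conjTranspose_conjTranspose, hPh]
    nth_rewrite 1 [hw]
    rw [Matrix.mul_assoc, Matrix.trace_mul_comm]
    simp only [Matrix.mul_assoc]
  rw [e, dg_trace (hp _) _ 1 (by simp), dg_trace (dg_one h.u1 h.u2) _ 1 (by simp),
    Complex.ofReal_re, Complex.ofReal_re]
  refine Finset.sum_le_sum fun i _ => Finset.sum_le_sum fun j _ => ?_
  refine mul_le_mul_of_nonneg_left ?_ (by positivity)
  unfold pw; split_ifs with h0
  · exact Real.rpow_le_one (t0 i) (t1 i) (by positivity)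
  · exact zero_le_one

lemma pw_pos {x t : ℝ} (hx : 0 < x) : 0 < pw x t := by
  unfold pw; rw [if_pos hx]; exact Real.rpow_pos_of_pos hx _

lemma q_self_pos (α z lam : ℝ) {r : Matrix mB mB ℂ} (hr : IsDensity r) :
    0 < (r * Ymid α z lam r r).trace.re := by
  obtain ⟨U, t, h, -, hp⟩ := matPow_dg hr.1.isHermitian
  obtain ⟨t0, t1, i, hi⟩ := dens_eig h hr
  rw [Ymid, dg_tr (dg_mul h (dg_mul (dg_mul (hp _) (hp _)) (hp _))), Complex.ofReal_re]
  refine Finset.sum_pos' (fun i _ => ?_) ⟨i, Finset.mem_univ _, ?_⟩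
  · have := pw_nonneg (t i)
    exact mul_nonneg (t0 i) (mul_nonneg (mul_nonneg (this _) (this _)) (this _))
  · exact mul_pos hi (mul_pos (mul_pos (pw_pos hi) (pw_pos hi)) (pw_pos hi))

lemma q_low {α z lam : ℝ} (hz : 0 < z) (hs : lam * (1 - α) < 0) {r U : Matrix mB mB ℂ} {a : mB → ℝ}
    (h : Dg r U a) (hp : ∀ t, Dg (matPow r t) U (fun i => pw (a i) t)) (ha : ∀ i, 0 < a i) :
    ∃ g > 0, ∀ τ, IsDensity τ → g ≤ (r * Ymid α z lam r τ).trace.re := by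
  set P := matPow r ((1 - lam) * (1 - α) / (2 * z)) with hP
  have hG := dg_mul (dg_mul (hp ((1 - lam) * (1 - α) / (2 * z))) h) (hp ((1 - lam) * (1 - α) / (2 * z)))
  rw [← hP] at hG
  obtain ⟨g, hg, hgl⟩ := fin_low _ (fun i => mul_pos (mul_pos
    (pw_pos (t := (1 - lam) * (1 - α) / (2 * z)) (ha i)) (ha i))
    (pw_pos (t := (1 - lam) * (1 - α) / (2 * z)) (ha i)))
  refine ⟨g, hg, fun τ hτ => ?_⟩
  obtain ⟨V, t, hV, -, hpt⟩ := matPow_dg hτ.1.isHermitian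
  obtain ⟨t0, t1, i, hi⟩ := dens_eig hV hτ
  obtain ⟨w, hw⟩ := exists_fac (matPow_psd τ (lam * (1 - α) / z))
  have e : (r * Ymid α z lam r τ).trace = (wᴴᴴ * (P * r * P) * wᴴ).trace := by
    rw [Ymid, ← hP, hw, conjTranspose_conjTranspose]
    rw [Matrix.trace_mul_comm (w * (P * r * P)) wᴴ]
    calc _ = ((r * P) * (wᴴ * w * P)).trace := by simp only [Matrix.mul_assoc]
      _ = _ := by rw [Matrix.trace_mul_comm]; simp only [Matrix.mul_assoc]
  have e2 : (matPow τ (lam * (1 - α) / z)).trace = (wᴴᴴ * 1 * wᴴ).trace := by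
    rw [hw, Matrix.trace_mul_comm]; simp
  rw [dg_tr (hpt _), dg_trace (dg_one h.u1 h.u2) _ 1 (by simp)] at e2
  have e2 := Complex.ofReal_injective e2
  have l : 1 ≤ ∑ i, pw (t i) (lam * (1 - α) / z) := by
    refine le_trans ?_ (Finset.single_le_sum (fun i _ => pw_nonneg _ _) (Finset.mem_univ i))
    unfold pw; rw [if_pos hi]
    exact Real.one_le_rpow_of_pos_of_le_one_of_nonpos hi (t1 i) (div_neg_of_neg_of_pos hs hz).le
  rw [e, dg_trace hG _ 1 (by simp), Complex.ofReal_re]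
  rw [e2] at l
  calc g ≤ g * _ := le_mul_of_one_le_right hg.le l
    _ ≤ _ := by
      rw [Finset.mul_sum]
      refine Finset.sum_le_sum fun i _ => ?_
      rw [Finset.mul_sum]
      refine Finset.sum_le_sum fun j _ => ?_
      rw [mul_one, mul_comm g]
      exact mul_le_mul_of_nonneg_left (hgl i) (by positivity)

lemma q_zero {α z lam : ℝ} (hz : 0 < z) (hs : lam * (1 - α) < 0) {r U : Matrix mB mB ℂ} {a : mB → ℝ}
    (h : Dg r U a) (hp : ∀ t, Dg (matPow r t) U (fun i => pw (a i) t)) (i : mB) (ha : a i = 0) :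
    ∃ τ, IsDensity τ ∧ (r * Ymid α z lam r τ).trace.re = 0 := by
  have hd := dg_mk h.u1 h.u2 (fun j => if j = i then (1:ℝ) else 0)
  set τ := U * diagonal (fun j => (((if j = i then (1:ℝ) else 0 : ℝ)) : ℂ)) * Uᴴ with hτ
  have hpsd : τ.PosSemidef := dg_psd hd fun j => by split_ifs <;> norm_num
  have hden : IsDensity τ := ⟨hpsd, by rw [dg_tr hd]; simp⟩
  refine ⟨τ, hden, ?_⟩
  obtain ⟨V, t, hV, -, hpt⟩ := matPow_dg hpsd.isHermitian
  obtain ⟨t0, t1, -⟩ := dens_eig hV hden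
  have z1 : matPow r ((1 - lam) * (1 - α) / (2 * z)) * τ = 0 := by
    rw [(dg_mul (hp _) hd).eq]
    have : (fun j => ((pw (a j) ((1 - lam) * (1 - α) / (2 * z)) * (if j = i then (1:ℝ) else 0) : ℝ) : ℂ))
        = fun _ => 0 := by
      funext j
      split_ifs with hj
      · rw [hj, ha]; simp [pw]
      · simp
    rw [this]; simp
  have z2 : ∃ B, matPow τ (lam * (1 - α) / z) = τ * B := by
    refine ⟨matPow τ (lam * (1 - α) / z - 1), ?_⟩
    · rw [(dg_mul hV (hpt (lam * (1 - α) / z - 1))).eq, (hpt _).eq]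
      congr 3
      funext j
      congr 1
      unfold pw
      split_ifs with h0
      · rw [Real.rpow_sub_one h0.ne']; field_simp
      · simp
  obtain ⟨B, hB⟩ := z2
  rw [Ymid, hB, ← Matrix.mul_assoc (matPow r _) τ, z1]
  simp

end

section
variable {mA mB : Type*} [Fintype mA] [DecidableEq mA] [Fintype mB] [DecidableEq mB]

lemma Q_bdd {α z lam : ℝ} (hα : 0 < α) (hz : 0 < z) (hs : 0 ≤ lam * (1 - α))
    {ρ : Matrix (mA × mB) (mA × mB) ℂ} (hρ : IsDensity ρ) :
    BddAbove {x | ∃ σ : Matrix mB mB ℂ, IsDensity σ ∧ x = Qfun α z lam ρ σ} := by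
  obtain ⟨c, hc, C, hC, hb⟩ := Q_bounds lam hα hz hρ
  obtain ⟨D, hD⟩ := q_up (α := α) (lam := lam) hz hs (ptr_psd hρ.1)
  refine ⟨C * D ^ z, ?_⟩
  rintro x ⟨τ, hτ, rfl⟩
  obtain ⟨h0, -, h2⟩ := hb τ
  refine h2.trans ?_
  have := hD τ hτ
  gcongr

lemma Q_self_pos {α z : ℝ} (lam : ℝ) (hα : 0 < α) (hz : 0 < z)
    {ρ : Matrix (mA × mB) (mA × mB) ℂ} (hρ : IsDensity ρ) :
    0 < Qfun α z lam ρ (ptraceFst ρ) := by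
  obtain ⟨c, hc, C, hC, hb⟩ := Q_bounds lam hα hz hρ
  obtain ⟨h0, h1, -⟩ := hb (ptraceFst ρ)
  have := q_self_pos α z lam (ptr_density hρ)
  exact lt_of_lt_of_le (by positivity) h1

lemma Qopt_pos_sup {α z lam : ℝ} (hα : 0 < α) (hz : 0 < z) (hs : 0 ≤ lam * (1 - α))
    {ρ : Matrix (mA × mB) (mA × mB) ℂ} (hρ : IsDensity ρ) : 0 < Qopt α z lam ρ := by
  rw [Qopt, if_pos hs]
  exact (Q_self_pos lam hα hz hρ).trans_le
    (le_csSup (Q_bdd hα hz hs hρ) ⟨_, ptr_density hρ, rfl⟩)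

lemma Q_bddB {α z : ℝ} (lam : ℝ) (hα : 0 < α) (hz : 0 < z)
    {ρ : Matrix (mA × mB) (mA × mB) ℂ} (hρ : IsDensity ρ) :
    BddBelow {x | ∃ σ : Matrix mB mB ℂ, IsDensity σ ∧ x = Qfun α z lam ρ σ} :=
  ⟨0, by rintro x ⟨τ, -, rfl⟩; exact Q_nonneg lam hα hz hρ.1 τ⟩

lemma Qopt_inf {α z lam : ℝ} (hα : 0 < α) (hz : 0 < z) (hs : lam * (1 - α) < 0)
    {r : Matrix mB mB ℂ} (hr : IsDensity r) :
    (∀ (mA : Type _) [Fintype mA] [DecidableEq mA] (ρ : Matrix (mA × mB) (mA × mB) ℂ),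
      IsDensity ρ → ptraceFst ρ = r → 0 < Qopt α z lam ρ) ∨
    (∃ τ, IsDensity τ ∧ (r * Ymid α z lam r τ).trace.re = 0) := by
  obtain ⟨U, a, h, -, hp⟩ := matPow_dg hr.1.isHermitian
  obtain ⟨a0, -, -⟩ := dens_eig h hr
  by_cases ha : ∀ i, 0 < a i
  · left
    intro mA _ _ ρ hρ e
    obtain ⟨c, hc, C, hC, hb⟩ := Q_bounds lam hα hz hρ
    obtain ⟨g, hg, hgl⟩ := q_low (α := α) (lam := lam) hz hs h hp ha
    rw [Qopt, if_neg (not_le.2 hs)]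
    have hcg : 0 < c * g ^ z := by positivity
    refine hcg.trans_le (le_csInf ⟨_, r, hr, rfl⟩ ?_)
    rintro x ⟨τ, hτ, rfl⟩
    refine le_trans ?_ (hb τ).2.1
    rw [e]
    have := hgl τ hτ
    gcongr
  · right
    push Not at ha
    obtain ⟨i, hi⟩ := ha
    exact q_zero hz hs h hp i (le_antisymm hi (a0 i))

lemma Qopt_zero {α z lam : ℝ} (hα : 0 < α) (hz : 0 < z) (hs : lam * (1 - α) < 0)
    {ρ : Matrix (mA × mB) (mA × mB) ℂ} (hρ : IsDensity ρ)
    {τ : Matrix mB mB ℂ} (hτ : IsDensity τ)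
    (h : (ptraceFst ρ * Ymid α z lam (ptraceFst ρ) τ).trace.re = 0) : Qopt α z lam ρ = 0 := by
  rw [Qopt, if_neg (not_le.2 hs)]
  obtain ⟨c, hc, C, hC, hb⟩ := Q_bounds lam hα hz hρ
  have h2 := (hb τ).2.2
  rw [h, Real.zero_rpow hz.ne', mul_zero] at h2
  refine le_antisymm ((csInf_le (Q_bddB lam hα hz hρ) ⟨τ, hτ, rfl⟩).trans h2) ?_
  refine le_csInf ⟨_, τ, hτ, rfl⟩ ?_
  rintro x ⟨τ, -, rfl⟩; exact Q_nonneg lam hα hz hρ.1 τ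

end

section
variable {mA mA' mB κ : Type*}
    [Fintype mA] [DecidableEq mA] [Fintype mA'] [DecidableEq mA']
    [Fintype mB] [DecidableEq mB] [Fintype κ]

lemma ptr_chan (ρ : Matrix (mA × mB) (mA × mB) ℂ) (M : κ → Matrix mA' mA ℂ)
    (hM1 : ∑ k, (M k)ᴴ * M k = (1 : Matrix mA mA ℂ)) :
    ptraceFst (∑ k, (M k ⊗ₖ (1 : Matrix mB mB ℂ)) * ρ * (M k ⊗ₖ (1 : Matrix mB mB ℂ))ᴴ)
      = ptraceFst ρ := by
  have key : ∀ Y : Matrix mB mB ℂ, (ptraceFst (∑ k, (M k ⊗ₖ (1 : Matrix mB mB ℂ)) * ρ *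
      (M k ⊗ₖ (1 : Matrix mB mB ℂ))ᴴ) * Y).trace = (ptraceFst ρ * Y).trace := by
    intro Y
    rw [← ptr_trace, ← ptr_trace, Matrix.sum_mul, Matrix.trace_sum]
    have : (1 : Matrix mA mA ℂ) ⊗ₖ Y = ∑ k, ((M k)ᴴ * M k) ⊗ₖ Y := by
      rw [← hM1]
      ext i j
      simp [Matrix.sum_apply, kroneckerMap_apply, Finset.sum_mul]
    rw [this, Matrix.mul_sum, Matrix.trace_sum]
    refine Finset.sum_congr rfl fun k _ => ?_
    have e : ((M k)ᴴ * M k) ⊗ₖ Y = (M k ⊗ₖ (1 : Matrix mB mB ℂ))ᴴ * ((1 : Matrix mA' mA' ℂ) ⊗ₖ Y) *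
        (M k ⊗ₖ (1 : Matrix mB mB ℂ)) := by
      rw [conjTranspose_kronecker, ← mul_kronecker_mul, ← mul_kronecker_mul]
      simp
    rw [e]
    set N := M k ⊗ₖ (1 : Matrix mB mB ℂ)
    calc _ = (N * (ρ * (Nᴴ * ((1 : Matrix mA' mA' ℂ) ⊗ₖ Y)))).trace := by simp only [Matrix.mul_assoc]
      _ = _ := by rw [Matrix.trace_mul_comm]; simp only [Matrix.mul_assoc]
  ext i j
  have := key (Matrix.single j i 1)
  simpa [Matrix.trace_mul_single] using this

lemma Q_mono {α z lam : ℝ} (hD : memD α z lam)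
    {ρ : Matrix (mA × mB) (mA × mB) ℂ} (hρ : IsDensity ρ)
    (M : κ → Matrix mA' mA ℂ)
    (hM1 : ∑ k, (M k)ᴴ * M k = (1 : Matrix mA mA ℂ))
    (hM2 : ((1 : Matrix mA' mA' ℂ) - ∑ k, M k * (M k)ᴴ).PosSemidef)
    {σ : Matrix (mA' × mB) (mA' × mB) ℂ}
    (hσ : σ = ∑ k, (M k ⊗ₖ (1 : Matrix mB mB ℂ)) * ρ * (M k ⊗ₖ (1 : Matrix mB mB ℂ))ᴴ)
    (hα : 0 < α) (hz : 0 < z) :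
    IsDensity σ ∧ ptraceFst σ = ptraceFst ρ ∧ ∀ τ,
      (α < 1 → Qfun α z lam ρ τ ≤ Qfun α z lam σ τ) ∧
      (1 < α → Qfun α z lam σ τ ≤ Qfun α z lam ρ τ) := by
  set N : κ → Matrix (mA' × mB) (mA × mB) ℂ := fun k => M k ⊗ₖ (1 : Matrix mB mB ℂ) with hN
  have hσE : σ = Ek N ρ := hσ
  have hpsd : σ.PosSemidef := hσE ▸ Ek_psd N hρ.1
  have hpt : ptraceFst σ = ptraceFst ρ := by rw [hσ]; exact ptr_chan ρ M hM1
  have htr : σ.trace = 1 := by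
    have h1 := ptr_trace σ 1
    rw [one_kronecker_one, Matrix.mul_one, Matrix.mul_one, hpt, (ptr_density hρ).2] at h1
    exact h1
  refine ⟨⟨hpsd, htr⟩, hpt, fun τ => ?_⟩
  have hN1 : ∑ k, (N k)ᴴ * N k = 1 := by
    have : ∀ k, (N k)ᴴ * N k = ((M k)ᴴ * M k) ⊗ₖ (1 : Matrix mB mB ℂ) := by
      intro k
      simp only [hN]
      rw [conjTranspose_kronecker, ← mul_kronecker_mul]; simp
    simp only [this]
    rw [← one_kronecker_one, ← hM1]
    ext i j
    simp [Matrix.sum_apply, kroneckerMap_apply, Finset.sum_mul]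
  have hN2 : (1 - ∑ k, N k * (N k)ᴴ).PosSemidef := by
    have h1 := hM2.kronecker (PosSemidef.one (n := mB) (R := ℂ))
    have : ∀ k, N k * (N k)ᴴ = (M k * (M k)ᴴ) ⊗ₖ (1 : Matrix mB mB ℂ) := by
      intro k
      simp only [hN]
      rw [conjTranspose_kronecker, ← mul_kronecker_mul]; simp
    have e : 1 - ∑ k, N k * (N k)ᴴ =
        ((1 : Matrix mA' mA' ℂ) - ∑ k, M k * (M k)ᴴ) ⊗ₖ (1 : Matrix mB mB ℂ) := by
      rw [Finset.sum_congr rfl fun k _ => this k, ← one_kronecker_one]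
      ext i j
      simp only [Matrix.sub_apply, Matrix.sum_apply, kroneckerMap_apply, Finset.sum_mul, sub_mul]
    rw [e]
    exact h1
  obtain ⟨U, a, h, ha, hr⟩ := Q_rep lam hα hz hρ.1
  obtain ⟨U', a', h', ha', hr'⟩ := Q_rep lam hα hz hpsd
  obtain ⟨y, hy⟩ := exists_fac (Ymid_psd α z lam (ptraceFst ρ) τ)
  obtain ⟨V, x, hV, hx, hQ⟩ := hr τ y hy
  obtain ⟨V', x', hV', hx', hQ'⟩ := hr' τ y (by rw [hpt]; exact hy)
  rw [hQ, hQ']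
  have hK : ∀ y : Matrix mB mB ℂ, ∀ k, N k * ((1 : Matrix mA mA ℂ) ⊗ₖ y) = ((1 : Matrix mA' mA' ℂ) ⊗ₖ y) * N k := by
    intro y k
    simp only [hN]
    rw [← mul_kronecker_mul, ← mul_kronecker_mul]; simp
  have hKh : ∀ k, N k * ((1 : Matrix mA mA ℂ) ⊗ₖ y)ᴴ = ((1 : Matrix mA' mA' ℂ) ⊗ₖ y)ᴴ * N k := by
    intro k
    rw [conjTranspose_kronecker, conjTranspose_kronecker, conjTranspose_one, conjTranspose_one]
    exact hK _ k
  rw [hσE] at h'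
  have hpz : α / z * z = α := by field_simp
  constructor
  · intro h1
    refine core_lt N hN1 hN2 (hK y) hKh h ha h' ha' (α / z) z (by positivity) ?_ hz
      (by rw [hpz]; exact h1.le) hV hx hV' hx'
    rw [div_le_one hz]
    rcases hD with hD | hD
    · exact hD.2.2.2.1
    · linarith [hD.1]
  · intro h1
    rcases hD with hD | hD
    · linarith [hD.2.1]
    refine core_gt N hN1 hN2 (hK y) hKh h ha h' ha' (α / z) z ?_ ?_ hz
      (by rw [hpz]; exact h1.le) hV hx hV' hx'
    · rw [le_div_iff₀ hz]; linarith [hD.2.2.1]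
    · rw [div_le_iff₀ hz]; linarith [hD.2.2.2.1]

end

/-- DPI under sub-unital channels on the first system: for `(α,z,λ) ∈ 𝒟`,
a state `ρ_AB` and a sub-unital quantum channel `{M_k}_k` in Kraus form from `H_A` to
`H_{A′}`, setting `σ_{A′B} = Σ_k (M_k ⊗ I_B) ρ_AB (M_k ⊗ I_B)†`, we have
`H^λ_{α,z}(A|B)_ρ ≤ H^λ_{α,z}(A′|B)_σ`. -/
theorem stmt11 {mA mA' mB κ : Type*}
    [Fintype mA] [DecidableEq mA] [Fintype mA'] [DecidableEq mA']
    [Fintype mB] [DecidableEq mB] [Fintype κ]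
    (α z lam : ℝ) (hD : memD α z lam)
    (ρ : Matrix (mA × mB) (mA × mB) ℂ) (hρ : IsDensity ρ)
    (M : κ → Matrix mA' mA ℂ)
    (hM1 : ∑ k, (M k)ᴴ * M k = (1 : Matrix mA mA ℂ))
    (hM2 : ((1 : Matrix mA' mA' ℂ) - ∑ k, M k * (M k)ᴴ).PosSemidef)
    (σ : Matrix (mA' × mB) (mA' × mB) ℂ)
    (hσ : σ = ∑ k, (M k ⊗ₖ (1 : Matrix mB mB ℂ)) * ρ * (M k ⊗ₖ (1 : Matrix mB mB ℂ))ᴴ) :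
    Hcond α z lam ρ ≤ Hcond α z lam σ := by
  have hα : 0 < α := by rcases hD with h | h <;> linarith [h.1]
  have hz : 0 < z := by
    rcases hD with h | h
    · linarith [h.1, h.2.2.2.1]
    · linarith [h.1, h.2.2.2.1]
  obtain ⟨hσd, hpt, hmono⟩ := Q_mono hD hρ M hM1 hM2 hσ hα hz
  have hB := ptr_density hρ
  have hcase : (0 < Qopt α z lam ρ ∧ 0 < Qopt α z lam σ) ∨
      (Qopt α z lam ρ = 0 ∧ Qopt α z lam σ = 0) := by
    rcases le_or_gt 0 (lam * (1 - α)) with hs | hs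
    · exact Or.inl ⟨Qopt_pos_sup hα hz hs hρ, Qopt_pos_sup hα hz hs hσd⟩
    · rcases Qopt_inf hα hz hs hB with h | ⟨τ, hτ, h⟩
      · rcases Qopt_inf hα hz hs hB with h' | ⟨τ, hτ, h'⟩
        · exact Or.inl ⟨h mA ρ hρ rfl, h' mA' σ hσd hpt⟩
        · exact Or.inr ⟨Qopt_zero hα hz hs hρ hτ h',
            Qopt_zero hα hz hs hσd hτ (by rw [hpt]; exact h')⟩
      · exact Or.inr ⟨Qopt_zero hα hz hs hρ hτ h,
            Qopt_zero hα hz hs hσd hτ (by rw [hpt]; exact h)⟩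
  rcases hcase with ⟨h1, h2⟩ | ⟨h1, h2⟩
  swap
  · rw [Hcond, Hcond, h1, h2]
  have hne : α < 1 ∨ 1 < α := by
    rcases hD with h | h
    · exact Or.inl h.2.1
    · exact Or.inr h.1
  rw [Hcond, Hcond]
  rcases hne with hα1 | hα1
  · have hle : Qopt α z lam ρ ≤ Qopt α z lam σ := by
      rw [Qopt, Qopt]
      split_ifs with hs
      · refine csSup_le ⟨_, _, hB, rfl⟩ ?_
        rintro x ⟨τ, hτ, rfl⟩
        exact ((hmono τ).1 hα1).trans (le_csSup (Q_bdd hα hz hs hσd) ⟨τ, hτ, rfl⟩)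
      · refine le_csInf ⟨_, _, hB, rfl⟩ ?_
        rintro x ⟨τ, hτ, rfl⟩
        exact (csInf_le (Q_bddB lam hα hz hρ) ⟨τ, hτ, rfl⟩).trans ((hmono τ).1 hα1)
    refine mul_le_mul_of_nonneg_left (Real.log_le_log h1 hle) ?_
    exact div_nonneg zero_le_one (by linarith)
  · have hle : Qopt α z lam σ ≤ Qopt α z lam ρ := by
      rw [Qopt, Qopt]
      split_ifs with hs
      · refine csSup_le ⟨_, _, hB, rfl⟩ ?_
        rintro x ⟨τ, hτ, rfl⟩
        exact ((hmono τ).2 hα1).trans (le_csSup (Q_bdd hα hz hs hρ) ⟨τ, hτ, rfl⟩)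
      · refine le_csInf ⟨_, _, hB, rfl⟩ ?_
        rintro x ⟨τ, hτ, rfl⟩
        exact (csInf_le (Q_bddB lam hα hz hσd) ⟨τ, hτ, rfl⟩).trans ((hmono τ).2 hα1)
    refine mul_le_mul_of_nonpos_left (Real.log_le_log h2 hle) ?_
    exact div_nonpos_of_nonneg_of_nonpos zero_le_one (by linarith)
end

section
/- Define the Petz (arrow down) conditional Rényi entropy by H̄^↓_α(A|B)_ρ := (1/(1−α))·log Tr[ρ_AB^α · (I_A ⊗ ρ_B^{1−α})] for a bipartite density matrix ρ_AB. Let ρ_ABC be a density matrix on H_A ⊗ H_B ⊗ H_C and let α, β, γ ∈ (0,1) ∪ (1,2] satisfy 1/(1−α) = 1/(1−β) + 1/(1−γ). If (α−1)(β−1)(γ−1) > 0, then H̄^↓_α(AB|C)_ρ ≥ H̄^↓_β(A|BC)_ρ + H̄^↓_γ(B|C)_{ρ_BC}, where H̄^↓_α(AB|C) treats H_A ⊗ H_B as the first system and H_C as the conditioning system, H̄^↓_β(A|BC) treats H_B ⊗ H_C as the conditioning system, and ρ_BC := Tr_A ρ_ABC. If (α−1)(β−1)(γ−1) < 0, the inequality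 is reversed. -/
open scoped Kronecker ComplexOrder
open Matrix

/-- The Petz (arrow down) conditional Rényi entropy
`H̄^↓_α(A|B)_ρ = (1/(1−α))·log Tr[ρ_AB^α · (I_A ⊗ ρ_B^{1−α})]`. -/
noncomputable def HPetzDown {mA mB : Type*} [Fintype mA] [DecidableEq mA]
    [Fintype mB] [DecidableEq mB] (α : ℝ)
    (ρ : Matrix (mA × mB) (mA × mB) ℂ) : ℝ :=
  (1 / (1 - α)) *
    Real.log ((Matrix.trace
      (matPow ρ α * ((1 : Matrix mA mA ℂ) ⊗ₖ matPow (ptraceFst ρ) (1 - α)))).re)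

namespace Petz

theorem rpow_mul_rpow_int {s : ℝ} (hs : s ∈ Set.Ioo (0:ℝ) 1) : ∃ C : ℝ, 0 ≤ C ∧ ∀ u v : ℝ, 0 ≤ u → 0 ≤ v →
    MeasureTheory.IntegrableOn (fun t : ℝ => t ^ (s-2) * (t*u*v/(u+t*v))) (Set.Ioi 0) ∧
    u ^ s * v ^ (1-s) = C * ∫ t in Set.Ioi (0:ℝ), t ^ (s-2) * (t*u*v/(u+t*v)) := by
  obtain ⟨hs0, hs1⟩ := hs
  refine ⟨(∫ t in Set.Ioi (0:ℝ), Real.rpowIntegrand₀₁ s t 1)⁻¹, ?_, ?_⟩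
  · exact (inv_pos.2 (Real.integral_rpowIntegrand₀₁_one_pos ⟨hs0, hs1⟩)).le
  intro u v hu hv
  rcases hv.eq_or_lt with rfl | hv
  · simp [Real.zero_rpow (by linarith : 1 - s ≠ 0)]
  have key : ∀ t ∈ Set.Ioi (0:ℝ), t ^ (s-2) * (t*u*v/(u+t*v)) = v * Real.rpowIntegrand₀₁ s t (u/v) := by
    intro t ht
    have ht : 0 < t := ht
    have h1 : t ^ (s-2) = t^s / t^2 := by
      rw [Real.rpow_sub ht]; norm_num
    have : 0 < u + t * v := by positivity
    have : 0 < t + u/v := by positivity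
    rw [Real.rpowIntegrand₀₁, h1]
    have e : t + u/v = (u+t*v)/v := by field_simp; ring
    rw [e]
    field_simp
    ring
  have hx : 0 ≤ u / v := by positivity
  constructor
  · refine MeasureTheory.IntegrableOn.congr_fun ?_ (fun t ht => (key t ht).symm) measurableSet_Ioi
    exact (Real.integrableOn_rpowIntegrand₀₁_Ioi ⟨hs0, hs1⟩ hx).const_mul v
  · rw [MeasureTheory.setIntegral_congr_fun measurableSet_Ioi key, MeasureTheory.integral_const_mul]
    have := Real.rpow_eq_const_mul_integral ⟨hs0, hs1⟩ hx
    rw [mul_left_comm, ← this, Real.div_rpow hu hv.le, Real.rpow_sub hv, Real.rpow_one]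
    field_simp

theorem int_mono {ι κ : Type*} [Fintype ι] [Fintype κ] {s : ℝ} (hs : s ∈ Set.Ioo (0:ℝ) 1)
    (u v : ι → ℝ) (u' v' : κ → ℝ) (hu : ∀ i, 0 ≤ u i) (hv : ∀ i, 0 ≤ v i)
    (hu' : ∀ i, 0 ≤ u' i) (hv' : ∀ i, 0 ≤ v' i)
    (h : ∀ t : ℝ, 0 < t → ∑ i, t * u i * v i / (u i + t * v i) ≤ ∑ j, t * u' j * v' j / (u' j + t * v' j)) :
    ∑ i, u i ^ s * v i ^ (1-s) ≤ ∑ j, u' j ^ s * v' j ^ (1-s) := by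
  obtain ⟨C, hC, H⟩ := rpow_mul_rpow_int hs
  rw [Finset.sum_congr rfl fun i _ => (H (u i) (v i) (hu i) (hv i)).2,
    Finset.sum_congr rfl fun i _ => (H (u' i) (v' i) (hu' i) (hv' i)).2,
    ← Finset.mul_sum, ← Finset.mul_sum]
  apply mul_le_mul_of_nonneg_left _ hC
  rw [← MeasureTheory.integral_finsetSum _ fun i _ => (H (u i) (v i) (hu i) (hv i)).1,
    ← MeasureTheory.integral_finsetSum _ fun i _ => (H (u' i) (v' i) (hu' i) (hv' i)).1]
  apply MeasureTheory.setIntegral_mono_on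
  · exact MeasureTheory.integrable_finsetSum _ fun i _ => (H (u i) (v i) (hu i) (hv i)).1
  · exact MeasureTheory.integrable_finsetSum _ fun i _ => (H (u' i) (v' i) (hu' i) (hv' i)).1
  · exact measurableSet_Ioi
  · intro t ht
    have ht : 0 < t := ht
    rw [← Finset.mul_sum, ← Finset.mul_sum]
    exact mul_le_mul_of_nonneg_left (h t ht) (by positivity)

theorem holder {ι : Type*} [Fintype ι] {s : ℝ} (hs : s ∈ Set.Ioo (0:ℝ) 1)
    (u v : ι → ℝ) (hu : ∀ i, 0 ≤ u i) (hv : ∀ i, 0 ≤ v i) :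
    ∑ i, u i ^ s * v i ^ (1-s) ≤ (∑ i, u i) ^ s * (∑ i, v i) ^ (1-s) := by
  obtain ⟨hs0, hs1⟩ := hs
  have h1 : 0 < 1 - s := by linarith
  have hpq : (1/s).HolderConjugate (1/(1-s)) := by
    rw [Real.holderConjugate_iff]
    refine ⟨by rw [lt_div_iff₀ hs0]; linarith, ?_⟩
    simp
  have := Real.inner_le_Lp_mul_Lq_of_nonneg Finset.univ hpq (f := fun i => u i ^ s) (g := fun i => v i ^ (1-s))
    (fun i _ => Real.rpow_nonneg (hu i) _) (fun i _ => Real.rpow_nonneg (hv i) _)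
  refine this.trans_eq ?_
  simp only [one_div, inv_inv]
  congr 2 <;> refine Finset.sum_congr rfl fun i _ => ?_
  · rw [← Real.rpow_mul (hu i), mul_inv_cancel₀ hs0.ne', Real.rpow_one]
  · rw [← Real.rpow_mul (hv i), mul_inv_cancel₀ h1.ne', Real.rpow_one]

/-- lower bound of slices -/
theorem slice_lower (t u v : ℝ) (ht : 0 < t) (hu : 0 ≤ u) (hv : 0 ≤ v) (V x : ℂ) :
    t * (u * ‖V‖^2) * (v * ‖V‖^2) / (u * ‖V‖^2 + t * (v * ‖V‖^2)) ≤ u * ‖x‖^2 + t * (v * ‖V - x‖^2) := by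
  have hR : 0 ≤ u * ‖x‖^2 + t * (v * ‖V - x‖^2) := by positivity
  rcases eq_or_ne V 0 with rfl | hV
  · simpa using hR
  have hV' : 0 < ‖V‖ := norm_pos_iff.2 hV
  have hn : ‖V‖ ≤ ‖x‖ + ‖V - x‖ := by
    have := norm_add_le x (V - x); simpa using this
  rcases (add_nonneg hu (mul_nonneg ht.le hv)).eq_or_lt with h0 | h0
  · have : u * ‖V‖^2 + t * (v * ‖V‖^2) = 0 := by
      have : u * ‖V‖^2 + t * (v * ‖V‖^2) = (u + t * v) * ‖V‖^2 := by ring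
      rw [this, ← h0]; ring
    rw [this]; simpa using hR
  have e : t * (u * ‖V‖^2) * (v * ‖V‖^2) / (u * ‖V‖^2 + t * (v * ‖V‖^2)) = t * u * v / (u + t * v) * ‖V‖^2 := by
    have : u * ‖V‖^2 + t * (v * ‖V‖^2) = (u + t * v) * ‖V‖^2 := by ring
    rw [this]; field_simp
  rw [e]
  have h2 : ‖V‖^2 ≤ (‖x‖ + ‖V - x‖)^2 := by gcongr
  refine (mul_le_mul_of_nonneg_left h2 (by positivity)).trans ?_
  rw [div_mul_eq_mul_div, div_le_iff₀ h0]
  set p := ‖x‖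
  set q := ‖V - x‖
  nlinarith [sq_nonneg (u * p - t * v * q)]

theorem slice_attained (t u v : ℝ) (ht : 0 < t) (hu : 0 ≤ u) (hv : 0 ≤ v) :
    (t * v / (u + t * v))^2 * u + t * ((1 - t * v / (u + t * v))^2 * v) = t * u * v / (u + t * v) := by
  rcases (add_nonneg hu (mul_nonneg ht.le hv)).eq_or_lt with h0 | h0
  · have hu0 : u = 0 := by nlinarith [mul_nonneg ht.le hv]
    have : v = 0 := by
      have : t * v = 0 := by nlinarith [mul_nonneg ht.le hv]
      rcases mul_eq_zero.1 this with h | h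
      · linarith
      · exact h
    subst this; subst hu0; simp
  · have : 1 - t * v / (u + t * v) = u / (u+t*v) := by field_simp; ring
    rw [this]; field_simp; ring

/-- modified power -/
noncomputable def pw (x t : ℝ) : ℝ := if 0 < x then x ^ t else 0

theorem pw_nonneg (x t : ℝ) : 0 ≤ pw x t := by
  unfold pw; split_ifs <;> positivity

theorem pw_mul (x a b : ℝ) : pw x a * pw x b = pw x (a+b) := by
  unfold pw; split_ifs with h
  · rw [Real.rpow_add h]
  · simp

theorem pw_one {x : ℝ} (hx : 0 ≤ x) : pw x 1 = x := by
  unfold pw; split_ifs with h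
  · simp
  · linarith

theorem pw_rpow (x a b : ℝ) (hb : b ≠ 0) : (pw x a) ^ b = pw x (a * b) := by
  unfold pw; split_ifs with h
  · rw [Real.rpow_mul h.le]
  · rw [Real.zero_rpow hb]

theorem pw_pos_iff (x t : ℝ) : 0 < pw x t ↔ 0 < x := by
  unfold pw; split_ifs with h
  · simp [h]; positivity
  · simp [h]

theorem pw_pw (x a b : ℝ) : pw (pw x a) b = pw x (a*b) := by
  by_cases h : 0 < x
  · have h1 := (pw_pos_iff x a).2 h
    rw [pw, if_pos h1, pw, pw, if_pos h, if_pos h, Real.rpow_mul h.le]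
  · have h1 : ¬ 0 < pw x a := fun h' => h ((pw_pos_iff x a).1 h')
    rw [pw, if_neg h1, pw, if_neg h]

end Petz
namespace Petz
set_option linter.unusedSectionVars false

variable {n m k : Type*} [Fintype n] [DecidableEq n] [Fintype m] [DecidableEq m]
  [Fintype k] [DecidableEq k]

/-- real part of trace -/
noncomputable def rt (M : Matrix n n ℂ) : ℝ := M.trace.re

/-- functional calculus in the basis U -/
noncomputable def fc (U : Matrix n n ℂ) (f : n → ℝ) : Matrix n n ℂ :=
  U * Matrix.diagonal (fun i => (f i : ℂ)) * Uᴴ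

theorem rt_comm (M : Matrix n m ℂ) (N : Matrix m n ℂ) : rt (M * N) = rt (N * M) := by
  unfold rt; rw [Matrix.trace_mul_comm]

theorem rt_add (M N : Matrix n n ℂ) : rt (M + N) = rt M + rt N := by
  unfold rt; rw [Matrix.trace_add]; rfl

theorem rt_sub (M N : Matrix n n ℂ) : rt (M - N) = rt M - rt N := by
  unfold rt; rw [Matrix.trace_sub]; rfl

theorem rt_conj (M : Matrix n n ℂ) : rt Mᴴ = rt M := by
  unfold rt; rw [Matrix.trace_conjTranspose]; simp

theorem rt_psd {M : Matrix n n ℂ} (h : M.PosSemidef) : 0 ≤ rt M := by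
  have := h.trace_nonneg
  exact (Complex.le_def.1 this).1

theorem fc_mul {U : Matrix n n ℂ} (hU : Uᴴ * U = 1) (f g : n → ℝ) :
    fc U f * fc U g = fc U (fun i => f i * g i) := by
  unfold fc
  have : U * diagonal (fun i => (f i:ℂ)) * Uᴴ * (U * diagonal (fun i => (g i:ℂ)) * Uᴴ)
      = U * diagonal (fun i => (f i:ℂ)) * (Uᴴ * U) * diagonal (fun i => (g i:ℂ)) * Uᴴ := by
    simp only [Matrix.mul_assoc]
  rw [this, hU, Matrix.mul_one, Matrix.mul_assoc U, Matrix.diagonal_mul_diagonal]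
  simp

theorem fc_one {U : Matrix n n ℂ} (hU : Uᴴ * U = 1) : fc U (fun _ => 1) = 1 := by
  unfold fc; simp [mul_eq_one_comm.1 hU]

theorem fc_add (U : Matrix n n ℂ) (f g : n → ℝ) :
    fc U f + fc U g = fc U (fun i => f i + g i) := by
  unfold fc
  rw [← Matrix.add_mul, ← Matrix.mul_add, Matrix.diagonal_add]
  simp

theorem fc_sub (U : Matrix n n ℂ) (f g : n → ℝ) :
    fc U f - fc U g = fc U (fun i => f i - g i) := by
  unfold fc
  rw [← Matrix.sub_mul, ← Matrix.mul_sub, Matrix.diagonal_sub]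
  simp

theorem fc_conj (U : Matrix n n ℂ) (f : n → ℝ) : (fc U f)ᴴ = fc U f := by
  unfold fc
  simp only [Matrix.conjTranspose_mul, Matrix.conjTranspose_conjTranspose,
    Matrix.diagonal_conjTranspose, Matrix.mul_assoc]
  congr 3
  ext i; simp

theorem fc_psd (U : Matrix n n ℂ) (f : n → ℝ) (hf : ∀ i, 0 ≤ f i) : (fc U f).PosSemidef := by
  unfold fc
  apply Matrix.PosSemidef.mul_mul_conjTranspose_same
  apply Matrix.PosSemidef.diagonal
  intro i
  simpa using hf i

theorem fc_unique {U W : Matrix n n ℂ} (hU : Uᴴ * U = 1) (hW : Wᴴ * W = 1) (e d : n → ℝ)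
    (h : fc U e = fc W d) (g : ℝ → ℝ) : fc U (fun i => g (e i)) = fc W (fun i => g (d i)) := by
  have hU' := mul_eq_one_comm.1 hU
  have hW' := mul_eq_one_comm.1 hW
  have key : ∀ (e d : n → ℝ), fc U e = fc W d ↔
      diagonal (fun i => (e i:ℂ)) * (Uᴴ * W) = (Uᴴ * W) * diagonal (fun i => (d i:ℂ)) := by
    intro e d
    unfold fc
    constructor
    · intro h
      calc diagonal (fun i => (e i:ℂ)) * (Uᴴ * W)
          = (Uᴴ * U) * diagonal (fun i => (e i:ℂ)) * (Uᴴ * W) := by rw [hU, Matrix.one_mul]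
        _ = Uᴴ * (U * diagonal (fun i => (e i:ℂ)) * Uᴴ) * W := by simp only [Matrix.mul_assoc]
        _ = Uᴴ * W * diagonal (fun i => (d i:ℂ)) * (Wᴴ * W) := by rw [h]; simp only [Matrix.mul_assoc]
        _ = _ := by rw [hW, Matrix.mul_one]
    · intro h
      calc U * diagonal (fun i => (e i:ℂ)) * Uᴴ
          = U * diagonal (fun i => (e i:ℂ)) * Uᴴ * (W * Wᴴ) := by rw [hW', Matrix.mul_one]
        _ = U * (diagonal (fun i => (e i:ℂ)) * (Uᴴ * W)) * Wᴴ := by simp only [Matrix.mul_assoc]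
        _ = (U * Uᴴ) * W * diagonal (fun i => (d i:ℂ)) * Wᴴ := by rw [h]; simp only [Matrix.mul_assoc]
        _ = _ := by rw [hU', Matrix.one_mul]
  rw [key] at h ⊢
  ext i j
  have hij := congrFun (congrFun h i) j
  rw [Matrix.diagonal_mul, Matrix.mul_diagonal] at hij ⊢
  by_cases hx : (Uᴴ * W) i j = 0
  · simp [hx]
  · have : (e i : ℂ) = d j := by
      rw [mul_comm] at hij
      exact mul_left_cancel₀ hx hij
    have : e i = d j := by exact_mod_cast this
    rw [this, mul_comm]

theorem matPow_fc {M : Matrix n n ℂ} {W : Matrix n n ℂ} (hW : Wᴴ * W = 1) (d : n → ℝ)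
    (h : M = fc W d) (t : ℝ) : matPow M t = fc W (fun i => pw (d i) t) := by
  have hM : M.IsHermitian := by rw [h]; exact fc_conj W d
  have hU : ((hM.eigenvectorUnitary : Matrix n n ℂ))ᴴ * (hM.eigenvectorUnitary : Matrix n n ℂ) = 1 := by
    have := hM.eigenvectorUnitary.2
    exact (Matrix.mem_unitaryGroup_iff'.1 this)
  have hs : M = fc (hM.eigenvectorUnitary : Matrix n n ℂ) hM.eigenvalues := by
    conv_lhs => rw [hM.spectral_theorem]
    rw [Unitary.conjStarAlgAut_apply]
    rfl
  rw [matPow, dif_pos hM]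
  exact fc_unique hU hW hM.eigenvalues d (hs ▸ h) (fun x => pw x t)

theorem psd_diag {M : Matrix n n ℂ} (hM : M.PosSemidef) : ∃ (U : Matrix n n ℂ) (d : n → ℝ),
    Uᴴ * U = 1 ∧ (∀ i, 0 ≤ d i) ∧ M = fc U d ∧ ∀ t, matPow M t = fc U (fun i => pw (d i) t) := by
  have hs : M = fc (hM.1.eigenvectorUnitary : Matrix n n ℂ) hM.1.eigenvalues := by
    conv_lhs => rw [hM.1.spectral_theorem]
    rw [Unitary.conjStarAlgAut_apply]
    rfl
  have hU : ((hM.1.eigenvectorUnitary : Matrix n n ℂ))ᴴ * (hM.1.eigenvectorUnitary : Matrix n n ℂ) = 1 :=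
    (Matrix.mem_unitaryGroup_iff'.1 hM.1.eigenvectorUnitary.2)
  exact ⟨_, _, hU, hM.eigenvalues_nonneg, hs, fun t => matPow_fc hU _ hs t⟩

theorem matPow_psd {M : Matrix n n ℂ} (hM : M.PosSemidef) (t : ℝ) : (matPow M t).PosSemidef := by
  obtain ⟨U, d, hU, hd, h, hp⟩ := psd_diag hM
  rw [hp]; exact fc_psd _ _ fun i => pw_nonneg _ _

theorem matPow_conj {M : Matrix n n ℂ} (hM : M.PosSemidef) (t : ℝ) : (matPow M t)ᴴ = matPow M t :=
  (matPow_psd hM t).1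

theorem matPow_mul {M : Matrix n n ℂ} (hM : M.PosSemidef) (s t : ℝ) :
    matPow M s * matPow M t = matPow M (s + t) := by
  obtain ⟨U, d, hU, hd, h, hp⟩ := psd_diag hM
  simp only [hp, fc_mul hU, pw_mul]

theorem matPow_mul_assoc {l : Type*} [Fintype l] {M : Matrix n n ℂ} (hM : M.PosSemidef) (s t : ℝ) (X : Matrix n l ℂ) :
    matPow M s * (matPow M t * X) = matPow M (s + t) * X := by
  rw [← Matrix.mul_assoc, matPow_mul hM]

theorem matPow_one {M : Matrix n n ℂ} (hM : M.PosSemidef) : matPow M 1 = M := by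
  obtain ⟨U, d, hU, hd, h, hp⟩ := psd_diag hM
  rw [hp]; conv_rhs => rw [h]
  congr 1; ext i; exact pw_one (hd i)

theorem matPow_matPow {M : Matrix n n ℂ} (hM : M.PosSemidef) (s t : ℝ) :
    matPow (matPow M s) t = matPow M (s * t) := by
  obtain ⟨U, d, hU, hd, h, hp⟩ := psd_diag hM
  rw [matPow_fc hU _ (hp s), hp]; simp only [pw_pw]

/-! traces -/

theorem rt_fc_diag (U : Matrix n n ℂ) (f : n → ℝ) (S : Matrix n n ℂ) :
    rt (fc U f * S) = ∑ j, f j * ((Uᴴ * S * U) j j).re := by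
  unfold fc
  rw [Matrix.mul_assoc, Matrix.mul_assoc, rt_comm, Matrix.mul_assoc, rt]
  simp only [Matrix.trace, Matrix.diag, Matrix.diagonal_mul, Complex.re_sum, Complex.re_ofReal_mul]

theorem rt_fc_fc (U : Matrix m m ℂ) (W : Matrix k k ℂ) (f : m → ℝ) (g : k → ℝ) (X : Matrix m k ℂ) :
    rt (fc U f * X * fc W g * Xᴴ) = ∑ p : m × k, f p.1 * g p.2 * ‖(Uᴴ * X * W) p.1 p.2‖^2 := by
  have : fc U f * X * fc W g * Xᴴ = fc U f * (X * fc W g * Xᴴ) := by simp only [Matrix.mul_assoc]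
  rw [this, rt_fc_diag, Fintype.sum_prod_type]
  refine Finset.sum_congr rfl fun i _ => ?_
  have e : Uᴴ * (X * fc W g * Xᴴ) * U = (Uᴴ * X * W) * diagonal (fun i => (g i : ℂ)) * (Uᴴ * X * W)ᴴ := by
    unfold fc
    simp only [Matrix.conjTranspose_mul, Matrix.conjTranspose_conjTranspose, Matrix.mul_assoc]
  rw [e]
  simp only [mul_assoc]
  rw [← Finset.mul_sum]
  congr 1
  rw [Matrix.mul_apply, Complex.re_sum]
  refine Finset.sum_congr rfl fun j _ => ?_
  rw [Matrix.mul_diagonal, Matrix.conjTranspose_apply]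
  generalize (Uᴴ * X * W) i j = z
  have : z * (g j : ℂ) * star z = ((g j * ‖z‖^2 : ℝ) : ℂ) := by
    have := Complex.mul_conj' z
    rw [mul_right_comm, Complex.star_def, this]
    push_cast; ring
  rw [this, Complex.ofReal_re]

theorem diag_nonneg (U : Matrix n n ℂ) {S : Matrix n n ℂ} (hS : S.PosSemidef) (j : n) :
    0 ≤ ((Uᴴ * S * U) j j).re :=
  (Complex.le_def.1 (hS.conjTranspose_mul_mul_same U).diag_nonneg).1

theorem hold2 {s : ℝ} (hs : s ∈ Set.Ioo (0:ℝ) 1) (U : Matrix m m ℂ) (W : Matrix k k ℂ)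
    (V : Matrix m k ℂ) (F F0 F1 : m → ℝ) (G G0 G1 : k → ℝ)
    (hF0 : ∀ i, 0 ≤ F0 i) (hF1 : ∀ i, 0 ≤ F1 i) (hG0 : ∀ i, 0 ≤ G0 i) (hG1 : ∀ i, 0 ≤ G1 i)
    (hF : ∀ i, F0 i ^ s * F1 i ^ (1-s) = F i) (hG : ∀ i, G0 i ^ s * G1 i ^ (1-s) = G i) :
    rt (fc U F * V * fc W G * Vᴴ) ≤ rt (fc U F0 * V * fc W G0 * Vᴴ) ^ s * rt (fc U F1 * V * fc W G1 * Vᴴ) ^ (1-s) := by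
  rw [rt_fc_fc, rt_fc_fc, rt_fc_fc]
  refine le_trans (le_of_eq ?_) (holder hs _ _ (fun p => ?_) (fun p => ?_))
  · refine Finset.sum_congr rfl fun p _ => ?_
    have h1 := hF0 p.1; have h2 := hF1 p.1; have h3 := hG0 p.2; have h4 := hG1 p.2
    rw [Real.mul_rpow (by positivity) (by positivity), Real.mul_rpow (by positivity) (by positivity),
      Real.mul_rpow (by positivity) (by positivity), Real.mul_rpow (by positivity) (by positivity),
      ← hF, ← hG]
    have : (‖(Uᴴ * V * W) p.1 p.2‖ ^ 2) = (‖(Uᴴ * V * W) p.1 p.2‖ ^ 2) ^ s * (‖(Uᴴ * V * W) p.1 p.2‖ ^ 2) ^ (1-s) := by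
      rw [← Real.rpow_add' (by positivity) (by norm_num)]; simp
    conv_lhs => rw [this]
    ring
  · have h1 := hF0 p.1; have h3 := hG0 p.2; positivity
  · have h1 := hF1 p.1; have h3 := hG1 p.2; positivity

theorem slice_core {s : ℝ} (hs : s ∈ Set.Ioo (0:ℝ) 1) {U : Matrix n n ℂ} (hU : Uᴴ * U = 1)
    (f0 f1 : n → ℝ) (hf0 : ∀ i, 0 ≤ f0 i) (hf1 : ∀ i, 0 ≤ f1 i)
    {S0 S1 : Matrix n n ℂ} (hS0 : S0.PosSemidef) (hS1 : S1.PosSemidef)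
    (U1 : Matrix m m ℂ) (W : Matrix k k ℂ)
    (V : Matrix m k ℂ) (F F0 F1 : m → ℝ) (G G0 G1 : k → ℝ)
    (hF0 : ∀ i, 0 ≤ F0 i) (hF1 : ∀ i, 0 ≤ F1 i) (hG0 : ∀ i, 0 ≤ G0 i) (hG1 : ∀ i, 0 ≤ G1 i)
    (hF : ∀ i, F0 i ^ s * F1 i ^ (1-s) = F i) (hG : ∀ i, G0 i ^ s * G1 i ^ (1-s) = G i)
    (h : ∀ θ : n → ℝ, ∃ X : Matrix m k ℂ,
      rt (fc U1 F0 * X * fc W G0 * Xᴴ) ≤ rt (fc U f0 * fc U θ * S0 * fc U θ) ∧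
      rt (fc U1 F1 * (V - X) * fc W G1 * (V - X)ᴴ) ≤ rt (fc U f1 * (1 - fc U θ) * S1 * (1 - fc U θ))) :
    rt (fc U1 F * V * fc W G * Vᴴ) ≤
      ∑ j, (f0 j * ((Uᴴ * S0 * U) j j).re) ^ s * (f1 j * ((Uᴴ * S1 * U) j j).re) ^ (1-s) := by
  have key : ∀ (f θ : n → ℝ) (S : Matrix n n ℂ), rt (fc U f * fc U θ * S * fc U θ) =
      ∑ j, θ j ^ 2 * (f j * ((Uᴴ * S * U) j j).re) := by
    intro f θ S
    rw [rt_comm, ← Matrix.mul_assoc, ← Matrix.mul_assoc, fc_mul hU, fc_mul hU, rt_fc_diag]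
    refine Finset.sum_congr rfl fun i _ => ?_
    ring
  have h1θ : ∀ θ : n → ℝ, 1 - fc U θ = fc U (fun i => 1 - θ i) := by
    intro θ; rw [← fc_sub, fc_one hU]
  set u' : n → ℝ := fun j => f0 j * ((Uᴴ * S0 * U) j j).re with hu'
  set v' : n → ℝ := fun j => f1 j * ((Uᴴ * S1 * U) j j).re with hv'
  have hu'0 : ∀ j, 0 ≤ u' j := fun j => mul_nonneg (hf0 j) (diag_nonneg U hS0 j)
  have hv'0 : ∀ j, 0 ≤ v' j := fun j => mul_nonneg (hf1 j) (diag_nonneg U hS1 j)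
  have hL : rt (fc U1 F * V * fc W G * Vᴴ) = ∑ p : m × k,
      (F0 p.1 * G0 p.2 * ‖(U1ᴴ * V * W) p.1 p.2‖^2) ^ s * (F1 p.1 * G1 p.2 * ‖(U1ᴴ * V * W) p.1 p.2‖^2) ^ (1-s) := by
    rw [rt_fc_fc]
    refine Finset.sum_congr rfl fun p _ => ?_
    have h1 := hF0 p.1; have h2 := hF1 p.1; have h3 := hG0 p.2; have h4 := hG1 p.2
    rw [Real.mul_rpow (by positivity) (by positivity), Real.mul_rpow (by positivity) (by positivity),
      Real.mul_rpow (by positivity) (by positivity), Real.mul_rpow (by positivity) (by positivity),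
      ← hF, ← hG]
    have : (‖(U1ᴴ * V * W) p.1 p.2‖ ^ 2) = (‖(U1ᴴ * V * W) p.1 p.2‖ ^ 2) ^ s * (‖(U1ᴴ * V * W) p.1 p.2‖ ^ 2) ^ (1-s) := by
      rw [← Real.rpow_add' (by positivity) (by norm_num)]; simp
    conv_lhs => rw [this]
    ring
  rw [hL]
  apply int_mono hs
  · intro p
    have h1 := hF0 p.1; have h3 := hG0 p.2; positivity
  · intro p
    have h1 := hF1 p.1; have h3 := hG1 p.2; positivity
  · exact hu'0
  · exact hv'0
  · intro t ht
    obtain ⟨X, hX0, hX1⟩ := h (fun j => t * v' j / (u' j + t * v' j))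
    rw [h1θ, key, rt_fc_fc] at hX1
    rw [key, rt_fc_fc] at hX0
    calc _ ≤ ∑ p : m × k, (F0 p.1 * G0 p.2 * ‖(U1ᴴ * X * W) p.1 p.2‖^2 +
          t * (F1 p.1 * G1 p.2 * ‖(U1ᴴ * (V - X) * W) p.1 p.2‖^2)) := by
          refine Finset.sum_le_sum fun p _ => ?_
          have := slice_lower t (F0 p.1 * G0 p.2) (F1 p.1 * G1 p.2) ht (mul_nonneg (hF0 _) (hG0 _))
            (mul_nonneg (hF1 _) (hG1 _)) ((U1ᴴ * V * W) p.1 p.2) ((U1ᴴ * X * W) p.1 p.2)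
          rw [Matrix.mul_sub, Matrix.sub_mul]
          exact this
      _ ≤ ∑ j, ((t * v' j / (u' j + t * v' j)) ^ 2 * u' j + t * ((1 - t * v' j / (u' j + t * v' j))^2 * v' j)) := by
          rw [Finset.sum_add_distrib, Finset.sum_add_distrib, ← Finset.mul_sum, ← Finset.mul_sum]
          gcongr
      _ = _ := by
          refine Finset.sum_congr rfl fun j _ => ?_
          exact slice_attained t (u' j) (v' j) ht (hu'0 j) (hv'0 j)

theorem slice_eq {s : ℝ} (hs : s ∈ Set.Ioo (0:ℝ) 1) {U : Matrix n n ℂ} (hU : Uᴴ * U = 1)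
    (f f0 f1 : n → ℝ) (hf0 : ∀ i, 0 ≤ f0 i) (hf1 : ∀ i, 0 ≤ f1 i)
    {S : Matrix n n ℂ} (hS : S.PosSemidef)
    (U1 : Matrix m m ℂ) (W : Matrix k k ℂ)
    (V : Matrix m k ℂ) (F F0 F1 : m → ℝ) (G G0 G1 : k → ℝ)
    (hF0 : ∀ i, 0 ≤ F0 i) (hF1 : ∀ i, 0 ≤ F1 i) (hG0 : ∀ i, 0 ≤ G0 i) (hG1 : ∀ i, 0 ≤ G1 i)
    (hF : ∀ i, F0 i ^ s * F1 i ^ (1-s) = F i) (hG : ∀ i, G0 i ^ s * G1 i ^ (1-s) = G i)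
    (hf : ∀ i, f0 i ^ s * f1 i ^ (1-s) = f i)
    (h : ∀ θ : n → ℝ, ∃ X : Matrix m k ℂ,
      rt (fc U1 F0 * X * fc W G0 * Xᴴ) ≤ rt (fc U f0 * fc U θ * S * fc U θ) ∧
      rt (fc U1 F1 * (V - X) * fc W G1 * (V - X)ᴴ) ≤ rt (fc U f1 * (1 - fc U θ) * S * (1 - fc U θ))) :
    rt (fc U1 F * V * fc W G * Vᴴ) ≤ rt (fc U f * S) := by
  refine (slice_core hs hU f0 f1 hf0 hf1 hS hS U1 W V F F0 F1 G G0 G1 hF0 hF1 hG0 hG1 hF hG h).trans_eq ?_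
  rw [rt_fc_diag]
  refine Finset.sum_congr rfl fun j _ => ?_
  have := diag_nonneg U hS j
  rw [Real.mul_rpow (hf0 j) this, Real.mul_rpow (hf1 j) this, ← hf]
  have e : ((Uᴴ * S * U) j j).re = ((Uᴴ * S * U) j j).re ^ s * ((Uᴴ * S * U) j j).re ^ (1-s) := by
    rw [← Real.rpow_add' this (by norm_num)]; simp
  conv_rhs => rw [e]
  ring

theorem slice_holder {s : ℝ} (hs : s ∈ Set.Ioo (0:ℝ) 1) {U : Matrix n n ℂ} (hU : Uᴴ * U = 1)
    (f0 f1 h0 h1 : n → ℝ) (hf0 : ∀ i, 0 ≤ f0 i) (hf1 : ∀ i, 0 ≤ f1 i)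
    (hh0 : ∀ i, 0 ≤ h0 i) (hh1 : ∀ i, 0 ≤ h1 i)
    {S0 S1 : Matrix n n ℂ} (hS0 : S0.PosSemidef) (hS1 : S1.PosSemidef)
    (U1 : Matrix m m ℂ) (W : Matrix k k ℂ)
    (V : Matrix m k ℂ) (F F0 F1 : m → ℝ) (G G0 G1 : k → ℝ)
    (hF0 : ∀ i, 0 ≤ F0 i) (hF1 : ∀ i, 0 ≤ F1 i) (hG0 : ∀ i, 0 ≤ G0 i) (hG1 : ∀ i, 0 ≤ G1 i)
    (hF : ∀ i, F0 i ^ s * F1 i ^ (1-s) = F i) (hG : ∀ i, G0 i ^ s * G1 i ^ (1-s) = G i)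
    (hf : ∀ i, f0 i ^ s * f1 i ^ (1-s) = h0 i ^ s * h1 i ^ (1-s))
    (h : ∀ θ : n → ℝ, ∃ X : Matrix m k ℂ,
      rt (fc U1 F0 * X * fc W G0 * Xᴴ) ≤ rt (fc U f0 * fc U θ * S0 * fc U θ) ∧
      rt (fc U1 F1 * (V - X) * fc W G1 * (V - X)ᴴ) ≤ rt (fc U f1 * (1 - fc U θ) * S1 * (1 - fc U θ))) :
    rt (fc U1 F * V * fc W G * Vᴴ) ≤ rt (fc U h0 * S0) ^ s * rt (fc U h1 * S1) ^ (1-s) := by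
  refine (slice_core hs hU f0 f1 hf0 hf1 hS0 hS1 U1 W V F F0 F1 G G0 G1 hF0 hF1 hG0 hG1 hF hG h).trans ?_
  rw [rt_fc_diag, rt_fc_diag]
  refine le_trans (le_of_eq ?_) (holder hs _ _ (fun j => ?_) (fun j => ?_))
  · refine Finset.sum_congr rfl fun j _ => ?_
    have t0 := diag_nonneg U hS0 j
    have t1 := diag_nonneg U hS1 j
    rw [Real.mul_rpow (hf0 j) t0, Real.mul_rpow (hf1 j) t1, Real.mul_rpow (hh0 j) t0, Real.mul_rpow (hh1 j) t1]
    rw [mul_mul_mul_comm, hf, mul_mul_mul_comm]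
  · exact mul_nonneg (hh0 j) (diag_nonneg U hS0 j)
  · exact mul_nonneg (hh1 j) (diag_nonneg U hS1 j)

end Petz
namespace Petz
set_option linter.unusedSectionVars false

variable {n m k : Type*} [Fintype n] [DecidableEq n] [Fintype m] [DecidableEq m]
  [Fintype k] [DecidableEq k]

theorem pw_eq_rpow {x s : ℝ} (hx : 0 ≤ x) (hs : s ≠ 0) : pw x s = x ^ s := by
  unfold pw; split_ifs with h
  · rfl
  · have : x = 0 := by linarith
    rw [this, Real.zero_rpow hs]

theorem pw_pos {x : ℝ} (h : 0 < x) (t : ℝ) : pw x t = x ^ t := by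
  rw [pw, if_pos h]

theorem pw_mono {x y t : ℝ} (h : x ≤ y) (ht : 0 ≤ t) : pw x t ≤ pw y t := by
  by_cases hx : 0 < x
  · rw [pw_pos hx, pw_pos (hx.trans_le h)]
    exact Real.rpow_le_rpow hx.le h ht
  · rw [pw, if_neg hx]; exact pw_nonneg _ _

/-- interpolation of powers -/
theorem pw_interp (x a b c s : ℝ) (hs : s ∈ Set.Ioo (0:ℝ) 1) (h : a * s + b * (1-s) = c) :
    pw x a ^ s * pw x b ^ (1-s) = pw x c := by
  rw [pw_rpow _ _ _ hs.1.ne', pw_rpow _ _ _ (by linarith [hs.2]), pw_mul, h]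

theorem pw_interp1 (x b c s : ℝ) (hs : s ∈ Set.Ioo (0:ℝ) 1) (h : b * (1-s) = c) :
    (1:ℝ) ^ s * pw x b ^ (1-s) = pw x c := by
  rw [pw_rpow _ _ _ (by linarith [hs.2]), Real.one_rpow, one_mul, h]

theorem pw_interp2 (x b c s : ℝ) (hs : s ∈ Set.Ioo (0:ℝ) 1) (h : b * s = c) :
    pw x b ^ s * (1:ℝ) ^ (1-s) = pw x c := by
  rw [pw_rpow _ _ _ hs.1.ne', Real.one_rpow, mul_one, h]

theorem TL (U : Matrix n n ℂ) {W : Matrix n n ℂ} (hW : Wᴴ = W) (F G K L : n → ℝ)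
    (h : ∀ i j, (Uᴴ * W * U) i j ≠ 0 → F i * G j + F j * G i ≤ K i * L j + K j * L i) :
    rt (fc U F * W * fc U G * W) ≤ rt (fc U K * W * fc U L * W) := by
  have e1 : ∀ F G : n → ℝ, rt (fc U F * W * fc U G * W) =
      ∑ i, ∑ j, F i * G j * ‖(Uᴴ * W * U) i j‖^2 := by
    intro F G
    have := rt_fc_fc U U F G W
    rw [hW] at this
    rw [this, Fintype.sum_prod_type]
  have hn : ∀ i j, ‖(Uᴴ * W * U) i j‖ = ‖(Uᴴ * W * U) j i‖ := by
    intro i j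
    have : (Uᴴ * W * U)ᴴ = Uᴴ * W * U := by
      simp only [Matrix.conjTranspose_mul, Matrix.conjTranspose_conjTranspose, hW, Matrix.mul_assoc]
    conv_lhs => rw [← this, Matrix.conjTranspose_apply, norm_star]
  have e2 : ∀ F G : n → ℝ, 2 * rt (fc U F * W * fc U G * W) =
      ∑ i, ∑ j, (F i * G j + F j * G i) * ‖(Uᴴ * W * U) i j‖^2 := by
    intro F G
    have e1' := e1 F G
    rw [Finset.sum_comm] at e1'
    rw [two_mul]
    nth_rw 2 [e1']
    rw [e1, ← Finset.sum_add_distrib]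
    refine Finset.sum_congr rfl fun i _ => ?_
    rw [← Finset.sum_add_distrib]
    refine Finset.sum_congr rfl fun j _ => ?_
    rw [hn j i]; ring
  have : 2 * rt (fc U F * W * fc U G * W) ≤ 2 * rt (fc U K * W * fc U L * W) := by
    rw [e2, e2]
    refine Finset.sum_le_sum fun i _ => Finset.sum_le_sum fun j _ => ?_
    by_cases hz : (Uᴴ * W * U) i j = 0
    · simp [hz]
    · exact mul_le_mul_of_nonneg_right (h i j hz) (by positivity)
  linarith

theorem TL1 {B H : Matrix n n ℂ} (hB : B.PosSemidef) (hH : Hᴴ = H) {x y : ℝ} (hx : 0 ≤ x) (hy : 0 ≤ y) :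
    rt (matPow B x * H * matPow B y * H) ≤ rt (matPow B (x+y) * H * H) := by
  obtain ⟨U, d, hU, hd, h, hp⟩ := psd_diag hB
  have := TL U hH (fun i => pw (d i) x) (fun i => pw (d i) y) (fun i => pw (d i) (x+y)) (fun _ => 1) ?_
  · rw [fc_one hU, Matrix.mul_one] at this
    simpa only [hp] using this
  · intro i j _
    simp only [← pw_mul, mul_one]
    rcases le_total (d i) (d j) with hij | hij
    · nlinarith [pw_mono hij hx, pw_mono hij hy]
    · nlinarith [pw_mono hij hx, pw_mono hij hy]

theorem TL2 {B H : Matrix n n ℂ} (hB : B.PosSemidef) (hH : Hᴴ = H) {b : ℝ} (hb : 0 < b)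
    (hs : matPow B 0 * H = H) :
    rt (matPow B (b-1) * H * H) ≤ rt (matPow B b * H * matPow B (-1) * H) := by
  obtain ⟨U, d, hU, hd, h, hp⟩ := psd_diag hB
  have hs' : H * matPow B 0 = H := by
    have := congrArg Matrix.conjTranspose hs
    rwa [Matrix.conjTranspose_mul, matPow_conj hB, hH] at this
  have hU' := mul_eq_one_comm.1 hU
  have k1 : ∀ i j, (Uᴴ * H * U) i j ≠ 0 → 0 < d i := by
    intro i j hz
    by_contra hd0
    apply hz
    have : Uᴴ * H * U = diagonal (fun i => ((pw (d i) 0 : ℝ) : ℂ)) * (Uᴴ * H * U) := by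
      conv_lhs => rw [← hs, hp]
      unfold fc
      simp only [Matrix.mul_assoc]
      rw [← Matrix.mul_assoc, hU, Matrix.one_mul]
    rw [this, Matrix.diagonal_mul, pw, if_neg hd0]; simp
  have k2 : ∀ i j, (Uᴴ * H * U) i j ≠ 0 → 0 < d j := by
    intro i j hz
    by_contra hd0
    apply hz
    have : Uᴴ * H * U = (Uᴴ * H * U) * diagonal (fun i => ((pw (d i) 0 : ℝ) : ℂ)) := by
      conv_lhs => rw [← hs', hp]
      unfold fc
      simp only [Matrix.mul_assoc]
      rw [hU, Matrix.mul_one]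
    rw [this, Matrix.mul_diagonal, pw, if_neg hd0]; simp
  have := TL U hH (fun i => pw (d i) (b-1)) (fun _ => 1) (fun i => pw (d i) b) (fun i => pw (d i) (-1)) ?_
  · rw [fc_one hU, Matrix.mul_one] at this
    simpa only [hp] using this
  · intro i j hz
    have hi := k1 i j hz
    have hj := k2 i j hz
    rw [sub_eq_add_neg]
    simp only [← pw_mul, mul_one]
    have q : ∀ {x y : ℝ}, 0 < x → x ≤ y → pw y (-1) ≤ pw x (-1) := by
      intro x y hx hxy
      rw [pw_pos hx, pw_pos (hx.trans_le hxy), Real.rpow_neg_one, Real.rpow_neg_one]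
      gcongr
    rcases le_total (d i) (d j) with hij | hij
    · nlinarith [pw_mono hij hb.le, q hi hij]
    · nlinarith [pw_mono hij hb.le, q hj hij]

theorem walt_small {s : ℝ} (hs : s ∈ Set.Ioo (0:ℝ) 1) {B D : Matrix n n ℂ} (hB : B.PosSemidef) (hD : D.PosSemidef)
    {r p : ℝ} (hp0 : 0 ≤ p) (hpr : p ≤ r) :
    rt (matPow B (r + p * s) * matPow D s) ≤
      rt (matPow B r * matPow (matPow B (p/2) * D * matPow B (p/2)) s) := by
  have hN : (matPow B (p/2) * D * matPow B (p/2)).PosSemidef := by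
    have := hD.mul_mul_conjTranspose_same (matPow B (p/2))
    rwa [matPow_conj hB] at this
  obtain ⟨U, e, hU, he, hNe, hNp⟩ := psd_diag hN
  obtain ⟨UD, d, hUD, hd, hDd, hDp⟩ := psd_diag hD
  obtain ⟨UB, b, hUB, hb, hBb, hBp⟩ := psd_diag hB
  have hs1 : 1 - s ≠ 0 := by linarith [hs.2]
  have := slice_eq hs hU (fun i => pw (e i) s) e (fun _ => 1) he (fun _ => zero_le_one)
    (matPow_psd hB r) UD UB 1 (fun i => pw (d i) s) d (fun _ => 1)
    (fun i => pw (b i) (r + p*s)) (fun i => pw (b i) (r+p)) (fun i => pw (b i) r)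
    hd (fun _ => zero_le_one) (fun _ => pw_nonneg _ _) (fun _ => pw_nonneg _ _)
    (fun i => by rw [Real.one_rpow, mul_one, pw_eq_rpow (hd i) hs.1.ne'])
    (fun i => pw_interp _ _ _ _ _ hs (by ring))
    (fun i => by rw [Real.one_rpow, mul_one, pw_eq_rpow (he i) hs.1.ne']) ?_
  · rw [← hDp, ← hBp, ← hNp] at this
    rw [rt_comm, rt_comm (matPow B r)]
    simpa using this
  intro θ
  set Θ := fc U θ with hΘ
  have hΘc : Θᴴ = Θ := fc_conj _ _
  refine ⟨matPow B (p/2) * Θ * matPow B (-(p/2)), le_of_eq ?_, ?_⟩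
  · rw [← hDd, ← hNe, ← hBp]
    simp only [Matrix.conjTranspose_mul, matPow_conj hB, hΘc]
    have e1 : D * (matPow B (p/2) * Θ * matPow B (-(p/2))) * matPow B (r+p) *
        (matPow B (-(p/2)) * (Θ * matPow B (p/2)))
      = D * matPow B (p/2) * Θ * (matPow B (-(p/2)) * matPow B (r+p) * matPow B (-(p/2))) * Θ * matPow B (p/2) := by
      simp only [Matrix.mul_assoc]
    rw [e1, matPow_mul hB, matPow_mul hB, rt_comm, show -(p/2) + (r+p) + -(p/2) = r by ring]
    simp only [Matrix.mul_assoc]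
  · have hH : (1 - Θ)ᴴ = 1 - Θ := by rw [Matrix.conjTranspose_sub, hΘc, Matrix.conjTranspose_one]
    have e2 : (1 - matPow B (p/2) * Θ * matPow B (-(p/2))) * matPow B (r/2) =
        matPow B (p/2) * (1 - Θ) * matPow B ((r-p)/2) := by
      rw [Matrix.sub_mul, Matrix.mul_sub, Matrix.sub_mul, Matrix.one_mul, Matrix.mul_one,
        matPow_mul hB, Matrix.mul_assoc, matPow_mul hB]
      congr 2
      · ring
      · congr 1; ring
    rw [fc_one hUD, fc_one hU, ← hBp, Matrix.one_mul, Matrix.one_mul]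
    set Y := 1 - matPow B (p/2) * Θ * matPow B (-(p/2)) with hY
    have e3 : Y * matPow B r * Yᴴ = (Y * matPow B (r/2)) * (Y * matPow B (r/2))ᴴ := by
      rw [Matrix.conjTranspose_mul, matPow_conj hB]
      rw [Matrix.mul_assoc Y (matPow B (r/2)), matPow_mul_assoc hB, add_halves, Matrix.mul_assoc]
    rw [e3, e2]
    simp only [Matrix.conjTranspose_mul, matPow_conj hB, hH]
    have e4 : matPow B (p/2) * (1 - Θ) * matPow B ((r-p)/2) * (matPow B ((r-p)/2) * ((1-Θ) * matPow B (p/2)))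
       = matPow B (p/2) * ((1 - Θ) * (matPow B ((r-p)/2) * matPow B ((r-p)/2)) * (1-Θ) * matPow B (p/2)) := by
      simp only [Matrix.mul_assoc]
    rw [e4, matPow_mul hB, add_halves, rt_comm]
    have e5 : (1 - Θ) * matPow B (r-p) * (1-Θ) * matPow B (p/2) * matPow B (p/2) =
       (1 - Θ) * matPow B (r-p) * (1-Θ) * matPow B p := by
      rw [Matrix.mul_assoc _ (matPow B (p/2)), matPow_mul hB, add_halves]
    rw [e5, rt_comm]
    have := TL1 hB hH hp0 (sub_nonneg.2 hpr)
    rw [show p + (r - p) = r by ring] at this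
    calc _ = rt (matPow B p * (1 - Θ) * matPow B (r-p) * (1-Θ)) := by simp only [Matrix.mul_assoc]
      _ ≤ _ := this
      _ = _ := by rw [Matrix.mul_assoc, rt_comm, Matrix.mul_assoc, rt_comm]

theorem walt_pos {s : ℝ} (hs : s ∈ Set.Ioo (0:ℝ) 1) {B : Matrix n n ℂ} (hB : B.PosSemidef) {r0 : ℝ} (hr0 : 0 < r0) (N : ℕ) :
    ∀ {D : Matrix n n ℂ} (_ : D.PosSemidef) {r p : ℝ} (_ : 0 ≤ p) (_ : r0 ≤ r) (_ : p ≤ N * r0),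
    rt (matPow B (r + p * s) * matPow D s) ≤
      rt (matPow B r * matPow (matPow B (p/2) * D * matPow B (p/2)) s) := by
  induction N with
  | zero =>
    intro D hD r p hp hr hpN
    apply walt_small hs hB hD hp
    simp at hpN; linarith
  | succ N ih =>
    intro D hD r p hp hr hpN
    by_cases h : p ≤ r0
    · exact walt_small hs hB hD hp (h.trans hr)
    rw [not_le] at h
    push_cast at hpN
    have hN2 : (matPow B ((p-r0)/2) * D * matPow B ((p-r0)/2)).PosSemidef := by
      have := hD.mul_mul_conjTranspose_same (matPow B ((p-r0)/2))
      rwa [matPow_conj hB] at this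
    have h1 := walt_small hs hB hN2 hr0.le hr
    have h2 := ih hD (r := r + r0 * s) (p := p - r0) (by linarith) (by nlinarith [hs.1]) (by linarith)
    rw [show r + r0 * s + (p - r0) * s = r + p * s by ring] at h2
    have hNN : matPow B (r0/2) * (matPow B ((p-r0)/2) * D * matPow B ((p-r0)/2)) * matPow B (r0/2) =
       (matPow B (r0/2) * matPow B ((p-r0)/2)) * D * (matPow B ((p-r0)/2) * matPow B (r0/2)) := by
      simp only [Matrix.mul_assoc]
    rw [matPow_mul hB, matPow_mul hB, show r0/2 + (p-r0)/2 = p/2 by ring,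
      show (p-r0)/2 + r0/2 = p/2 by ring] at hNN
    rw [hNN] at h1
    exact h2.trans h1

theorem cont_rt_pow {B : Matrix n n ℂ} (hB : B.PosSemidef) (M : Matrix n n ℂ) :
    Continuous fun t => rt (matPow B t * M) := by
  obtain ⟨UB, b, hUB, hb, hBb, hBp⟩ := psd_diag hB
  simp only [hBp, rt_fc_diag]
  refine continuous_finsetSum _ fun j _ => Continuous.mul ?_ continuous_const
  unfold pw
  split_ifs with h
  · exact Real.continuous_const_rpow h.ne'
  · exact continuous_const

theorem walt {s : ℝ} (hs : s ∈ Set.Ioo (0:ℝ) 1) {B D : Matrix n n ℂ} (hB : B.PosSemidef) (hD : D.PosSemidef)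
    {r p : ℝ} (hp0 : 0 ≤ p) (hr : 0 ≤ r) :
    rt (matPow B (r + p * s) * matPow D s) ≤
      rt (matPow B r * matPow (matPow B (p/2) * D * matPow B (p/2)) s) := by
  have c1 : Filter.Tendsto (fun x => rt (matPow B (x + p * s) * matPow D s)) (nhdsWithin r (Set.Ioi r))
      (nhds (rt (matPow B (r + p * s) * matPow D s))) :=
    (((cont_rt_pow hB (matPow D s)).comp (continuous_id.add continuous_const)).tendsto r).mono_left nhdsWithin_le_nhds
  have c2 := ((cont_rt_pow hB (matPow (matPow B (p/2) * D * matPow B (p/2)) s)).tendsto r).mono_left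
    (nhdsWithin_le_nhds (s := Set.Ioi r))
  refine le_of_tendsto_of_tendsto c1 c2 ?_
  filter_upwards [self_mem_nhdsWithin] with x hx
  have hx : 0 < x := hr.trans_lt hx
  obtain ⟨N, hN⟩ := exists_nat_ge (p / x)
  exact walt_pos hs hB hx N hD hp0 le_rfl (by rwa [div_le_iff₀ hx] at hN)

end Petz
namespace Petz
set_option linter.unusedSectionVars false

variable {n m k : Type*} [Fintype n] [DecidableEq n] [Fintype m] [DecidableEq m]
  [Fintype k] [DecidableEq k]

/-- ampliation -/
noncomputable def hat (m : Type*) [Fintype m] [DecidableEq m] (M : Matrix n n ℂ) :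
    Matrix (m × n) (m × n) ℂ := (1 : Matrix m m ℂ) ⊗ₖ M

theorem hat_mul (M N : Matrix n n ℂ) : hat m M * hat m N = hat m (M * N) := by
  unfold hat; rw [← Matrix.mul_kronecker_mul, Matrix.one_mul]

theorem hat_one : hat m (1 : Matrix n n ℂ) = 1 := by
  unfold hat; exact Matrix.one_kronecker_one

theorem hat_conj (M : Matrix n n ℂ) : (hat m M)ᴴ = hat m Mᴴ := by
  unfold hat; rw [Matrix.conjTranspose_kronecker, Matrix.conjTranspose_one]

theorem hat_sub (M N : Matrix n n ℂ) : hat m (M - N) = hat m M - hat m N := by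
  unfold hat; ext ⟨i, j⟩ ⟨i', j'⟩; simp [Matrix.kroneckerMap_apply, mul_sub]

theorem hat_unitary {U : Matrix n n ℂ} (hU : Uᴴ * U = 1) : (hat m U)ᴴ * hat m U = 1 := by
  rw [hat_conj, hat_mul, hU, hat_one]

theorem hat_fc (U : Matrix n n ℂ) (f : n → ℝ) : hat m (fc U f) = fc (hat m U) (fun x => f x.2) := by
  unfold fc
  rw [hat_conj, ← hat_mul, ← hat_mul]
  congr 2
  unfold hat
  rw [← Matrix.diagonal_one, Matrix.diagonal_kronecker_diagonal]
  simp

theorem hat_psd {M : Matrix n n ℂ} (hM : M.PosSemidef) : (hat m M).PosSemidef := by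
  obtain ⟨U, d, hU, hd, h, hp⟩ := psd_diag hM
  rw [h, hat_fc]; exact fc_psd _ _ fun x => hd x.2

theorem matPow_hat {M : Matrix n n ℂ} (hM : M.PosSemidef) (t : ℝ) :
    matPow (hat m M) t = hat m (matPow M t) := by
  obtain ⟨U, d, hU, hd, h, hp⟩ := psd_diag hM
  rw [hp, hat_fc]
  refine matPow_fc (hat_unitary hU) (fun x => d x.2) ?_ t
  rw [h, hat_fc]

theorem ptr_hat_mul (M : Matrix n n ℂ) (X : Matrix (m × n) (m × n) ℂ) :
    ptraceFst (hat m M * X) = M * ptraceFst X := by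
  ext j j'
  simp only [ptraceFst, hat, Matrix.of_apply, Matrix.mul_apply, Fintype.sum_prod_type,
    Matrix.kroneckerMap_apply, Matrix.one_apply, ite_mul, one_mul, zero_mul]
  simp only [Finset.sum_ite_irrel, Finset.sum_const_zero, Finset.sum_ite_eq, Finset.mem_univ, if_true]
  rw [Finset.sum_comm]
  simp only [Finset.mul_sum]

theorem ptr_conj (X : Matrix (m × n) (m × n) ℂ) : ptraceFst Xᴴ = (ptraceFst X)ᴴ := by
  ext j j'
  simp [ptraceFst, Matrix.conjTranspose_apply]

theorem ptr_mul_hat (M : Matrix n n ℂ) (X : Matrix (m × n) (m × n) ℂ) :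
    ptraceFst (X * hat m M) = ptraceFst X * M := by
  have := ptr_hat_mul (m := m) Mᴴ Xᴴ
  rw [← hat_conj, ← Matrix.conjTranspose_mul, ptr_conj, ptr_conj, ← Matrix.conjTranspose_mul] at this
  exact Matrix.conjTranspose_injective this

theorem ptr_sub (X Y : Matrix (m × n) (m × n) ℂ) : ptraceFst (X - Y) = ptraceFst X - ptraceFst Y := by
  ext j j'
  simp [ptraceFst]

theorem rt_ptr (X : Matrix (m × n) (m × n) ℂ) : rt (ptraceFst X) = rt X := by
  unfold rt
  congr 1
  simp only [ptraceFst, Matrix.trace, Matrix.diag, Matrix.of_apply, Fintype.sum_prod_type]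
  rw [Finset.sum_comm]

theorem ptr_psd {X : Matrix (m × n) (m × n) ℂ} (hX : X.PosSemidef) : (ptraceFst X).PosSemidef := by
  have : ptraceFst X = ∑ i, X.submatrix (fun j => (i, j)) (fun j => (i, j)) := by
    ext j j'
    simp [ptraceFst, Matrix.sum_apply]
  rw [this]
  exact Matrix.posSemidef_sum _ fun i _ => hX.submatrix _

theorem matPow_half {M : Matrix n n ℂ} (hM : M.PosSemidef) (t : ℝ) :
    matPow M (t/2) * matPow M (t/2) = matPow M t := by rw [matPow_mul hM, add_halves]

theorem eq_zero_of_rt {Z : Matrix n k ℂ} (h : rt (Zᴴ * Z) ≤ 0) : Z = 0 := by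
  have h0 := Matrix.posSemidef_conjTranspose_mul_self Z
  have h1 := Complex.le_def.1 h0.trace_nonneg
  have : (Zᴴ * Z).trace = 0 := by
    apply Complex.ext
    · exact le_antisymm h h1.1
    · exact h1.2.symm
  exact Matrix.trace_conjTranspose_mul_self_eq_zero_iff.1 this

theorem rt_mul_nonneg {P Q : Matrix n n ℂ} (hP : P.PosSemidef) (hQ : Q.PosSemidef) : 0 ≤ rt (P * Q) := by
  have e : rt (P * Q) = rt (matPow P (1/2) * Q * (matPow P (1/2))ᴴ) := by
    rw [matPow_conj hP, rt_comm _ (matPow P (1/2)), ← Matrix.mul_assoc, matPow_half hP, matPow_one hP]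
  rw [e]
  exact rt_psd (hQ.mul_mul_conjTranspose_same _)

/-- support facts -/
theorem supp_ptr {A : Matrix (m × n) (m × n) ℂ} (hA : A.PosSemidef) :
    hat m (matPow (ptraceFst A) 0) * A = A := by
  have hB := ptr_psd hA
  set B := ptraceFst A with hBdef
  set Q := 1 - matPow B 0 with hQ
  have hQc : Qᴴ = Q := by rw [hQ, Matrix.conjTranspose_sub, Matrix.conjTranspose_one, matPow_conj hB]
  have hQB : Q * B = 0 := by
    have h01 := matPow_mul hB 0 1
    rw [zero_add, matPow_one hB] at h01
    rw [hQ, Matrix.sub_mul, Matrix.one_mul, h01, sub_self]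
  have hz : matPow A (1/2) * hat m Q = 0 := by
    apply eq_zero_of_rt
    rw [Matrix.conjTranspose_mul, matPow_conj hA, hat_conj, hQc, Matrix.mul_assoc,
      ← Matrix.mul_assoc (matPow A _), matPow_half hA, matPow_one hA, ← rt_ptr, ptr_hat_mul, ptr_mul_hat,
      ← hBdef, ← Matrix.mul_assoc, hQB, Matrix.zero_mul]
    simp [rt]
  have hz2 : A * hat m Q = 0 := by
    have := congrArg (fun Z => matPow A (1/2) * Z) hz
    simpa only [matPow_mul_assoc hA, add_halves, matPow_one hA, Matrix.mul_zero] using this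
  have hz3 : hat m Q * A = 0 := by
    have := congrArg Matrix.conjTranspose hz2
    rwa [Matrix.conjTranspose_mul, hat_conj, hQc, hA.1, Matrix.conjTranspose_zero] at this
  rw [hQ, hat_sub, hat_one, Matrix.sub_mul, Matrix.one_mul, sub_eq_zero] at hz3
  exact hz3.symm

theorem supp_pow {A P : Matrix n n ℂ} (hA : A.PosSemidef) (h : P * A = A) (t : ℝ) :
    P * matPow A t = matPow A t := by
  have : matPow A t = A * matPow A (t-1) := by
    nth_rw 2 [← matPow_one hA]
    rw [matPow_mul hA]; congr 1; ring
  rw [this, ← Matrix.mul_assoc, h]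

theorem supp_comm {A P : Matrix n n ℂ} (hA : Aᴴ = A) (hP : Pᴴ = P) (h : P * A = A) : A * P = A := by
  have := congrArg Matrix.conjTranspose h
  rwa [Matrix.conjTranspose_mul, hA, hP] at this

/-- support of A contained in hat E when support of B contained in E -/
theorem supp_hat {A : Matrix (m × n) (m × n) ℂ} (hA : A.PosSemidef) {P : Matrix n n ℂ}
    (h : P * ptraceFst A = ptraceFst A) : hat m P * A = A := by
  have h0 := supp_ptr hA
  conv_lhs => rw [← h0]
  rw [← Matrix.mul_assoc, hat_mul, supp_pow (ptr_psd hA) h, h0]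

theorem supp_pos {P R : Matrix n n ℂ} (hP : P.PosSemidef) (hR : R.PosSemidef) (h : matPow R 0 * P = P)
    (hP0 : P ≠ 0) (x y : ℝ) : 0 < rt (matPow P x * matPow R y) := by
  by_contra hc
  rw [not_lt] at hc
  have e : rt (matPow P x * matPow R y) =
      rt ((matPow P (x/2) * matPow R (y/2))ᴴ * (matPow P (x/2) * matPow R (y/2))) := by
    rw [Matrix.conjTranspose_mul, matPow_conj hP, matPow_conj hR, Matrix.mul_assoc, matPow_mul_assoc hP,
      add_halves, rt_comm (matPow R _), Matrix.mul_assoc, matPow_half hR]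
  rw [e] at hc
  have hz := eq_zero_of_rt hc
  have h2 : matPow P (x/2) * matPow R 0 = matPow P (x/2) :=
    supp_comm (matPow_conj hP _) (matPow_conj hR _) (supp_pow hP h _)
  have hz2 : matPow P (x/2) = 0 := by
    have := congrArg (fun Z => Z * matPow R (-(y/2))) hz
    simpa only [Matrix.mul_assoc, matPow_mul hR, add_neg_cancel, h2, Matrix.zero_mul] using this
  apply hP0
  rw [← matPow_one hP, show (1:ℝ) = x/2 + (1 - x/2) by ring, ← matPow_mul hP, hz2, Matrix.zero_mul]

theorem schwarz {A : Matrix (m × n) (m × n) ℂ} (hA : A.PosSemidef) {P : Matrix n n ℂ} (hP : P.PosSemidef)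
    (Y : Matrix (m × n) (m × n) ℂ) :
    rt (P * ptraceFst (Y * A) * matPow (ptraceFst A) (-1) * (ptraceFst (Y * A))ᴴ) ≤
      rt (hat m P * Y * A * Yᴴ) := by
  have hB := ptr_psd hA
  set B := ptraceFst A with hBdef
  set Z := ptraceFst (Y * A) with hZ
  set X := Z * matPow B (-1) with hX
  have hZc : ptraceFst (A * Yᴴ) = Zᴴ := by
    rw [hZ, ← ptr_conj, Matrix.conjTranspose_mul, hA.1]
  have hXc : Xᴴ = matPow B (-1) * Zᴴ := by rw [hX, Matrix.conjTranspose_mul, matPow_conj hB]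
  have h0 : 0 ≤ rt (hat m P * ((Y - hat m X) * A * (Y - hat m X)ᴴ)) :=
    rt_mul_nonneg (hat_psd hP) (hA.mul_mul_conjTranspose_same _)
  have e : hat m P * ((Y - hat m X) * A * (Y - hat m X)ᴴ) =
      hat m P * Y * A * Yᴴ - hat m P * (Y * A * hat m Xᴴ) - hat m P * (hat m X * (A * Yᴴ))
        + hat m P * (hat m X * (A * hat m Xᴴ)) := by
    rw [Matrix.conjTranspose_sub, hat_conj]
    simp only [Matrix.mul_sub, Matrix.sub_mul, Matrix.mul_assoc]
    abel
  rw [e, rt_add, rt_sub, rt_sub] at h0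
  have e1 : rt (hat m P * (Y * A * hat m Xᴴ)) = rt (P * Z * matPow B (-1) * Zᴴ) := by
    rw [← rt_ptr, ptr_hat_mul, ptr_mul_hat, ← hZ, hXc]; simp only [Matrix.mul_assoc]
  have e2 : rt (hat m P * (hat m X * (A * Yᴴ))) = rt (P * Z * matPow B (-1) * Zᴴ) := by
    rw [← rt_ptr, ptr_hat_mul, ptr_hat_mul, hZc, hX]; simp only [Matrix.mul_assoc]
  have e3 : rt (hat m P * (hat m X * (A * hat m Xᴴ))) = rt (P * Z * matPow B (-1) * Zᴴ) := by
    rw [← rt_ptr, ptr_hat_mul, ptr_hat_mul, ptr_mul_hat, ← hBdef, hXc, hX]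
    nth_rw 2 [← matPow_one hB]
    simp only [Matrix.mul_assoc, matPow_mul_assoc hB]
    norm_num
  linarith

end Petz
namespace Petz
set_option linter.unusedSectionVars false

variable {n m k : Type*} [Fintype n] [DecidableEq n] [Fintype m] [DecidableEq m]
  [Fintype k] [DecidableEq k]

theorem one_sub_fc_conj (U : Matrix n n ℂ) (θ : n → ℝ) : (1 - fc U θ)ᴴ = 1 - fc U θ := by
  rw [Matrix.conjTranspose_sub, Matrix.conjTranspose_one, fc_conj]

theorem fc_comm {U : Matrix n n ℂ} (hU : Uᴴ * U = 1) (f g : n → ℝ) : fc U f * fc U g = fc U g * fc U f := by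
  rw [fc_mul hU, fc_mul hU]; congr 1; ext i; ring

theorem fc_comm1 {U : Matrix n n ℂ} (hU : Uᴴ * U = 1) (f g : n → ℝ) :
    fc U f * (1 - fc U g) = (1 - fc U g) * fc U f := by
  rw [Matrix.mul_sub, Matrix.sub_mul, fc_comm hU, Matrix.one_mul, Matrix.mul_one]

theorem rt_cyc (P Y A : Matrix n n ℂ) : rt (P * Y * A * Y) = rt (A * Y * P * Y) := by
  rw [Matrix.mul_assoc, rt_comm, ← Matrix.mul_assoc]

theorem case1 {A : Matrix (m × n) (m × n) ℂ} (hA : A.PosSemidef) {E : Matrix n n ℂ} (hE : E.PosSemidef)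
    {s a b c : ℝ} (hs : s ∈ Set.Ioo (0:ℝ) 1) (h1 : b * s = a) (h2 : c * (1-s) = a) :
    rt (matPow A (1-a) * hat m (matPow E a)) ≤
      rt (matPow A (1-b) * hat m (matPow (ptraceFst A) b)) ^ s *
        rt (matPow (ptraceFst A) (1-c) * matPow E c) ^ (1-s) := by
  have hB := ptr_psd hA
  set B := ptraceFst A with hBdef
  obtain ⟨UA, dA, hUA, hdA, hAe, hAp⟩ := psd_diag hA
  obtain ⟨UB, dB, hUB, hdB, hBe, hBp⟩ := psd_diag hB
  obtain ⟨UE, dE, hUE, hdE, hEe, hEp⟩ := psd_diag hE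
  have := slice_holder hs hUB (fun _ => 1) (fun i => pw (dB i) 1) (fun i => pw (dB i) b) (fun i => pw (dB i) (1-c))
    (fun _ => zero_le_one) (fun _ => pw_nonneg _ _) (fun _ => pw_nonneg _ _) (fun _ => pw_nonneg _ _)
    (ptr_psd (matPow_psd hA (1-b))) (matPow_psd hE c) (hat m UE) UA 1
    (fun x => pw (dE x.2) a) (fun _ => 1) (fun x => pw (dE x.2) c)
    (fun x => pw (dA x) (1-a)) (fun x => pw (dA x) (1-b)) (fun x => pw (dA x) 1)
    (fun _ => zero_le_one) (fun _ => pw_nonneg _ _) (fun _ => pw_nonneg _ _) (fun _ => pw_nonneg _ _)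
    (fun _ => pw_interp1 _ _ _ _ hs h2) (fun _ => pw_interp _ _ _ _ _ hs (by linarith))
    (fun _ => by
      rw [pw_interp1 _ _ (1-s) _ hs (by ring), pw_interp _ _ _ (1-s) _ hs (by linarith)]) ?_
  · rw [← hat_fc UE (fun x => pw (dE x) a), ← hEp, ← hAp, ← hBp, ← hBp] at this
    have e1 : rt (matPow A (1-b) * hat m (matPow B b)) = rt (matPow B b * ptraceFst (matPow A (1-b))) := by
      rw [rt_comm, ← rt_ptr, ptr_hat_mul]
    rw [rt_comm, e1]
    simpa using this
  intro θ
  refine ⟨hat m (fc UB θ), le_of_eq ?_, le_of_eq ?_⟩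
  · rw [fc_one (hat_unitary hUE), fc_one hUB, ← hAp, Matrix.one_mul, Matrix.one_mul, hat_conj, fc_conj,
      ← rt_ptr, ptr_mul_hat, ptr_hat_mul]
  · rw [← hat_fc UE (fun x => pw (dE x) c), ← hEp, ← hAp, ← hBp, matPow_one hA, matPow_one hB,
      ← hat_one, ← hat_sub, hat_conj, one_sub_fc_conj, ← rt_ptr, ptr_mul_hat, hat_mul, ptr_hat_mul, ← hBdef,
      Matrix.mul_assoc, rt_comm]
    simp only [Matrix.mul_assoc]

theorem case_ip {A : Matrix (m × n) (m × n) ℂ} (hA : A.PosSemidef) {E : Matrix n n ℂ} (hE : E.PosSemidef)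
    (hsupp : matPow E 0 * ptraceFst A = ptraceFst A)
    {s a b q : ℝ} (hs : s ∈ Set.Ioo (0:ℝ) 1) (hq : 0 ≤ q) (h1 : a * s = b) (h2 : q * (1-s) = b) :
    rt (matPow A (1-b) * hat m (matPow (ptraceFst A) b)) ≤
      rt (matPow A (1-a) * hat m (matPow E a)) ^ s *
        rt (matPow (ptraceFst A) (1+q) * matPow E (-q)) ^ (1-s) := by
  have hB := ptr_psd hA
  have hsuppA := supp_pow hA (supp_hat hA hsupp) (1-a)
  have hsuppB := supp_pow hB hsupp (1+q)
  set B := ptraceFst A with hBdef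
  obtain ⟨UA, dA, hUA, hdA, hAe, hAp⟩ := psd_diag hA
  obtain ⟨UB, dB, hUB, hdB, hBe, hBp⟩ := psd_diag hB
  obtain ⟨UE, dE, hUE, hdE, hEe, hEp⟩ := psd_diag hE
  have := slice_holder hs hUE (fun i => pw (dE i) 0) (fun i => pw (dE i) 0) (fun i => pw (dE i) a) (fun i => pw (dE i) (-q))
    (fun _ => pw_nonneg _ _) (fun _ => pw_nonneg _ _) (fun _ => pw_nonneg _ _) (fun _ => pw_nonneg _ _)
    (ptr_psd (matPow_psd hA (1-a))) (matPow_psd hB (1+q)) (hat m UB) UA 1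
    (fun x => pw (dB x.2) b) (fun _ => 1) (fun x => pw (dB x.2) q)
    (fun x => pw (dA x) (1-b)) (fun x => pw (dA x) (1-a)) (fun x => pw (dA x) 1)
    (fun _ => zero_le_one) (fun _ => pw_nonneg _ _) (fun _ => pw_nonneg _ _) (fun _ => pw_nonneg _ _)
    (fun _ => pw_interp1 _ _ _ _ hs h2) (fun _ => pw_interp _ _ _ _ _ hs (by linarith))
    (fun _ => by
      rw [pw_interp _ _ _ 0 _ hs (by ring), pw_interp _ _ _ 0 _ hs (by linarith)]) ?_
  · rw [← hat_fc UB (fun x => pw (dB x) b), ← hEp, ← hAp, ← hBp, ← hEp] at this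
    have e1 : rt (matPow A (1-a) * hat m (matPow E a)) = rt (matPow E a * ptraceFst (matPow A (1-a))) := by
      rw [rt_comm, ← rt_ptr, ptr_hat_mul]
    rw [rt_comm, e1, rt_comm (matPow B (1+q))]
    simpa using this
  intro θ
  refine ⟨hat m (fc UE θ), le_of_eq ?_, ?_⟩
  · rw [fc_one (hat_unitary hUB), ← hAp, Matrix.one_mul, hat_conj, fc_conj,
      ← rt_ptr, ptr_mul_hat, ptr_hat_mul, fc_comm hUE, ← hEp, Matrix.mul_assoc (fc UE θ) (matPow E 0),
      ← ptr_hat_mul (matPow E 0), hsuppA]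
  · rw [← hat_fc UB (fun x => pw (dB x) q), ← hAp, ← hBp, matPow_one hA,
      ← hat_one, ← hat_sub, hat_conj, one_sub_fc_conj, ← rt_ptr, ptr_mul_hat, hat_mul, ptr_hat_mul, ← hBdef,
      fc_comm1 hUE, ← hEp, Matrix.mul_assoc (1 - fc UE θ) (matPow E 0), hsuppB]
    have := TL1 hB (one_sub_fc_conj UE θ) hq zero_le_one
    rw [matPow_one hB] at this
    refine this.trans_eq ?_
    rw [Matrix.mul_assoc, rt_comm, Matrix.mul_assoc, rt_comm, add_comm]

theorem case_im {A : Matrix (m × n) (m × n) ℂ} (hA : A.PosSemidef) {E : Matrix n n ℂ} (hE : E.PosSemidef)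
    {s a b c : ℝ} (hs : s ∈ Set.Ioo (0:ℝ) 1) (hb : 0 < b) (h1 : a * s = c) (h2 : b * (1-s) = c) :
    rt (matPow (ptraceFst A) (1+c) * matPow E (-c)) ≤
      rt (matPow A (1+a) * hat m (matPow E (-a))) ^ s *
        rt (matPow A (1-b) * hat m (matPow (ptraceFst A) b)) ^ (1-s) := by
  have hB := ptr_psd hA
  have hsupp := supp_ptr hA
  have hsch := fun {P : Matrix n n ℂ} (hP : P.PosSemidef) Y => schwarz hA hP Y
  set B := ptraceFst A with hBdef
  obtain ⟨UA, dA, hUA, hdA, hAe, hAp⟩ := psd_diag hA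
  obtain ⟨UB, dB, hUB, hdB, hBe, hBp⟩ := psd_diag hB
  obtain ⟨UE, dE, hUE, hdE, hEe, hEp⟩ := psd_diag hE
  have := slice_holder hs hUA (fun i => pw (dA i) 1) (fun i => pw (dA i) 1) (fun i => pw (dA i) (1+a)) (fun i => pw (dA i) (1-b))
    (fun _ => pw_nonneg _ _) (fun _ => pw_nonneg _ _) (fun _ => pw_nonneg _ _) (fun _ => pw_nonneg _ _)
    (hat_psd (matPow_psd hE (-a))) (hat_psd (matPow_psd hB b)) UE UB 1
    (fun x => pw (dE x) (-c)) (fun x => pw (dE x) (-a)) (fun _ => 1)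
    (fun x => pw (dB x) (1+c)) (fun x => pw (dB x) 1) (fun x => pw (dB x) (1+b))
    (fun _ => pw_nonneg _ _) (fun _ => zero_le_one) (fun _ => pw_nonneg _ _) (fun _ => pw_nonneg _ _)
    (fun _ => pw_interp2 _ _ _ _ hs (by linarith)) (fun _ => pw_interp _ _ _ _ _ hs (by linarith))
    (fun _ => by
      rw [pw_interp _ _ _ 1 _ hs (by ring), pw_interp _ _ _ 1 _ hs (by linarith)]) ?_
  · rw [← hEp, ← hBp, ← hAp, ← hAp] at this
    rw [rt_comm]
    simpa using this
  intro θ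
  set Θ := fc UA θ with hΘ
  have hΘA : A * Θ = Θ * A := by
    rw [← matPow_one hA, hAp, fc_comm hUA]
  have hΘA1 : A * (1 - Θ) = (1 - Θ) * A := by
    rw [← matPow_one hA, hAp, fc_comm1 hUA]
  have hΘ1c : (1 - Θ)ᴴ = 1 - Θ := one_sub_fc_conj _ _
  have hΘc : Θᴴ = Θ := fc_conj _ _
  set W' := ptraceFst (Θ * A) with hW'
  set W := ptraceFst ((1 - Θ) * A) with hW
  have hWW : B - W' = W := by
    rw [hW, hW', hBdef, ← ptr_sub, Matrix.sub_mul, Matrix.one_mul]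
  have hW'c : W'ᴴ = W' := by
    rw [hW', ← ptr_conj, Matrix.conjTranspose_mul, hΘc, hA.1, hΘA]
  have hWc : Wᴴ = W := by
    rw [hW, ← ptr_conj, Matrix.conjTranspose_mul, hΘ1c, hA.1, hΘA1]
  have hW's : matPow B 0 * W' = W' := by
    rw [hW', ← ptr_hat_mul, ← hΘA, ← Matrix.mul_assoc, hsupp]
  have hWs : matPow B 0 * W = W := by
    rw [hW, ← ptr_hat_mul, ← hΘA1, ← Matrix.mul_assoc, hsupp]
  have hW's2 := supp_comm hW'c (matPow_conj hB 0) hW's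
  have hXc : (W' * matPow B (-1))ᴴ = matPow B (-1) * W' := by
    rw [Matrix.conjTranspose_mul, matPow_conj hB, hW'c]
  refine ⟨W' * matPow B (-1), ?_, ?_⟩
  · rw [← hEp, ← hAp, ← hBp, hXc]
    have e1 : matPow E (-a) * (W' * matPow B (-1)) * matPow B 1 * (matPow B (-1) * W') =
        matPow E (-a) * W' * matPow B (-1) * W' := by
      simp only [Matrix.mul_assoc, matPow_mul_assoc hB]
      norm_num
    have := hsch (matPow_psd hE (-a)) Θ
    rw [← hW', hW'c, hΘc] at this
    rw [e1, matPow_one hA]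
    refine this.trans_eq ?_
    exact rt_cyc _ _ _
  · rw [fc_one hUE, ← hBp, ← hAp, Matrix.one_mul, Matrix.conjTranspose_sub, hXc, Matrix.conjTranspose_one]
    have e1 : (1 - W' * matPow B (-1)) * matPow B (1+b) = W * matPow B b := by
      rw [Matrix.sub_mul, Matrix.one_mul, Matrix.mul_assoc, matPow_mul hB, ← matPow_mul hB, matPow_one hB,
        show -1 + (1 + b) = b by ring, ← Matrix.sub_mul, hWW]
    have e2 : matPow B b * (1 - matPow B (-1) * W') = matPow B (b-1) * W := by
      rw [Matrix.mul_sub, Matrix.mul_one, matPow_mul_assoc hB, ← hWW, Matrix.mul_sub]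
      have h01 := matPow_mul hB (b-1) 1
      rw [matPow_one hB, sub_add_cancel] at h01
      rw [h01, sub_eq_add_neg b 1]
    rw [e1, Matrix.mul_assoc, e2, matPow_one hA, rt_comm]
    have t2 := TL2 hB hWc hb hWs
    have t3 := hsch (matPow_psd hB b) (1 - Θ)
    rw [← hW, hWc, hΘ1c] at t3
    refine (t2.trans t3).trans_eq ?_
    exact rt_cyc _ _ _

theorem case_iip {A : Matrix (m × n) (m × n) ℂ} (hA : A.PosSemidef) {E : Matrix n n ℂ} (hE : E.PosSemidef)
    {s a p c : ℝ} (hs : s ∈ Set.Ioo (0:ℝ) 1) (hp : 0 ≤ p) (hp1 : p ≤ 1) (h1 : a * s = c) (h2 : p * (1-s) = c) :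
    rt (matPow (ptraceFst A) (1-c) * matPow E c) ≤
      rt (matPow A (1-a) * hat m (matPow E a)) ^ s *
        rt (matPow A (1+p) * hat m (matPow (ptraceFst A) (-p))) ^ (1-s) := by
  have hB := ptr_psd hA
  have hsupp := supp_pow hA (supp_ptr hA) (1-a)
  set B := ptraceFst A with hBdef
  have hsupp2 := supp_comm (matPow_conj hA _) (by rw [hat_conj, matPow_conj hB]) hsupp
  have hw := walt hs hB (matPow_psd hE a) hp (sub_nonneg.2 hp1)
  set N := matPow B (p/2) * matPow E a * matPow B (p/2) with hN
  have hNp : N.PosSemidef := by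
    have := (matPow_psd hE a).mul_mul_conjTranspose_same (matPow B (p/2))
    rwa [matPow_conj hB] at this
  rw [matPow_matPow hE, h1, show 1 - p + p * s = 1 - c by linarith] at hw
  refine hw.trans ?_
  obtain ⟨UA, dA, hUA, hdA, hAe, hAp⟩ := psd_diag hA
  obtain ⟨UN, dN, hUN, hdN, hNe, hNpw⟩ := psd_diag hNp
  have key := hold2 hs UA (hat m UN) (hat m (matPow B (-(p/2)))) (fun x => pw (dA x) 1) (fun x => pw (dA x) (1-a))
    (fun x => pw (dA x) (1+p)) (fun x => pw (dN x.2) s) (fun x => pw (dN x.2) 1) (fun _ => 1)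
    (fun _ => pw_nonneg _ _) (fun _ => pw_nonneg _ _) (fun _ => pw_nonneg _ _) (fun _ => zero_le_one)
    (fun _ => pw_interp _ _ _ _ _ hs (by linarith)) (fun _ => pw_interp2 _ _ _ _ hs (by ring))
  rw [← hat_fc UN (fun x => pw (dN x) s), ← hat_fc UN (fun x => pw (dN x) 1), ← hNpw, ← hNpw,
    fc_one (hat_unitary hUN), ← hAp, ← hAp, ← hAp, Matrix.mul_one, hat_conj, matPow_conj hB,
    matPow_one hA, matPow_one hNp] at key
  have e1 : rt (A * hat m (matPow B (-(p/2))) * hat m (matPow N s) * hat m (matPow B (-(p/2)))) =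
      rt (matPow B (1-p) * matPow N s) := by
    rw [← rt_ptr, ptr_mul_hat, ptr_mul_hat, ptr_mul_hat, ← hBdef, rt_comm]
    nth_rw 2 [← matPow_one hB]
    simp only [← Matrix.mul_assoc, matPow_mul hB]
    congr 3; ring
  have e2 : matPow A (1-a) * hat m (matPow B (-(p/2))) * hat m N * hat m (matPow B (-(p/2))) =
      matPow A (1-a) * hat m (matPow B 0) * hat m (matPow E a) * hat m (matPow B 0) := by
    simp only [Matrix.mul_assoc, hat_mul, hN, matPow_mul_assoc hB, matPow_mul hB]
    norm_num
  have e3 : matPow A (1+p) * hat m (matPow B (-(p/2))) * hat m (matPow B (-(p/2))) =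
      matPow A (1+p) * hat m (matPow B (-p)) := by
    rw [Matrix.mul_assoc, hat_mul, matPow_mul hB]
    congr 3; ring
  rw [e1, e2, e3, hsupp2, rt_comm _ (hat m (matPow B 0)), ← Matrix.mul_assoc, hsupp] at key
  exact key

theorem case_iim {A : Matrix (m × n) (m × n) ℂ} (hA : A.PosSemidef) {E : Matrix n n ℂ} (hE : E.PosSemidef)
    (hsupp : matPow E 0 * ptraceFst A = ptraceFst A)
    {s a p c : ℝ} (hs : s ∈ Set.Ioo (0:ℝ) 1) (hc : 0 ≤ c) (hc1 : c ≤ 1) (h1 : a * s = p) (h2 : c * (1-s) = p) :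
    rt (matPow A (1+p) * hat m (matPow (ptraceFst A) (-p))) ≤
      rt (matPow A (1+a) * hat m (matPow E (-a))) ^ s *
        rt (matPow (ptraceFst A) (1-c) * matPow E c) ^ (1-s) := by
  have hB := ptr_psd hA
  have hsuppA := supp_pow hA (supp_ptr hA) (1+a)
  set B := ptraceFst A with hBdef
  have hTp := ptr_psd (matPow_psd hA (1+a))
  set T := ptraceFst (matPow A (1+a)) with hT
  have hTs : matPow B 0 * T = T := by rw [hT, ← ptr_hat_mul, hsuppA]
  have hTs2 := supp_comm hTp.1 (matPow_conj hB 0) hTs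
  set G := matPow B (-(1/2)) * T * matPow B (-(1/2)) with hG
  have hGp : G.PosSemidef := by
    have := hTp.mul_mul_conjTranspose_same (matPow B (-(1/2)))
    rwa [matPow_conj hB] at this
  have hw := walt hs hB hGp hc (sub_nonneg.2 hc1)
  rw [show 1 - c + c * s = 1 - p by linarith] at hw
  set N := matPow B (c/2) * G * matPow B (c/2) with hN
  have hNp : N.PosSemidef := by
    have := hGp.mul_mul_conjTranspose_same (matPow B (c/2))
    rwa [matPow_conj hB] at this
  obtain ⟨UA, dA, hUA, hdA, hAe, hAp⟩ := psd_diag hA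
  obtain ⟨UB, dB, hUB, hdB, hBe, hBp⟩ := psd_diag hB
  obtain ⟨UE, dE, hUE, hdE, hEe, hEp⟩ := psd_diag hE
  obtain ⟨UG, dG, hUG, hdG, hGe, hGpw⟩ := psd_diag hGp
  obtain ⟨UN, dN, hUN, hdN, hNe, hNpw⟩ := psd_diag hNp
  -- step 1
  have step1 : rt (matPow B (1-c) * matPow N s) ≤ rt (matPow A (1+a) * hat m (matPow E (-a))) ^ s *
        rt (matPow B (1-c) * matPow E c) ^ (1-s) := by
    have key := hold2 hs UE UN (matPow B ((1-c)/2)) (fun x => pw (dE x) 0) (fun x => pw (dE x) (-a))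
      (fun x => pw (dE x) c) (fun x => pw (dN x) s) (fun x => pw (dN x) 1) (fun _ => 1)
      (fun _ => pw_nonneg _ _) (fun _ => pw_nonneg _ _) (fun _ => pw_nonneg _ _) (fun _ => zero_le_one)
      (fun _ => pw_interp _ _ _ _ _ hs (by linarith)) (fun _ => pw_interp2 _ _ _ _ hs (by ring))
    rw [fc_one hUN, ← hEp, ← hEp, ← hEp, ← hNpw, ← hNpw, matPow_one hNp, matPow_conj hB, Matrix.mul_one] at key
    have e1 : rt (matPow E 0 * matPow B ((1-c)/2) * matPow N s * matPow B ((1-c)/2)) = rt (matPow B (1-c) * matPow N s) := by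
      rw [supp_pow hB hsupp, rt_comm, ← Matrix.mul_assoc, matPow_half hB]
    have e2 : rt (matPow E (-a) * matPow B ((1-c)/2) * N * matPow B ((1-c)/2)) = rt (matPow A (1+a) * hat m (matPow E (-a))) := by
      have : matPow E (-a) * matPow B ((1-c)/2) * N * matPow B ((1-c)/2) = matPow E (-a) * (matPow B 0 * T * matPow B 0) := by
        simp only [hN, hG, Matrix.mul_assoc, matPow_mul_assoc hB, matPow_mul hB]
        congr 3
        · ring
        · congr 2; ring
      rw [this, hTs, hTs2, hT, ← ptr_hat_mul, rt_ptr, rt_comm]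
    have e3 : rt (matPow E c * matPow B ((1-c)/2) * matPow B ((1-c)/2)) = rt (matPow B (1-c) * matPow E c) := by
      rw [Matrix.mul_assoc, matPow_half hB, rt_comm]
    rwa [e1, e2, e3] at key
  refine le_trans ?_ (hw.trans step1)
  -- step 3
  have := slice_eq hs hUG (fun i => pw (dG i) s) (fun i => pw (dG i) 1) (fun _ => 1) (fun _ => pw_nonneg _ _) (fun _ => zero_le_one)
    (matPow_psd hB (1-p)) UA (hat m UB) 1 (fun x => pw (dA x) (1+p)) (fun x => pw (dA x) (1+a)) (fun x => pw (dA x) 1)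
    (fun x => pw (dB x.2) (-p)) (fun x => pw (dB x.2) (-p)) (fun x => pw (dB x.2) (-p))
    (fun _ => pw_nonneg _ _) (fun _ => pw_nonneg _ _) (fun _ => pw_nonneg _ _) (fun _ => pw_nonneg _ _)
    (fun _ => pw_interp _ _ _ _ _ hs (by linarith)) (fun _ => pw_interp _ _ _ _ _ hs (by linarith))
    (fun _ => pw_interp2 _ _ _ _ hs (by ring)) ?_
  · rw [← hGpw, ← hAp, ← hat_fc UB (fun x => pw (dB x) (-p)), ← hBp] at this
    rw [rt_comm (matPow B (1-p))]
    simpa using this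
  intro θ
  set Θ := fc UG θ with hΘ
  have hΘc : Θᴴ = Θ := fc_conj _ _
  have hΘ1c : (1 - Θ)ᴴ = 1 - Θ := one_sub_fc_conj _ _
  set X := matPow B (-(1/2)) * Θ * matPow B (1/2) with hX
  have hXc : Xᴴ = matPow B (1/2) * Θ * matPow B (-(1/2)) := by
    rw [hX]; simp only [Matrix.conjTranspose_mul, matPow_conj hB, hΘc, Matrix.mul_assoc]
  refine ⟨hat m X, le_of_eq ?_, ?_⟩
  · rw [← hGpw, matPow_one hGp, ← hAp, ← hat_fc UB (fun x => pw (dB x) (-p)), ← hBp, hat_conj, ← rt_ptr,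
      ptr_mul_hat, ptr_mul_hat, ptr_mul_hat, ← hT, hXc, hX, hG]
    have e1 : T * (matPow B (-(1/2)) * Θ * matPow B (1/2)) * matPow B (-p) * (matPow B (1/2) * Θ * matPow B (-(1/2))) =
        T * matPow B (-(1/2)) * Θ * matPow B (1-p) * Θ * matPow B (-(1/2)) := by
      simp only [Matrix.mul_assoc, matPow_mul_assoc hB]
      rw [show 1/2 + (-p + 1/2) = 1 - p by ring]
    rw [e1, rt_comm]
    simp only [Matrix.mul_assoc]
  · rw [fc_one hUG, ← hAp, ← hat_fc UB (fun x => pw (dB x) (-p)), ← hBp, ← hat_one, ← hat_sub, hat_conj, ← rt_ptr,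
      ptr_mul_hat, ptr_mul_hat, ptr_mul_hat, matPow_one hA, ← hBdef, Matrix.one_mul]
    have hZ : matPow B (1/2) * (1 - X) * matPow B (-p/2) = matPow B 0 * (1 - Θ) * matPow B ((1-p)/2) := by
      rw [hX, Matrix.mul_sub, Matrix.mul_sub, Matrix.sub_mul, Matrix.sub_mul, Matrix.mul_one, Matrix.mul_one]
      simp only [Matrix.mul_assoc, matPow_mul_assoc hB, matPow_mul hB]
      rw [show 1/2 + -p/2 = (1-p)/2 by ring, add_neg_cancel, zero_add]
    have e1 : rt (B * (1 - X) * matPow B (-p) * (1 - X)ᴴ) = rt ((matPow B (1/2) * (1 - X) * matPow B (-p/2)) *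
        (matPow B (1/2) * (1 - X) * matPow B (-p/2))ᴴ) := by
      rw [Matrix.conjTranspose_mul, Matrix.conjTranspose_mul, matPow_conj hB, matPow_conj hB]
      have : matPow B (1/2) * (1 - X) * matPow B (-p/2) * (matPow B (-p/2) * ((1-X)ᴴ * matPow B (1/2))) =
         matPow B (1/2) * (1 - X) * (matPow B (-p/2) * matPow B (-p/2)) * (1-X)ᴴ * matPow B (1/2) := by
        simp only [Matrix.mul_assoc]
      rw [this, matPow_half hB, rt_comm _ (matPow B (1/2))]
      simp only [← Matrix.mul_assoc]
      rw [matPow_half hB, matPow_one hB]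
    rw [e1, hZ]
    set R := (1 - Θ) * matPow B (1-p) * (1 - Θ) with hR
    have hRp : R.PosSemidef := by
      have := (matPow_psd hB (1-p)).mul_mul_conjTranspose_same (1 - Θ)
      rwa [hΘ1c] at this
    have e2 : rt (matPow B 0 * (1 - Θ) * matPow B ((1-p)/2) * (matPow B 0 * (1 - Θ) * matPow B ((1-p)/2))ᴴ) =
        rt (matPow B 0 * R) := by
      rw [Matrix.conjTranspose_mul, Matrix.conjTranspose_mul, matPow_conj hB, matPow_conj hB, hΘ1c]
      have : matPow B 0 * (1 - Θ) * matPow B ((1-p)/2) * (matPow B ((1-p)/2) * ((1-Θ) * matPow B 0)) =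
         matPow B 0 * ((1 - Θ) * (matPow B ((1-p)/2) * matPow B ((1-p)/2)) * (1-Θ)) * matPow B 0 := by
        simp only [Matrix.mul_assoc]
      rw [this, matPow_half hB, ← hR, rt_comm, matPow_mul_assoc hB, zero_add]
    rw [e2]
    have hQp : (1 - matPow B 0).PosSemidef := by
      rw [hBp, ← fc_one hUB, fc_sub]
      refine fc_psd _ _ fun i => ?_
      unfold pw; split_ifs <;> simp
    have := rt_mul_nonneg hQp hRp
    rw [Matrix.sub_mul, Matrix.one_mul, rt_sub] at this
    linarith

end Petz
namespace Petz
set_option linter.unusedSectionVars false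

variable {n m k : Type*} [Fintype n] [DecidableEq n] [Fintype m] [DecidableEq m]
  [Fintype k] [DecidableEq k]

theorem log_mid {L0 L1 L2 s : ℝ} (h0 : 0 < L0) (h1 : 0 < L1) (h2 : 0 < L2) (h : L0 ≤ L1 ^ s * L2 ^ (1-s)) :
    Real.log L0 ≤ s * Real.log L1 + (1-s) * Real.log L2 := by
  have := Real.log_le_log h0 h
  rwa [Real.log_mul (by positivity) (by positivity), Real.log_rpow h1, Real.log_rpow h2] at this

theorem fin_pos {μ s L0 L1 L2 k1 k2 : ℝ} (h : L0 ≤ s * L1 + (1-s) * L2) (hμ : 0 < μ) (h1 : μ * s = k1)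
    (h2 : μ * (1-s) = k2) : μ * L0 ≤ k1 * L1 + k2 * L2 := by
  have := mul_le_mul_of_nonneg_left h hμ.le
  rw [← h1, ← h2]; linarith

theorem fin_neg {μ s L0 L1 L2 k1 k2 : ℝ} (h : L0 ≤ s * L1 + (1-s) * L2) (hμ : μ < 0) (h1 : μ * s = k1)
    (h2 : μ * (1-s) = k2) : k1 * L1 + k2 * L2 ≤ μ * L0 := by
  have := mul_le_mul_of_nonpos_left h hμ.le
  rw [← h1, ← h2]; linarith

theorem core {A : Matrix (m × n) (m × n) ℂ} (hA : A.PosSemidef) (hA0 : A ≠ 0) (hB0 : ptraceFst A ≠ 0)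
    {E : Matrix n n ℂ} (hE : E.PosSemidef) (hsupp : matPow E 0 * ptraceFst A = ptraceFst A)
    {a b c : ℝ} (ha0 : a ≠ 0) (hb0 : b ≠ 0) (hc0 : c ≠ 0) (hb1 : -1 ≤ b) (hc1 : c ≤ 1)
    (hrel : 1 / a = 1 / b + 1 / c) :
    (a * b * c < 0 → 1 / b * Real.log (rt (matPow A (1-b) * hat m (matPow (ptraceFst A) b))) +
      1 / c * Real.log (rt (matPow (ptraceFst A) (1-c) * matPow E c)) ≤
      1 / a * Real.log (rt (matPow A (1-a) * hat m (matPow E a)))) ∧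
    (0 < a * b * c → 1 / a * Real.log (rt (matPow A (1-a) * hat m (matPow E a))) ≤
      1 / b * Real.log (rt (matPow A (1-b) * hat m (matPow (ptraceFst A) b))) +
      1 / c * Real.log (rt (matPow (ptraceFst A) (1-c) * matPow E c))) := by
  have hB := ptr_psd hA
  have pa : 0 < rt (matPow A (1-a) * hat m (matPow E a)) := by
    rw [← matPow_hat hE]
    exact supp_pos hA (hat_psd hE) (by rw [matPow_hat hE]; exact supp_hat hA hsupp) hA0 _ _
  have pb : 0 < rt (matPow A (1-b) * hat m (matPow (ptraceFst A) b)) := by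
    rw [← matPow_hat hB]
    exact supp_pos hA (hat_psd hB) (by rw [matPow_hat hB]; exact supp_ptr hA) hA0 _ _
  have pc : 0 < rt (matPow (ptraceFst A) (1-c) * matPow E c) := supp_pos hB hE hsupp hB0 _ _
  have hr : b * c = a * c + a * b := by
    field_simp at hrel; linarith
  have C1 : 0 < a / b → 0 < a / c → _ := fun h1 h2 => by
    have e : 1 - a / b = a / c := by field_simp; linarith
    exact log_mid pa pb pc (case1 hA hE (s := a/b) (a := a) (b := b) (c := c)
      ⟨h1, by linarith⟩ (by field_simp) (by rw [e]; field_simp))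
  have Cip : 0 < a → 0 < b → c < 0 → _ := fun h1 h2 h3 => by
    have e : 1 - b / a = - b / c := by field_simp; linarith
    have e' : 0 < - b / c := div_pos_of_neg_of_neg (by linarith) h3
    have := case_ip hA hE hsupp (s := b/a) (a := a) (b := b) (q := -c)
      ⟨by positivity, by linarith⟩ (by linarith) (by field_simp) (by rw [e]; field_simp)
    simp only [neg_neg, ← sub_eq_add_neg] at this
    exact log_mid pb pa pc this
  have Cim : a < 0 → 0 < b → c < 0 → _ := fun h1 h2 h3 => by
    have e : 1 - c / a = - c / b := by field_simp; linarith
    have e' : 0 < - c / b := div_pos (by linarith) h2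
    have := case_im hA hE (s := c/a) (a := -a) (b := b) (c := -c)
      ⟨div_pos_of_neg_of_neg h3 h1, by linarith⟩ h2 (by field_simp) (by rw [e]; field_simp)
    simp only [neg_neg, ← sub_eq_add_neg] at this
    exact log_mid pc pa pb this
  have Ciip : 0 < a → b < 0 → 0 < c → _ := fun h1 h2 h3 => by
    have e : 1 - c / a = - c / b := by field_simp; linarith
    have e' : 0 < - c / b := div_pos_of_neg_of_neg (by linarith) h2
    have := case_iip hA hE (s := c/a) (a := a) (p := -b) (c := c)
      ⟨by positivity, by linarith⟩ (by linarith) (by linarith) (by field_simp) (by rw [e]; field_simp)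
    simp only [neg_neg, ← sub_eq_add_neg] at this
    exact log_mid pc pa pb this
  have Ciim : a < 0 → b < 0 → 0 < c → _ := fun h1 h2 h3 => by
    have e : 1 - b / a = - b / c := by field_simp; linarith
    have e' : 0 < - b / c := div_pos (by linarith) h3
    have := case_iim hA hE hsupp (s := b/a) (a := -a) (p := -b) (c := c)
      ⟨div_pos_of_neg_of_neg h2 h1, by linarith⟩ (by linarith) hc1 (by field_simp) (by rw [e]; field_simp)
    simp only [neg_neg, ← sub_eq_add_neg] at this
    exact log_mid pb pa pc this
  have t1 : 1 / a * (a / b) = 1 / b := by field_simp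
  have t1' : 1 / a * (1 - a / b) = 1 / c := by rw [mul_sub, t1]; linarith
  have t2 : 1 / b * (b / a) = 1 / a := by field_simp
  have t2' : 1 / b * (1 - b / a) = -(1 / c) := by rw [mul_sub, t2]; linarith
  have t3 : 1 / c * (c / a) = 1 / a := by field_simp
  have t3' : 1 / c * (1 - c / a) = -(1 / b) := by rw [mul_sub, t3]; linarith
  constructor
  · intro h
    rcases lt_or_gt_of_ne ha0 with ha | ha <;> rcases lt_or_gt_of_ne hb0 with hb | hb <;>
      rcases lt_or_gt_of_ne hc0 with hc | hc
    · exact fin_neg (C1 (div_pos_of_neg_of_neg ha hb) (div_pos_of_neg_of_neg ha hc)) (one_div_neg.2 ha) t1 t1'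
    · nlinarith [mul_pos_of_neg_of_neg ha hb]
    · nlinarith [mul_neg_of_neg_of_pos ha hb]
    · have := one_div_neg.2 ha
      have := one_div_pos.2 hb
      have := one_div_pos.2 hc
      linarith
    · nlinarith [mul_neg_of_pos_of_neg ha hb]
    · have := fin_pos (Ciip ha hb hc) (one_div_pos.2 hc) t3 t3'
      linarith
    · have := fin_pos (Cip ha hb hc) (one_div_pos.2 hb) t2 t2'
      linarith
    · have := mul_pos (mul_pos ha hb) hc
      linarith
  · intro h
    rcases lt_or_gt_of_ne ha0 with ha | ha <;> rcases lt_or_gt_of_ne hb0 with hb | hb <;>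
      rcases lt_or_gt_of_ne hc0 with hc | hc
    · nlinarith [mul_pos_of_neg_of_neg ha hb]
    · have := fin_neg (Ciim ha hb hc) (one_div_neg.2 hb) t2 t2'
      linarith
    · have := fin_neg (Cim ha hb hc) (one_div_neg.2 hc) t3 t3'
      linarith
    · nlinarith [mul_neg_of_neg_of_pos ha hb]
    · have := one_div_neg.2 hb
      have := one_div_neg.2 hc
      have := one_div_pos.2 ha
      linarith
    · nlinarith [mul_neg_of_pos_of_neg ha hb]
    · nlinarith [mul_pos ha hb]
    · exact fin_pos (C1 (by positivity) (by positivity)) (one_div_pos.2 ha) t1 t1'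

theorem fc_submatrix (e : k ≃ n) (U : Matrix n n ℂ) (d : n → ℝ) :
    (fc U d).submatrix e e = fc (U.submatrix e e) (fun i => d (e i)) := by
  unfold fc
  rw [← Matrix.submatrix_mul_equiv _ _ _ e, ← Matrix.submatrix_mul_equiv _ _ _ e]
  congr 2
  rw [Matrix.submatrix_diagonal_equiv]; rfl

theorem matPow_submatrix (e : k ≃ n) {M : Matrix n n ℂ} (hM : M.PosSemidef) (t : ℝ) :
    matPow (M.submatrix e e) t = (matPow M t).submatrix e e := by
  obtain ⟨U, d, hU, hd, h, hp⟩ := psd_diag hM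
  rw [hp, fc_submatrix]
  refine matPow_fc ?_ _ (by rw [h, fc_submatrix]) t
  rw [Matrix.conjTranspose_submatrix, Matrix.submatrix_mul_equiv, hU, Matrix.submatrix_one_equiv]

theorem rt_submatrix (e : k ≃ n) (M : Matrix n n ℂ) : rt (M.submatrix e e) = rt M := by
  unfold rt
  congr 1
  simp only [Matrix.trace, Matrix.diag, Matrix.submatrix_apply]
  exact Equiv.sum_comp e (fun i => M i i)

end Petz

/-- Petz arrow-down chain rule: for `α, β, γ ∈ (0,1) ∪ (1,2]` with
`1/(1−α) = 1/(1−β) + 1/(1−γ)` and a tripartite state `ρ_ABC`: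
if `(α−1)(β−1)(γ−1) > 0` then
`H̄^↓_α(AB|C)_ρ ≥ H̄^↓_β(A|BC)_ρ + H̄^↓_γ(B|C)_{ρ_BC}`, and the inequality is reversed
if `(α−1)(β−1)(γ−1) < 0`. -/
theorem stmt14 {mA mB mC : Type*}
    [Fintype mA] [DecidableEq mA] [Fintype mB] [DecidableEq mB]
    [Fintype mC] [DecidableEq mC]
    (α β γ : ℝ)
    (hα : 0 < α ∧ α ≠ 1 ∧ α ≤ 2) (hβ : 0 < β ∧ β ≠ 1 ∧ β ≤ 2)
    (hγ : 0 < γ ∧ γ ≠ 1 ∧ γ ≤ 2)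
    (hrel : 1 / (1 - α) = 1 / (1 - β) + 1 / (1 - γ))
    (ρ : Matrix ((mA × mB) × mC) ((mA × mB) × mC) ℂ) (hρ : IsDensity ρ)
    (ρA_BC : Matrix (mA × (mB × mC)) (mA × (mB × mC)) ℂ)
    (hρA_BC : ρA_BC = Matrix.of fun x y =>
      ρ ((x.1, x.2.1), x.2.2) ((y.1, y.2.1), y.2.2))
    (ρBC : Matrix (mB × mC) (mB × mC) ℂ)
    (hρBC : ρBC = Matrix.of fun x y => ∑ a, ρ ((a, x.1), x.2) ((a, y.1), y.2)) :
    ((α - 1) * (β - 1) * (γ - 1) > 0 →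
      HPetzDown α ρ ≥ HPetzDown β ρA_BC + HPetzDown γ ρBC) ∧
    ((α - 1) * (β - 1) * (γ - 1) < 0 →
      HPetzDown α ρ ≤ HPetzDown β ρA_BC + HPetzDown γ ρBC) := by
  obtain ⟨hρp, hρt⟩ := hρ
  set e : mA × (mB × mC) ≃ (mA × mB) × mC := (Equiv.prodAssoc mA mB mC).symm with he
  have hAe : ρA_BC = ρ.submatrix e e := by rw [hρA_BC]; rfl
  have hBe : ρBC = ptraceFst ρA_BC := by rw [hρBC, hρA_BC]; rfl
  have hCe : ptraceFst ρ = ptraceFst ρBC := by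
    rw [hρBC]; ext j j'
    simp only [ptraceFst, Matrix.of_apply, Fintype.sum_prod_type]
    exact Finset.sum_comm
  have hA : ρA_BC.PosSemidef := by rw [hAe]; exact hρp.submatrix e
  have hB : ρBC.PosSemidef := by rw [hBe]; exact Petz.ptr_psd hA
  have hC : (ptraceFst ρBC).PosSemidef := Petz.ptr_psd hB
  have hrt : Petz.rt ρ = 1 := by rw [Petz.rt, hρt]; rfl
  have hrtA : Petz.rt ρA_BC = 1 := by rw [hAe, Petz.rt_submatrix, hrt]
  have hA0 : ρA_BC ≠ 0 := by
    intro h; rw [h] at hrtA; simp [Petz.rt] at hrtA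
  have hB0 : ptraceFst ρA_BC ≠ 0 := by
    intro h
    have := Petz.rt_ptr ρA_BC
    rw [h, hrtA] at this; simp [Petz.rt] at this
  have hsupp : matPow (Petz.hat mB (ptraceFst ρBC)) 0 * ptraceFst ρA_BC = ptraceFst ρA_BC := by
    rw [Petz.matPow_hat hC, ← hBe]; exact Petz.supp_ptr hB
  have ha0 : 1 - α ≠ 0 := sub_ne_zero.2 (Ne.symm hα.2.1)
  have hb0 : 1 - β ≠ 0 := sub_ne_zero.2 (Ne.symm hβ.2.1)
  have hc0 : 1 - γ ≠ 0 := sub_ne_zero.2 (Ne.symm hγ.2.1)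
  have H := Petz.core hA hA0 hB0 (Petz.hat_psd (m := mB) hC) hsupp ha0 hb0 hc0
    (by linarith [hβ.2.2]) (by linarith [hγ.1]) hrel
  simp only [sub_sub_cancel, ← hBe, Petz.matPow_hat hC] at H
  have Ea : HPetzDown α ρ = 1 / (1 - α) * Real.log (Petz.rt (matPow ρA_BC α *
      Petz.hat mA (Petz.hat mB (matPow (ptraceFst ρBC) (1 - α))))) := by
    unfold HPetzDown
    congr 2
    change Petz.rt _ = _
    rw [← Petz.rt_submatrix e, ← Matrix.submatrix_mul_equiv _ _ _ e, ← Petz.matPow_submatrix e hρp, ← hAe, hCe]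
    congr 2
    ext ⟨i, j, l⟩ ⟨i', j', l'⟩
    simp [Petz.hat, Matrix.kroneckerMap_apply, Matrix.one_apply, he]
    split_ifs <;> simp_all
  have Eb : HPetzDown β ρA_BC = 1 / (1 - β) * Real.log (Petz.rt (matPow ρA_BC β *
      Petz.hat mA (matPow ρBC (1 - β)))) := by
    rw [hBe]; rfl
  have Ec : HPetzDown γ ρBC = 1 / (1 - γ) * Real.log (Petz.rt (matPow ρBC γ *
      Petz.hat mB (matPow (ptraceFst ρBC) (1 - γ)))) := rfl
  rw [Ea, Eb, Ec]
  constructor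
  · intro h
    exact H.1 (by nlinarith)
  · intro h
    exact H.2 (by nlinarith)
end
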